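/- Every 2-edge-connected simple graph on n vertices can be covered by at most ⌊3(n−1)/4⌋ cycles. -/

import Mathlib

namespace FC

variable {V : Type*}

/-- edges of the path given by a list of vertices -/
def PE : List V → List (Sym2 V)
  | [] => []
  | [_] => []
  | a :: b :: l => s(a, b) :: PE (b :: l)

/-- edges of the closed walk given by a list of vertices -/
def CE : List V → List (Sym2 V)
  | [] => []
  | a :: l => PE (a :: (l ++ [a]))

def IsCyc (G : SimpleGraph V) (c : List V) : Prop :=
  c.Nodup ∧ 3 ≤ c.length ∧ ∀ e ∈ CE c, e ∈ G.edgeSet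

def cov (L : List (List V)) (e : Sym2 V) : Prop := ∃ c ∈ L, e ∈ CE c

@[simp] lemma PE_nil : PE ([] : List V) = [] := rfl
@[simp] lemma PE_single (a : V) : PE [a] = [] := rfl
@[simp] lemma PE_cons_cons (a b : V) (l : List V) : PE (a :: b :: l) = s(a, b) :: PE (b :: l) := rfl

lemma PE_append (l : List V) (a : V) (m : List V) :
    PE (l ++ a :: m) = PE (l ++ [a]) ++ PE (a :: m) := by
  induction l with
  | nil => simp
  | cons x l ih =>
    cases l with
    | nil => simp
    | cons y l => simpa using ih

lemma PE_reverse (l : List V) : PE l.reverse = (PE l).reverse := by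
  induction l with
  | nil => simp
  | cons x l ih =>
    cases l with
    | nil => simp
    | cons y l =>
      simp only [List.reverse_cons, PE_cons_cons] at ih ⊢
      rw [List.append_assoc, List.singleton_append, PE_append, ih]
      simp [Sym2.eq_swap]

lemma PE_cons' (x : V) (l : List V) (hl : l ≠ []) : PE (x :: l) = s(x, l.head hl) :: PE l := by
  cases l with
  | nil => simp at hl
  | cons y l => simp

lemma PE_concat' (x : V) (l : List V) (hl : l ≠ []) :
    PE (l ++ [x]) = PE l ++ [s(l.getLast hl, x)] := by
  obtain ⟨m, y, rfl⟩ : ∃ m y, l = m ++ [y] := ⟨l.dropLast, l.getLast hl, (List.dropLast_append_getLast hl).symm⟩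
  rw [List.append_assoc, List.singleton_append, PE_append]
  simp

/-- wrapped path -/
lemma PE_wrap (x y : V) (l : List V) (hl : l ≠ []) :
    PE (x :: (l ++ [y])) = s(x, l.head hl) :: (PE l ++ [s(l.getLast hl, y)]) := by
  rw [PE_cons' _ _ (by simp), PE_concat' _ _ hl]
  simp [List.head_append_of_ne_nil, hl]

lemma mem_of_mem_PE {l : List V} {e : Sym2 V} (h : e ∈ PE l) {v : V} (hv : v ∈ e) : v ∈ l := by
  induction l with
  | nil => simp at h
  | cons x l ih =>
    cases l with
    | nil => simp at h
    | cons y l =>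
      simp only [PE_cons_cons, List.mem_cons] at h
      rcases h with rfl | h
      · simp only [Sym2.mem_iff] at hv; rcases hv with rfl | rfl <;> simp
      · exact List.mem_cons_of_mem _ (ih h)

lemma mem_of_mem_CE {l : List V} {e : Sym2 V} (h : e ∈ CE l) {v : V} (hv : v ∈ e) : v ∈ l := by
  cases l with
  | nil => simp [CE] at h
  | cons x l =>
    have := mem_of_mem_PE h hv
    simp at this ⊢; tauto

lemma CE_append (a : V) (l : List V) (b : V) (m : List V) :
    CE (a :: (l ++ b :: m)) = PE (a :: (l ++ [b])) ++ PE (b :: (m ++ [a])) := by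
  have := PE_append (a :: l) b (m ++ [a])
  simpa [CE] using this

lemma CE_rot (l m : List V) (e : Sym2 V) : e ∈ CE (l ++ m) ↔ e ∈ CE (m ++ l) := by
  cases l with
  | nil => simp
  | cons a l =>
    cases m with
    | nil => simp
    | cons b m =>
      simp only [List.cons_append, CE_append, List.mem_append]
      tauto

lemma CE_reverse (l : List V) (e : Sym2 V) : e ∈ CE l.reverse ↔ e ∈ CE l := by
  cases l with
  | nil => simp
  | cons a l =>
    rw [List.reverse_cons, CE_rot]
    simp only [List.singleton_append, CE]
    rw [← List.mem_reverse, ← PE_reverse]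
    simp

lemma IsCyc.mono {G H : SimpleGraph V} (h : G ≤ H) {c : List V} (hc : IsCyc G c) : IsCyc H c :=
  ⟨hc.1, hc.2.1, fun e he => SimpleGraph.edgeSet_mono h (hc.2.2 e he)⟩

lemma IsCyc.congr {G : SimpleGraph V} {c c' : List V} (hc : IsCyc G c) (hp : c.Perm c')
    (h : ∀ e, e ∈ CE c ↔ e ∈ CE c') : IsCyc G c' :=
  ⟨hp.nodup_iff.1 hc.1, hp.length_eq ▸ hc.2.1, fun e he => hc.2.2 e ((h e).2 he)⟩

/-- a list with path edges in G gives a walk -/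
lemma exists_walk (G : SimpleGraph V) : ∀ (l : List V) (a b : V),
    (∀ e ∈ PE (a :: (l ++ [b])), e ∈ G.edgeSet) →
    ∃ w : G.Walk a b, w.support = a :: (l ++ [b]) ∧ w.edges = PE (a :: (l ++ [b])) := by
  intro l
  induction l with
  | nil =>
    intro a b h
    have hab : G.Adj a b := by simpa using h
    exact ⟨SimpleGraph.Walk.cons hab SimpleGraph.Walk.nil, by simp, by simp⟩
  | cons c l ih =>
    intro a b h
    have hab : G.Adj a c := by
      have := h s(a, c) (by simp)
      simpa using this
    obtain ⟨w, h1, h2⟩ := ih c b (fun e he => h e (by simp at he ⊢; tauto))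
    exact ⟨SimpleGraph.Walk.cons hab w, by simp [h1], by simp [h2]⟩

lemma IsCyc.toWalk {G : SimpleGraph V} {c : List V} (hc : IsCyc G c) :
    ∃ (v : V) (w : G.Walk v v), w.IsCycle ∧ ∀ e ∈ CE c, e ∈ w.edges := by
  obtain ⟨h1, h2, h3⟩ := hc
  match c, h1, h2, h3 with
  | a :: b :: l, h1, h2, h3 =>
    have hl : l ≠ [] := by rintro rfl; simp at h2
    have hab : G.Adj a b := by simpa using h3 s(a, b) (by simp [CE])
    obtain ⟨w, hw1, hw2⟩ := exists_walk G l b a (fun e he => h3 e (by simp [CE] at he ⊢; tauto))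
    refine ⟨a, SimpleGraph.Walk.cons hab w, ?_, ?_⟩
    · rw [SimpleGraph.Walk.cons_isCycle_iff]
      refine ⟨?_, ?_⟩
      · rw [SimpleGraph.Walk.isPath_def, hw1]
        have : (b :: (l ++ [a])).Perm (a :: b :: l) := by
          have := List.perm_append_comm (l₁ := b :: l) (l₂ := [a])
          simpa using this
        exact this.nodup_iff.2 h1
      · rw [hw2, PE_wrap _ _ _ hl]
        intro h
        simp only [List.nodup_cons, List.mem_cons, not_or] at h1
        obtain ⟨⟨hne, hal⟩, hbl, hnd⟩ := h1
        simp only [List.mem_cons, List.mem_append, List.not_mem_nil, or_false] at h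
        rcases h with h | h | h
        · have : a = l.head hl := by
            rw [Sym2.eq_iff] at h
            rcases h with ⟨h, -⟩ | ⟨h, -⟩
            · exact absurd h hne
            · exact h
          exact hal (this ▸ List.head_mem hl)
        · exact hal (mem_of_mem_PE h (by simp))
        · have : b = l.getLast hl := by
            rw [Sym2.eq_iff] at h
            rcases h with ⟨-, h⟩ | ⟨-, h⟩
            · exact absurd h.symm hne
            · exact h
          exact hbl (this ▸ List.getLast_mem hl)
    · intro e he
      simpa [CE, hw2] using he

/-- a path avoiding things gives a list -/
lemma PE_support {G : SimpleGraph V} {a b : V} (w : G.Walk a b) : PE w.support = w.edges := by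
  induction w with
  | nil => simp
  | cons h p ih =>
    cases p with
    | nil => simp
    | cons h' p => simpa using ih

end FC


namespace FC

variable {V : Type*}

def NB (G : SimpleGraph V) (u v : V) : Prop := (G.deleteEdges {s(u, v)}).Reachable u v

def BL (G : SimpleGraph V) : Prop := ∀ u v, G.Adj u v → NB G u v

/-- number of non-isolated vertices -/
noncomputable def NN (G : SimpleGraph V) : ℕ := G.support.ncard

def Good (G : SimpleGraph V) : Prop :=
  ∃ L : List (List V), (∀ c ∈ L, IsCyc G c) ∧ (∀ e ∈ G.edgeSet, cov L e) ∧
    4 * L.length ≤ 3 * (NN G - 1)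

/-- restriction of the edges to a set -/
def res (G : SimpleGraph V) (S : Set V) : SimpleGraph V where
  Adj x y := G.Adj x y ∧ x ∈ S ∧ y ∈ S
  symm := ⟨fun _ _ h => ⟨h.1.symm, h.2.2, h.2.1⟩⟩
  loopless := ⟨fun _ h => h.1.ne rfl⟩

lemma res_adj {G : SimpleGraph V} {S : Set V} {x y : V} :
    (res G S).Adj x y ↔ G.Adj x y ∧ x ∈ S ∧ y ∈ S := Iff.rfl

lemma res_le (G : SimpleGraph V) (S : Set V) : res G S ≤ G := fun _ _ h => h.1

/-- simple image of a graph under a map -/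
def img (f : V → V) (G : SimpleGraph V) : SimpleGraph V where
  Adj x y := x ≠ y ∧ ∃ x' y', f x' = x ∧ f y' = y ∧ G.Adj x' y'
  symm := ⟨fun _ _ h => ⟨h.1.symm, by
    obtain ⟨x, y, h1, h2, h3⟩ := h.2; exact ⟨y, x, h2, h1, h3.symm⟩⟩⟩
  loopless := ⟨fun _ h => h.1 rfl⟩

lemma img_adj {G : SimpleGraph V} {f : V → V} {x y : V} :
    (img f G).Adj x y ↔ x ≠ y ∧ ∃ x' y', f x' = x ∧ f y' = y ∧ G.Adj x' y' := Iff.rfl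

lemma NB_map {G G' : SimpleGraph V} (f : V → V) {u v : V} (h : NB G u v)
    (hmap : ∀ x y, G.Adj x y → s(x, y) ≠ s(u, v) →
      f x = f y ∨ (G'.Adj (f x) (f y) ∧ s(f x, f y) ≠ s(f u, f v))) : NB G' (f u) (f v) := by
  unfold NB at *
  generalize hH : G'.deleteEdges {s(f u, f v)} = H
  have key : ∀ x y, (G.deleteEdges {s(u, v)}).Adj x y → H.Reachable (f x) (f y) := by
    intro x y hxy
    subst hH
    rw [SimpleGraph.deleteEdges_adj] at hxy
    rcases hmap x y hxy.1 (by simpa using hxy.2) with h | h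
    · rw [h]
    · exact SimpleGraph.Adj.reachable (by rw [SimpleGraph.deleteEdges_adj]; simpa using h)
  obtain ⟨w⟩ := h
  have : ∀ x y, (G.deleteEdges {s(u, v)}).Walk x y → H.Reachable (f x) (f y) := by
    intro x y w
    induction w with
    | nil => rfl
    | cons h p ih => exact (key _ _ h).trans ih
  exact this _ _ w

lemma NB.symm {G : SimpleGraph V} {u v : V} (h : NB G u v) : NB G v u := by
  unfold NB at *; rw [Sym2.eq_swap]; exact SimpleGraph.Reachable.symm h

lemma NB_tri {G : SimpleGraph V} {u v z : V} (h1 : G.Adj u v) (h2 : G.Adj u z)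
    (h3 : G.Adj v z) : NB G u v := by
  have e1 : (G.deleteEdges {s(u, v)}).Adj u z := by
    rw [SimpleGraph.deleteEdges_adj]; refine ⟨h2, ?_⟩
    have := h1.ne; have := h2.ne; have := h3.ne
    simp [Sym2.eq_iff]; grind
  have e2 : (G.deleteEdges {s(u, v)}).Adj z v := by
    rw [SimpleGraph.deleteEdges_adj]; refine ⟨h3.symm, ?_⟩
    have := h1.ne; have := h2.ne; have := h3.ne
    simp [Sym2.eq_iff]; grind
  exact e1.reachable.trans e2.reachable

lemma BL.exists_other {G : SimpleGraph V} (h : BL G) {a b : V} (hab : G.Adj a b) :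
    ∃ c, c ≠ a ∧ G.Adj b c := by
  obtain ⟨w⟩ := (h a b hab).symm
  cases w with
  | nil => exact absurd rfl hab.ne
  | cons h p =>
    rename_i c
    rw [SimpleGraph.deleteEdges_adj] at h
    refine ⟨c, ?_, h.1⟩
    rintro rfl
    exact h.2 (by simp [Sym2.eq_swap])

/-- delete all bridges -/
def core (G : SimpleGraph V) : SimpleGraph V where
  Adj x y := G.Adj x y ∧ NB G x y
  symm := ⟨fun _ _ h => ⟨h.1.symm, h.2.symm⟩⟩
  loopless := ⟨fun _ h => h.1.ne rfl⟩

lemma core_le (G : SimpleGraph V) : core G ≤ G := fun _ _ h => h.1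

lemma core_BL (G : SimpleGraph V) : BL (core G) := by
  intro u v huv
  obtain ⟨h1, h2⟩ := huv
  obtain ⟨x, p, hp, hm⟩ := SimpleGraph.adj_and_reachable_delete_edges_iff_exists_cycle.1 ⟨h1, h2⟩
  have hall : ∀ e ∈ p.edges, e ∈ (core G).edgeSet := by
    intro e he
    induction e with
    | h y z =>
      have := SimpleGraph.adj_and_reachable_delete_edges_iff_exists_cycle.2 ⟨x, p, hp, he⟩
      exact this
  exact (SimpleGraph.adj_and_reachable_delete_edges_iff_exists_cycle.2
    ⟨x, p.transfer _ hall, hp.transfer hall, by simpa using hm⟩).2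

lemma mem_supp {G : SimpleGraph V} {x y : V} (h : G.Adj x y) : x ∈ G.support := ⟨y, h⟩

lemma cov_append {L M : List (List V)} {e : Sym2 V} : cov (L ++ M) e ↔ cov L e ∨ cov M e := by
  simp only [cov, List.mem_append]; grind

lemma cov_cons {c : List V} {M : List (List V)} {e : Sym2 V} :
    cov (c :: M) e ↔ e ∈ CE c ∨ cov M e := by
  simp only [cov, List.mem_cons]; grind

lemma NN_lt [Finite V] {G H : SimpleGraph V} (hle : H ≤ G) {x y : V} (h : G.Adj x y)
    (hx : ∀ z, ¬ H.Adj x z) : NN H < NN G := by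
  apply Set.ncard_lt_ncard _ (Set.toFinite _)
  refine ⟨fun v ⟨w, hw⟩ => ⟨w, hle hw⟩, fun hss => ?_⟩
  obtain ⟨z, hz⟩ := hss (mem_supp h)
  exact hx z hz

lemma two_le_NN [Finite V] {G : SimpleGraph V} {x y : V} (h : G.Adj x y) : 2 ≤ NN G := by
  have : ({x, y} : Set V) ⊆ G.support := by
    intro z hz
    rcases hz with rfl | rfl
    · exact mem_supp h
    · exact mem_supp h.symm
  have := Set.ncard_le_ncard this (Set.toFinite _)
  rwa [Set.ncard_pair h.ne] at this

lemma res_BL {G : SimpleGraph V} (hG : BL G) (S : Set V) (v : V)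
    (h : ∀ x y, G.Adj x y → x ∉ S → y ∈ S → y = v) : BL (res G S) := by
  classical
  intro u w huw
  let f : V → V := fun x => if x ∈ S then x else v
  have hu : f u = u := by simp [f, huw.2.1]
  have hw : f w = w := by simp [f, huw.2.2]
  have := NB_map (G' := res G S) f (hG u w huw.1) (by
    intro x y hxy hne
    by_cases hx : x ∈ S
    · by_cases hy : y ∈ S
      · right
        simp only [f, hx, hy, huw.2.1, huw.2.2, if_true]
        exact ⟨⟨hxy, hx, hy⟩, hne⟩
      · left; simp [f, hx, hy, h y x hxy.symm hy hx]
    · by_cases hy : y ∈ S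
      · left; simp [f, hx, hy, h x y hxy hx hy]
      · left; simp [f, hx, hy])
  rwa [hu, hw] at this

/-- splitting at a vertex -/
lemma split [Finite V] {G : SimpleGraph V} (hG : BL G) (IH : ∀ H : SimpleGraph V, BL H → NN H < NN G → Good H)
    (S : Set V) (v : V) (hv : v ∉ S) (hS : ∀ x y, G.Adj x y → x ∈ S → y ∈ S ∨ y = v)
    (h1 : ∃ x y, G.Adj x y ∧ x ∈ S) (h2 : ∃ x y, G.Adj x y ∧ x ∉ S ∧ y ∉ S) : Good G := by
  obtain ⟨x1, y1, a1, m1⟩ := h1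
  obtain ⟨x2, y2, a2, m2, m2'⟩ := h2
  have B1 : BL (res G (insert v S)) := by
    apply res_BL hG _ v
    intro x y hxy hx hy
    rcases hy with hy | hy
    · exact hy
    · rcases hS y x hxy.symm hy with h | h
      · exact absurd (Or.inr h) hx
      · exact absurd (Or.inl h) hx
  have B2 : BL (res G Sᶜ) := by
    apply res_BL hG _ v
    intro x y hxy hx hy
    rcases hS x y hxy (not_not.1 hx) with h | h
    · exact absurd h hy
    · exact h
  have N1 : NN (res G (insert v S)) < NN G := by
    by_cases hx : x2 = v
    · apply NN_lt (res_le _ _) a2.symm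
      rintro z ⟨-, (h | h), -⟩
      · exact a2.ne (hx.trans h.symm)
      · exact m2' h
    · apply NN_lt (res_le _ _) a2
      rintro z ⟨-, (h | h), -⟩
      · exact hx h
      · exact m2 h
  have N2 : NN (res G Sᶜ) < NN G := by
    apply NN_lt (res_le _ _) a1
    rintro z ⟨-, h, -⟩
    exact h m1
  have e1 : (res G (insert v S)).Adj x1 y1 := by
    refine ⟨a1, Or.inr m1, ?_⟩
    rcases hS _ _ a1 m1 with h | h
    · exact Or.inr h
    · exact Or.inl h
  have e2 : (res G Sᶜ).Adj x2 y2 := ⟨a2, m2, m2'⟩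
  have n1 := two_le_NN e1
  have n2 := two_le_NN e2
  have hsum : NN (res G (insert v S)) + NN (res G Sᶜ) ≤ NN G + 1 := by
    unfold NN
    rw [← Set.ncard_union_add_ncard_inter _ _ (Set.toFinite _) (Set.toFinite _)]
    apply Nat.add_le_add
    · apply Set.ncard_le_ncard _ (Set.toFinite _)
      rintro z (⟨w, hw⟩ | ⟨w, hw⟩)
      · exact ⟨w, hw.1⟩
      · exact ⟨w, hw.1⟩
    · rw [← Set.ncard_singleton v]
      apply Set.ncard_le_ncard _ (Set.toFinite _)
      rintro z ⟨⟨w, hw⟩, ⟨w', hw'⟩⟩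
      rcases hw.2.1 with h | h
      · exact h
      · exact absurd h hw'.2.1
  obtain ⟨L1, c1, v1, l1⟩ := IH _ B1 N1
  obtain ⟨L2, c2, v2, l2⟩ := IH _ B2 N2
  refine ⟨L1 ++ L2, ?_, ?_, ?_⟩
  · intro c hc
    rcases List.mem_append.1 hc with h | h
    · exact (c1 c h).mono (res_le _ _)
    · exact (c2 c h).mono (res_le _ _)
  · intro e he
    rw [cov_append]
    induction e with
    | h x y =>
      have hxy : G.Adj x y := he
      by_cases hx : x ∈ S
      · left; apply v1
        refine ⟨hxy, Or.inr hx, ?_⟩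
        rcases hS _ _ hxy hx with h | h
        · exact Or.inr h
        · exact Or.inl h
      · by_cases hy : y ∈ S
        · left; apply v1
          refine ⟨hxy, ?_, Or.inr hy⟩
          rcases hS _ _ hxy.symm hy with h | h
          · exact Or.inr h
          · exact Or.inl h
        · right; exact v2 _ ⟨hxy, hx, hy⟩
  · simp only [List.length_append]; omega

end FC


namespace FC

variable {V : Type*}

/-- normal forms of cycles with respect to two vertices `a`, `b` -/
inductive NF (V : Type*)
  | av (c : List V)
  | sg (t : Bool) (L : List V)
  | mx (L : List V)
  | db (L M : List V)

def vx (a b : V) (t : Bool) : V := if t then a else b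

def rv (s : Bool) (L : List V) : List V := if s then L.reverse else L

namespace NF

def toL (a b : V) (s : Bool → Bool) : NF V → List V
  | av c => c
  | sg t L => if s false = s true then vx a b (xor t (s false)) :: L
      else vx a b (xor t (s true)) :: vx a b (xor t (s false)) :: L
  | mx L => a :: b :: rv (s false) L
  | db L M => a :: (rv (s false) L ++ b :: rv (s true) M)

def Att : NF V → Bool → Bool → V → Prop
  | av _, _, _, _ => False
  | sg t L, i, t', x => t' = t ∧ ((i = false ∧ L.head? = some x) ∨ (i = true ∧ L.getLast? = some x))
  | mx L, i, t', x => i = false ∧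
      ((t' = false ∧ L.head? = some x) ∨ (t' = true ∧ L.getLast? = some x))
  | db L M, i, t', x =>
      (i = false ∧ ((t' = true ∧ L.head? = some x) ∨ (t' = false ∧ L.getLast? = some x))) ∨
      (i = true ∧ ((t' = false ∧ M.head? = some x) ∨ (t' = true ∧ M.getLast? = some x)))

def inner : NF V → List (Sym2 V)
  | av c => CE c
  | sg _ L => PE L
  | mx L => PE L
  | db L M => PE L ++ PE M

def hasab (s : Bool → Bool) : NF V → Prop
  | av _ => False
  | sg _ _ => s false ≠ s true
  | mx _ => True
  | db _ _ => False

def Valid (a b : V) : NF V → Prop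
  | av c => c.Nodup ∧ 3 ≤ c.length ∧ a ∉ c ∧ b ∉ c
  | sg _ L => L.Nodup ∧ 2 ≤ L.length ∧ a ∉ L ∧ b ∉ L
  | mx L => L.Nodup ∧ L ≠ [] ∧ a ∉ L ∧ b ∉ L
  | db L M => (L ++ M).Nodup ∧ L ≠ [] ∧ M ≠ [] ∧ a ∉ L ∧ b ∉ L ∧ a ∉ M ∧ b ∉ M

lemma Att_unique {n : NF V} {i t : Bool} {x y : V} (h : n.Att i t x) (h' : n.Att i t y) : x = y := by
  cases n <;> cases i <;> cases t <;> simp_all [Att]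

end NF

lemma rv_ne {s : Bool} {L : List V} (h : L ≠ []) : rv s L ≠ [] := by
  cases s <;> simp [rv, h]

lemma mem_rv {s : Bool} {L : List V} {x : V} : x ∈ rv s L ↔ x ∈ L := by
  cases s <;> simp [rv]

lemma nodup_rv {s : Bool} {L : List V} : (rv s L).Nodup ↔ L.Nodup := by
  cases s <;> simp [rv]

lemma length_rv {s : Bool} {L : List V} : (rv s L).length = L.length := by
  cases s <;> simp [rv]

lemma mem_wrap {x y : V} {L : List V} (hL : L ≠ []) {e : Sym2 V} :
    e ∈ PE (x :: (L ++ [y])) ↔ e ∈ PE L ∨ (∃ h, L.head? = some h ∧ e = s(x, h)) ∨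
      (∃ h, L.getLast? = some h ∧ e = s(y, h)) := by
  rw [PE_wrap _ _ _ hL]
  simp only [List.mem_cons, List.mem_append, List.not_mem_nil, or_false,
    List.head?_eq_some_head hL, List.getLast?_eq_some_getLast hL, Option.some.injEq,
    exists_eq_left', Sym2.eq_swap (a := y)]
  tauto

lemma mem_wrap_rv {x y : V} {L : List V} (hL : L ≠ []) (s : Bool) {e : Sym2 V} :
    e ∈ PE (x :: (rv s L ++ [y])) ↔ e ∈ PE L ∨
      (∃ h, L.head? = some h ∧ e = s(if s then y else x, h)) ∨
      (∃ h, L.getLast? = some h ∧ e = s(if s then x else y, h)) := by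
  rw [mem_wrap (rv_ne hL)]
  cases s
  · simp [rv]
  · simp [rv, PE_reverse, or_comm]

def HD (L : List V) (x : V) (e : Sym2 V) : Prop := ∃ h, L.head? = some h ∧ e = s(x, h)
def LD (L : List V) (x : V) (e : Sym2 V) : Prop := ∃ h, L.getLast? = some h ∧ e = s(x, h)

namespace NF

lemma mem_toL {a b : V} {n : NF V} (hn : n.Valid a b) (s : Bool → Bool) (e : Sym2 V) :
    e ∈ CE (n.toL a b s) ↔ e ∈ n.inner ∨
      (∃ i t x, n.Att i t x ∧ e = s(vx a b (xor t (s i)), x)) ∨ (e = s(a, b) ∧ n.hasab s) := by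
  cases n with
  | av c => simp [toL, inner, Att, hasab]
  | sg t L =>
    have hL : L ≠ [] := by
      rintro rfl
      simp [Valid] at hn
    simp only [toL, inner, hasab, Att]
    split_ifs with h
    · rw [CE, mem_wrap hL]
      simp [h]
    · simp only [CE, List.cons_append, PE_cons_cons, List.mem_cons]
      rw [mem_wrap hL]
      have : s(vx a b (t ^^ s true), vx a b (t ^^ s false)) = s(a, b) := by
        revert h
        cases t <;> cases s true <;> cases s false <;> simp [vx]
      rw [this]
      simp [h, or_comm, or_left_comm]
  | mx L =>
    simp only [toL, inner, hasab, Att, CE, List.cons_append, PE_cons_cons, List.mem_cons]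
    rw [mem_wrap_rv hn.2.1]
    rcases hs : s false <;> simp [vx, hs, or_comm, or_left_comm, or_assoc]
  | db L M =>
    simp only [toL, inner, hasab, Att, CE_append, List.mem_append]
    rw [mem_wrap_rv hn.2.1, mem_wrap_rv hn.2.2.1]
    rcases hs : s false <;> rcases ht : s true <;>
      simp [vx, hs, ht] <;> simp only [← HD.eq_1, ← LD.eq_1] <;> tauto

lemma toL_nodup {a b : V} (hab : a ≠ b) {n : NF V} (hn : n.Valid a b) (s : Bool → Bool) :
    (n.toL a b s).Nodup ∧ 3 ≤ (n.toL a b s).length := by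
  cases n with
  | av c => exact ⟨hn.1, hn.2.1⟩
  | sg t L =>
    obtain ⟨h1, h2, h3, h4⟩ := hn
    simp only [toL]
    cases t <;> cases s true <;> cases s false <;> simp [vx, h1, h2, h3, h4, hab, hab.symm] <;> omega
  | mx L =>
    obtain ⟨h1, h2, h3, h4⟩ := hn
    have := List.length_pos_iff.2 h2
    simp [toL, mem_rv, nodup_rv, length_rv, h1, h3, h4, hab]
    omega
  | db L M =>
    obtain ⟨h1, h2, h3, h4, h5, h6, h7⟩ := hn
    have := List.length_pos_iff.2 h2
    have := List.length_pos_iff.2 h3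
    simp only [toL, List.nodup_cons, List.mem_append, mem_rv, List.mem_cons, List.length_cons,
      List.length_append, length_rv]
    rw [List.nodup_append] at h1 ⊢
    simp [mem_rv, nodup_rv]
    refine ⟨?_, ?_⟩
    · grind
    · omega

end NF

lemma exists_nf_a {a b : V} {l : List V} (hnd : (a :: l).Nodup)
    (hlen : 3 ≤ (a :: l).length) (hab : a ≠ b) :
    ∃ n : NF V, n.Valid a b ∧ ∀ e, e ∈ CE (a :: l) ↔ e ∈ CE (n.toL a b fun _ => false) := by
  by_cases hb : b ∈ l
  · obtain ⟨L, M, rfl⟩ := List.append_of_mem hb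
    rcases eq_or_ne L [] with rfl | hL
    · refine ⟨NF.mx M, ?_, ?_⟩
      · simp only [List.nil_append, List.nodup_cons, List.length_cons, List.mem_cons] at hnd hlen
        refine ⟨hnd.2.2, ?_, by tauto, by tauto⟩
        rintro rfl; simp at hlen
      · intro e; simp [NF.toL, rv]
    · rcases eq_or_ne M [] with rfl | hM
      · refine ⟨NF.mx L.reverse, ?_, ?_⟩
        · simp only [List.nodup_cons, List.nodup_append, List.mem_append, List.mem_cons] at hnd
          refine ⟨by simpa using hnd.2.1, by simpa using hL, by simp; tauto, ?_⟩
          simp; intro h; exact hnd.2.2.2 b h b (by simp) rfl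
        · intro e
          have h1 := CE_rot [a] (L ++ [b]) e
          have h2 := CE_rot [a] (b :: L.reverse) e
          have h3 := CE_reverse (L ++ [b] ++ [a]) e
          simp only [List.reverse_append, List.reverse_cons, List.reverse_nil, List.nil_append,
            List.append_assoc, List.singleton_append, List.cons_append] at h1 h2 h3
          simp only [NF.toL, rv]
          rw [h1, ← h3]
          simp
      · refine ⟨NF.db L M, ?_, ?_⟩
        · simp only [List.nodup_cons, List.nodup_append, List.mem_append, List.mem_cons] at hnd
          refine ⟨?_, hL, hM, ?_, ?_, ?_, ?_⟩ <;> grind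
        · intro e; simp [NF.toL, rv]
  · refine ⟨NF.sg true l, ⟨?_, ?_, ?_, hb⟩, ?_⟩
    · simp at hnd; exact hnd.2
    · simp at hlen; omega
    · simp at hnd; exact hnd.1
    · intro e; simp [NF.toL, vx]

lemma exists_nf {a b : V} {c : List V} (hnd : c.Nodup) (hlen : 3 ≤ c.length) (hab : a ≠ b) :
    ∃ n : NF V, n.Valid a b ∧ ∀ e, e ∈ CE c ↔ e ∈ CE (n.toL a b fun _ => false) := by
  by_cases ha : a ∈ c
  · obtain ⟨L, M, rfl⟩ := List.append_of_mem ha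
    have hp : (a :: (M ++ L)).Perm (L ++ a :: M) := by
      have := List.perm_append_comm (l₁ := a :: M) (l₂ := L)
      simpa using this
    obtain ⟨n, h1, h2⟩ := exists_nf_a (hp.nodup_iff.2 hnd) (hp.length_eq ▸ hlen) hab
    refine ⟨n, h1, fun e => ?_⟩
    rw [CE_rot, ← h2]; simp
  · by_cases hb : b ∈ c
    · obtain ⟨L, M, rfl⟩ := List.append_of_mem hb
      have hp : (b :: (M ++ L)).Perm (L ++ b :: M) := by
        have := List.perm_append_comm (l₁ := b :: M) (l₂ := L)
        simpa using this
      have hnd' := hp.nodup_iff.2 hnd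
      have hlen' : 3 ≤ (b :: (M ++ L)).length := hp.length_eq ▸ hlen
      have ha' : a ∉ b :: (M ++ L) := fun h => ha (hp.mem_iff.1 h)
      refine ⟨NF.sg false (M ++ L), ⟨?_, ?_, ?_, ?_⟩, ?_⟩
      · exact (List.nodup_cons.1 hnd').2
      · simp at hlen' ⊢; omega
      · simp at ha' ⊢; tauto
      · exact (List.nodup_cons.1 hnd').1
      · intro e; rw [CE_rot]; simp [NF.toL, vx]
    · exact ⟨NF.av c, ⟨hnd, hlen, ha, hb⟩, fun e => by simp [NF.toL]⟩

lemma NF.Att_ne {a b : V} {n : NF V} (hn : n.Valid a b) {i t : Bool} {x : V} (h : n.Att i t x) :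
    x ≠ a ∧ x ≠ b := by
  cases n with
  | av c => exact h.elim
  | sg t' L =>
    have : x ∈ L := by
      rcases h.2 with h | h
      · exact List.mem_of_head? h.2
      · exact List.mem_of_getLast? h.2
    have h3 := hn.2.2.1; have h4 := hn.2.2.2
    grind
  | mx L =>
    have : x ∈ L := by
      rcases h.2 with h | h
      · exact List.mem_of_head? h.2
      · exact List.mem_of_getLast? h.2
    have h3 := hn.2.2.1; have h4 := hn.2.2.2
    grind
  | db L M =>
    obtain ⟨h1, h2, h3, h4, h5, h6, h7⟩ := hn
    have : x ∈ L ∨ x ∈ M := by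
      rcases h with h | h
      · left
        rcases h.2 with h | h
        · exact List.mem_of_head? h.2
        · exact List.mem_of_getLast? h.2
      · right
        rcases h.2 with h | h
        · exact List.mem_of_head? h.2
        · exact List.mem_of_getLast? h.2
    grind

lemma NF.inner_avoid {a b : V} {n : NF V} (hn : n.Valid a b) {e : Sym2 V} (h : e ∈ n.inner) :
    a ∉ e ∧ b ∉ e := by
  cases n with
  | av c => exact ⟨fun h' => hn.2.2.1 (mem_of_mem_CE h h'), fun h' => hn.2.2.2 (mem_of_mem_CE h h')⟩
  | sg t' L => exact ⟨fun h' => hn.2.2.1 (mem_of_mem_PE h h'), fun h' => hn.2.2.2 (mem_of_mem_PE h h')⟩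
  | mx L => exact ⟨fun h' => hn.2.2.1 (mem_of_mem_PE h h'), fun h' => hn.2.2.2 (mem_of_mem_PE h h')⟩
  | db L M =>
    obtain ⟨h1, h2, h3, h4, h5, h6, h7⟩ := hn
    rcases List.mem_append.1 h with h | h
    · exact ⟨fun h' => h4 (mem_of_mem_PE h h'), fun h' => h5 (mem_of_mem_PE h h')⟩
    · exact ⟨fun h' => h6 (mem_of_mem_PE h h'), fun h' => h7 (mem_of_mem_PE h h')⟩

/-- closure used for flipping -/
inductive Cl {ι : Type*} (Zc : V → Prop) (ta tb : V → ι) (B : ι → Prop) : ι → Prop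
  | base (t : ι) : B t → Cl Zc ta tb B t
  | step (z : V) : Zc z → Cl Zc ta tb B (ta z) → Cl Zc ta tb B (tb z)

end FC


namespace FC

variable {V : Type*}

theorem pullback {G G' : SimpleGraph V} {a b : V} (hab : G.Adj a b)
    (h0 : ∀ x y, G'.Adj x y → x ≠ a → x ≠ b → y ≠ a → y ≠ b → G.Adj x y)
    (ha : ∀ x, x ≠ b → G'.Adj a x → G.Adj a x ∧ G.Adj b x)
    (hb : ∀ x, x ≠ a → G'.Adj b x → G.Adj a x ∨ G.Adj b x)
    (L : List (List V)) (hL : ∀ c ∈ L, IsCyc G' c) :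
    ∃ L' : List (List V), L'.length = L.length ∧ (∀ c ∈ L', IsCyc G c) ∧
      (∀ e, cov L e → a ∉ e → b ∉ e → cov L' e) ∧
      (cov L s(a, b) → cov L' s(a, b)) ∧
      (∀ x, x ≠ b → G.Adj a x → ¬ G.Adj b x → cov L s(b, x) → cov L' s(a, x)) ∧
      (∀ x, x ≠ a → G.Adj b x → ¬ G.Adj a x → cov L s(b, x) → cov L' s(b, x)) ∧
      (∀ z, G.Adj a z → G.Adj b z → cov L s(a, z) → cov L s(b, z) →
        cov L' s(a, z) ∧ cov L' s(b, z)) := by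
  classical
  have hne : a ≠ b := hab.ne
  have hnf : ∀ c : List V, ∃ n : NF V, c ∈ L → n.Valid a b ∧
      ∀ e, e ∈ CE c ↔ e ∈ CE (n.toL a b fun _ => false) := by
    intro c
    by_cases hc : c ∈ L
    · obtain ⟨n, h1, h2⟩ := exists_nf (hL c hc).1 (hL c hc).2.1 hne
      exact ⟨n, fun _ => ⟨h1, h2⟩⟩
    · exact ⟨NF.av [], fun h => absurd h hc⟩
  choose nf hnf using hnf
  have hval : ∀ c ∈ L, (nf c).Valid a b := fun c hc => (hnf c hc).1
  -- membership of edges in the original cycles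
  have hmem : ∀ c ∈ L, ∀ e, e ∈ CE c ↔ e ∈ (nf c).inner ∨
      (∃ i t x, (nf c).Att i t x ∧ e = s(vx a b t, x)) ∨
      (e = s(a, b) ∧ (nf c).hasab fun _ => false) := by
    intro c hc e
    rw [(hnf c hc).2, NF.mem_toL (hval c hc)]
    simp
  have hatt : ∀ c ∈ L, ∀ i t x, (nf c).Att i t x → G'.Adj (vx a b t) x := by
    intro c hc i t x h
    exact (hL c hc).2.2 _ ((hmem c hc _).2 (Or.inr (Or.inl ⟨i, t, x, h, rfl⟩)))
  let A : V → (List V × Bool) → Prop := fun z t => t.1 ∈ L ∧ (nf t.1).Att t.2 true z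
  let B : V → (List V × Bool) → Prop := fun z t => t.1 ∈ L ∧ (nf t.1).Att t.2 false z
  let Zc : V → Prop := fun z => (G.Adj a z ∧ G.Adj b z) ∧ (∃ t, A z t) ∧ (∃ t, B z t)
  have hchoose : ∀ z, ∃ p : (List V × Bool) × (List V × Bool), Zc z → A z p.1 ∧ B z p.2 := by
    intro z
    by_cases hz : Zc z
    · obtain ⟨t, ht⟩ := hz.2.1
      obtain ⟨u, hu⟩ := hz.2.2
      exact ⟨(t, u), fun _ => ⟨ht, hu⟩⟩
    · exact ⟨(([], true), ([], true)), fun h => absurd h hz⟩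
  choose p hp using hchoose
  let S : (List V × Bool) → Prop := Cl Zc (fun z => (p z).1) (fun z => (p z).2)
    (fun t => ∃ x, B x t ∧ G.Adj a x ∧ ¬ G.Adj b x)
  have hS1 : ∀ t x, B x t → G.Adj a x → ¬ G.Adj b x → S t := fun t x h1 h2 h3 =>
    Cl.base t ⟨x, h1, h2, h3⟩
  have hBu : ∀ t x y, B x t → B y t → x = y := fun t x y h h' => NF.Att_unique h.2 h'.2
  have hAu : ∀ t x y, A x t → A y t → x = y := fun t x y h h' => NF.Att_unique h.2 h'.2
  have hS2 : ∀ t x, S t → B x t → G.Adj a x := by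
    intro t x h hx
    cases h with
    | base _ h =>
      obtain ⟨y, h1, h2, h3⟩ := h
      rw [hBu _ _ _ hx h1]; exact h2
    | step z hz h => rw [hBu _ _ _ hx (hp z hz).2]; exact hz.1.1
  have hS3 : ∀ z, Zc z → (S (p z).1 ↔ S (p z).2) := by
    intro z hz
    refine ⟨fun h => Cl.step z hz h, fun h => ?_⟩
    generalize ht : (p z).2 = t at h
    have hB := (hp z hz).2
    rw [ht] at hB
    cases h with
    | base _ h =>
      obtain ⟨y, h1, h2, h3⟩ := h
      exact absurd (hBu _ _ _ h1 hB ▸ hz.1.2) h3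
    | step z' hz' h =>
      have := hBu _ _ _ (hp z' hz').2 hB
      rwa [← this]
  let s : List V → Bool → Bool := fun c i => decide (S (c, i))
  let F : List V → List V := fun c => (nf c).toL a b (s c)
  have hFmem : ∀ c ∈ L, ∀ e, e ∈ CE (F c) ↔ e ∈ (nf c).inner ∨
      (∃ i t x, (nf c).Att i t x ∧ e = s(vx a b (xor t (s c i)), x)) ∨
      (e = s(a, b) ∧ (nf c).hasab (s c)) := by
    intro c hc e
    exact NF.mem_toL (hval c hc) _ _
  have hcov : ∀ c ∈ L, ∀ e ∈ CE (F c), cov (L.map F) e := fun c hc e he =>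
    ⟨F c, List.mem_map_of_mem hc, he⟩
  -- all attachments stay adjacent
  have hadj : ∀ c ∈ L, ∀ i t x, (nf c).Att i t x → G.Adj (vx a b (xor t (s c i))) x := by
    intro c hc i t x h
    have hx := NF.Att_ne (hval c hc) h
    have hadj' := hatt c hc i t x h
    cases t with
    | true =>
      have := ha x hx.2 hadj'
      cases s c i
      · exact this.1
      · exact this.2
    | false =>
      by_cases hs : S (c, i)
      · have : s c i = true := by simp [s, hs]
        rw [this]
        exact hS2 _ x hs ⟨hc, h⟩
      · have : s c i = false := by simp [s, hs]
        rw [this]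
        change G.Adj b x
        by_contra hbx
        have := (hb x hx.1 hadj').resolve_right hbx
        exact hs (hS1 _ x ⟨hc, h⟩ this hbx)
  -- extraction of attachments
  have hexA : ∀ z, z ≠ b → cov L s(a, z) → ∃ t, A z t := by
    rintro z hz ⟨c, hc, he⟩
    rcases (hmem c hc _).1 he with h | ⟨i, t, x, h, he⟩ | ⟨h, -⟩
    · exact absurd (by simp) (NF.inner_avoid (hval c hc) h).1
    · have hx := NF.Att_ne (hval c hc) h
      cases t with
      | true =>
        have : z = x := by
          simp only [vx, Sym2.eq_iff] at he; grind
        exact ⟨(c, i), hc, this ▸ h⟩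
      | false =>
        exfalso
        simp only [vx, Sym2.eq_iff] at he; grind
    · exfalso
      simp only [Sym2.eq_iff] at h; grind
  have hexB : ∀ z, z ≠ a → cov L s(b, z) → ∃ t, B z t := by
    rintro z hz ⟨c, hc, he⟩
    rcases (hmem c hc _).1 he with h | ⟨i, t, x, h, he⟩ | ⟨h, -⟩
    · exact absurd (by simp) (NF.inner_avoid (hval c hc) h).2
    · have hx := NF.Att_ne (hval c hc) h
      cases t with
      | false =>
        have : z = x := by
          simp only [vx, Sym2.eq_iff] at he; grind
        exact ⟨(c, i), hc, this ▸ h⟩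
      | true =>
        exfalso
        simp only [vx, Sym2.eq_iff] at he; grind
    · exfalso
      simp only [Sym2.eq_iff] at h; grind
  have hnewA : ∀ t z, A z t → cov (L.map F) s(vx a b (xor true (s t.1 t.2)), z) := by
    rintro ⟨c, i⟩ z ⟨hc, h⟩
    exact hcov c hc _ ((hFmem c hc _).2 (Or.inr (Or.inl ⟨i, _, z, h, rfl⟩)))
  have hnewB : ∀ t z, B z t → cov (L.map F) s(vx a b (xor false (s t.1 t.2)), z) := by
    rintro ⟨c, i⟩ z ⟨hc, h⟩
    exact hcov c hc _ ((hFmem c hc _).2 (Or.inr (Or.inl ⟨i, _, z, h, rfl⟩)))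
  refine ⟨L.map F, by simp, ?_, ?_, ?_, ?_, ?_, ?_⟩
  · intro c' hc'
    obtain ⟨c, hc, rfl⟩ := List.mem_map.1 hc'
    obtain ⟨h1, h2⟩ := NF.toL_nodup hne (hval c hc) (s c)
    refine ⟨h1, h2, ?_⟩
    intro e he
    rcases (hFmem c hc e).1 he with h | ⟨i, t, x, h, rfl⟩ | ⟨rfl, -⟩
    · have h3 := NF.inner_avoid (hval c hc) h
      have h4 := (hL c hc).2.2 e ((hmem c hc e).2 (Or.inl h))
      induction e with
      | h x y =>
        simp only [Sym2.mem_iff, not_or] at h3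
        exact h0 x y h4 (Ne.symm h3.1.1) (Ne.symm h3.2.1) (Ne.symm h3.1.2) (Ne.symm h3.2.2)
    · exact hadj c hc i t x h
    · exact hab
  · rintro e ⟨c, hc, he⟩ hae hbe
    apply hcov c hc
    rw [hFmem c hc]
    rcases (hmem c hc _).1 he with h | ⟨i, t, x, h, rfl⟩ | ⟨rfl, -⟩
    · exact Or.inl h
    · cases t <;> simp [vx] at hae hbe
    · simp at hae
  · rintro ⟨c, hc, he⟩
    apply hcov c hc
    rw [hFmem c hc]
    rcases (hmem c hc _).1 he with h | ⟨i, t, x, h, he⟩ | ⟨-, h⟩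
    · exact absurd (by simp) (NF.inner_avoid (hval c hc) h).1
    · exfalso
      have hx := NF.Att_ne (hval c hc) h
      rw [Sym2.eq_iff] at he
      grind
    · right; right
      refine ⟨rfl, ?_⟩
      revert h
      cases nf c <;> simp [NF.hasab]
  · intro x hxb hax hbx hcv
    obtain ⟨t, ht⟩ := hexB x hax.ne.symm hcv
    have := hnewB t x ht
    have hs : s t.1 t.2 = true := by simp [s, hS1 t x ht hax hbx]
    rw [hs] at this
    exact this
  · intro x hxb hbx hax hcv
    obtain ⟨t, ht⟩ := hexB x hxb hcv
    have := hnewB t x ht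
    have hs : s t.1 t.2 = false := by
      simp only [s, decide_eq_false_iff_not]
      intro h; exact hax (hS2 t x h ht)
    rw [hs] at this
    exact this
  · intro z haz hbz h1 h2
    have hz : Zc z := ⟨⟨haz, hbz⟩, hexA z hbz.ne.symm h1, hexB z haz.ne.symm h2⟩
    have n1 := hnewA _ _ (hp z hz).1
    have n2 := hnewB _ _ (hp z hz).2
    by_cases hs : S (p z).1
    · have e1 : s (p z).1.1 (p z).1.2 = true := by simp [s, hs]
      have e2 : s (p z).2.1 (p z).2.2 = true := by simp [s, (hS3 z hz).1 hs]
      rw [e1] at n1; rw [e2] at n2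
      exact ⟨n2, n1⟩
    · have e1 : s (p z).1.1 (p z).1.2 = false := by simp [s, hs]
      have e2 : s (p z).2.1 (p z).2.2 = false := by
        simp only [s, decide_eq_false_iff_not]
        exact fun h => hs ((hS3 z hz).2 h)
      rw [e1] at n1; rw [e2] at n2
      exact ⟨n1, n2⟩

end FC


namespace FC

variable {V : Type*}

open Classical in
noncomputable def mv (a b : V) (x : V) : V := if x = a then b else x

lemma mv_self (a b : V) : mv a b a = b := by simp [mv]
lemma mv_ne {a b x : V} (h : x ≠ a) : mv a b x = x := by simp [mv, h]
lemma mv_eq {a b x y : V} (h : mv a b x = y) : x = y ∨ (x = a ∧ y = b) := by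
  unfold mv at h; grind
lemma mv_ne_a {a b x : V} (hab : a ≠ b) : mv a b x ≠ a := by
  unfold mv; grind

lemma pullCon {G : SimpleGraph V} {a b : V} (hab : G.Adj a b)
    (hno : ∀ z, G.Adj a z → ¬ G.Adj b z)
    (L : List (List V)) (hL : ∀ c ∈ L, IsCyc (img (mv a b) G) c) :
    ∃ L' : List (List V), L'.length = L.length ∧ (∀ c ∈ L', IsCyc G c) ∧
      ∀ x y, G.Adj x y → s(x, y) ≠ s(a, b) → cov L s(mv a b x, mv a b y) → cov L' s(x, y) := by
  have hne := hab.ne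
  obtain ⟨L', h1, h2, h3, h4, h5, h6, h7⟩ := pullback (G := G) (G' := img (mv a b) G) hab
    (by
      rintro x y ⟨-, x', y', hx, hy, h⟩ hxa hxb hya hyb
      rcases mv_eq hx with rfl | ⟨-, h⟩
      · rcases mv_eq hy with rfl | ⟨-, h⟩
        · exact h
        · exact absurd h hyb
      · exact absurd h hxb)
    (by
      rintro x hxb ⟨-, x', y', hx, hy, h⟩
      exact absurd hx (mv_ne_a hne))
    (by
      rintro x hxa ⟨hn, x', y', hx, hy, h⟩
      have : y' = x := by
        rcases mv_eq hy with h | ⟨-, h⟩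
        · exact h
        · exact absurd h.symm hn
      subst this
      rcases mv_eq hx with rfl | ⟨rfl, -⟩
      · exact Or.inr h
      · exact Or.inl h) L hL
  refine ⟨L', h1, h2, ?_⟩
  have key : ∀ x y, (x = a ∨ x = b) → G.Adj x y → s(x, y) ≠ s(a, b) →
      cov L s(mv a b x, mv a b y) → cov L' s(x, y) := by
    rintro x y (rfl | rfl) hxy hne' hc
    · have hyb : y ≠ b := by rintro rfl; exact hne' rfl
      rw [mv_self, mv_ne hxy.ne.symm] at hc
      exact h5 y hyb hxy (hno y hxy) hc
    · have hya : y ≠ a := by rintro rfl; exact hne' Sym2.eq_swap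
      rw [mv_ne hne.symm, mv_ne hya] at hc
      exact h6 y hya hxy (fun h => hno y h hxy) hc
  intro x y hxy hne' hc
  by_cases hx : x = a ∨ x = b
  · exact key x y hx hxy hne' hc
  · by_cases hy : y = a ∨ y = b
    · rw [Sym2.eq_swap]
      apply key y x hy hxy.symm
      · rwa [Sym2.eq_swap]
      · rwa [Sym2.eq_swap]
    · push Not at hx hy
      rw [mv_ne hx.1, mv_ne hy.1] at hc
      apply h3 _ hc <;> simp [hx.1.symm, hx.2.symm, hy.1.symm, hy.2.symm]

lemma img_adj_or {G : SimpleGraph V} (f : V → V) {x y : V} (h : G.Adj x y) :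
    f x = f y ∨ (img f G).Adj (f x) (f y) := by
  by_cases h' : f x = f y
  · exact Or.inl h'
  · exact Or.inr ⟨h', x, y, rfl, rfl, h⟩

lemma NN_le_sub_two [Finite V] {G H : SimpleGraph V} {a b : V} (hab : a ≠ b) (ha : a ∈ G.support)
    (hb : b ∈ G.support) (h : ∀ x, x ∈ H.support → x ∈ G.support ∧ x ≠ a ∧ x ≠ b) :
    NN H + 2 ≤ NN G := by
  unfold NN
  have h1 : Disjoint H.support {a, b} := by
    rw [Set.disjoint_right]
    rintro x (rfl | rfl) hx
    · exact (h _ hx).2.1 rfl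
    · exact (h _ hx).2.2 rfl
  rw [← Set.ncard_pair hab, ← Set.ncard_union_eq h1 (Set.toFinite _) (Set.toFinite _)]
  apply Set.ncard_le_ncard _ (Set.toFinite _)
  rintro x (hx | (rfl | rfl))
  · exact (h x hx).1
  · exact ha
  · exact hb

lemma img_supp {G : SimpleGraph V} {a b x : V} (hab : G.Adj a b)
    (h : x ∈ (img (mv a b) G).support) : x ∈ G.support ∧ x ≠ a := by
  obtain ⟨y, hn, x', y', hx, hy, hadj⟩ := h
  refine ⟨?_, ?_⟩
  · rcases mv_eq hx with rfl | ⟨-, rfl⟩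
    · exact mem_supp hadj
    · exact mem_supp hab.symm
  · rintro rfl
    exact mv_ne_a hab.ne hx

lemma four [Finite V] {G : SimpleGraph V} (hG : BL G)
    (IH : ∀ H : SimpleGraph V, BL H → NN H < NN G → Good H)
    (htf : ∀ x y z, G.Adj x y → G.Adj y z → ¬ G.Adj x z) {a b c d : V}
    (hab : G.Adj a b) (hbc : G.Adj b c) (hcd : G.Adj c d) (hda : G.Adj d a)
    (hac : a ≠ c) (hbd : b ≠ d) : Good G := by
  have n1 := hab.ne
  have n2 := hbc.ne
  have n3 := hcd.ne
  have n4 := hda.ne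
  set G0 := G.deleteEdges {s(a, d)} with hG0
  have hG0adj : ∀ x y, G0.Adj x y ↔ G.Adj x y ∧ s(x, y) ≠ s(a, d) := by
    intro x y; rw [hG0, SimpleGraph.deleteEdges_adj]; simp
  set G1 := img (mv a b) G0 with hG1
  set G2 := img (mv d c) G1 with hG2
  set f : V → V := fun x => mv d c (mv a b x) with hf
  have hfa : f a = b := by simp [hf, mv, hbd]
  have hfd : f d = c := by simp [hf, mv, n4]
  have hfo : ∀ x, x ≠ a → x ≠ d → f x = x := by
    intro x h1 h2; simp [hf, mv, h1, h2]
  have hfe : ∀ x y, f x = f y → x = y ∨ ((x = a ∨ x = b) ∧ (y = a ∨ y = b)) ∨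
      ((x = c ∨ x = d) ∧ (y = c ∨ y = d)) := by
    intro x y h
    by_cases h1 : x = a <;> by_cases h2 : x = d <;> by_cases h3 : y = a <;> by_cases h4 : y = d <;>
      grind
  have ab0 : G0.Adj a b := by
    rw [hG0adj]; refine ⟨hab, ?_⟩; rw [Ne, Sym2.eq_iff]; grind
  have bc0 : G0.Adj b c := by
    rw [hG0adj]; refine ⟨hbc, ?_⟩; rw [Ne, Sym2.eq_iff]; grind
  have cd0 : G0.Adj c d := by
    rw [hG0adj]; refine ⟨hcd, ?_⟩; rw [Ne, Sym2.eq_iff]; grind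
  have dc1 : G1.Adj d c := by
    refine ⟨n3.symm, d, c, mv_ne n4, mv_ne hac.symm, cd0.symm⟩
  have adj2 : ∀ x y, G0.Adj x y → f x = f y ∨ G2.Adj (f x) (f y) := by
    intro x y h
    rcases img_adj_or (mv a b) h with h | h
    · left; simp [hf, h]
    · exact img_adj_or (mv d c) h
  have bc2 : G2.Adj b c := by
    have := adj2 b c bc0
    rw [hfo b n1.symm hbd, hfo c hac.symm n3] at this
    exact this.resolve_left n2
  have adj2' : ∀ x y, G.Adj x y → f x = f y ∨ G2.Adj (f x) (f y) := by
    intro x y h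
    by_cases h' : s(x, y) = s(a, d)
    · right
      rw [Sym2.eq_iff] at h'
      rcases h' with ⟨rfl, rfl⟩ | ⟨rfl, rfl⟩
      · rw [hfa, hfd]; exact bc2
      · rw [hfa, hfd]; exact bc2.symm
    · exact adj2 x y ((hG0adj x y).2 ⟨h, h'⟩)
  have hnoad : ¬ G.Adj a c := htf a b c hab hbc
  have hnobd : ¬ G.Adj b d := htf b c d hbc hcd
  -- edges other than the four have unique images
  have huniq : ∀ x y x' y', G.Adj x y → G.Adj x' y' → s(x, y) ≠ s(a, b) → s(x, y) ≠ s(b, c) →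
      s(x, y) ≠ s(c, d) → s(x, y) ≠ s(d, a) → f x' = f x → f y' = f y → x = x' ∧ y = y' := by
    intro x y x' y' h h' e1 e2 e3 e4 hx hy
    simp only [Ne, Sym2.eq_iff, not_or] at e1 e2 e3 e4
    have t1 := htf x y x'
    have t2 := htf x y y'
    have t3 := htf y x y'
    have t4 := htf y x x'
    have := h.symm
    have := h'.symm
    have := h.ne
    have := h'.ne
    have := hab.symm; have := hbc.symm; have := hcd.symm; have := hda.symm
    have := fun h : G.Adj c a => hnoad h.symm
    have := fun h : G.Adj d b => hnobd h.symm
    rcases hfe _ _ hx with hx | hx | hx <;> rcases hfe _ _ hy with hy | hy | hy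
    · exact ⟨hx.symm, hy.symm⟩
    · subst hx; have := htf y x' y'; have := htf y' x' y; grind
    · subst hx; have := htf y x' y'; have := htf y' x' y; grind
    · subst hy; have := htf x y' x'; have := htf x' y' x; grind
    · grind
    · grind
    · subst hy; have := htf x y' x'; have := htf x' y' x; grind
    · grind
    · grind
  have hK : ∀ x y, G.Adj x y → s(x, y) ≠ s(a, b) → s(x, y) ≠ s(b, c) →
      s(x, y) ≠ s(c, d) → s(x, y) ≠ s(d, a) → (core G2).Adj (f x) (f y) := by
    intro x y h e1 e2 e3 e4
    have hne : f x ≠ f y := by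
      intro he
      have := h.ne
      simp only [Ne, Sym2.eq_iff, not_or] at e1 e2 e3 e4
      rcases hfe _ _ he with h | h | h <;> grind
    refine ⟨(adj2' x y h).resolve_left hne, ?_⟩
    apply NB_map f (hG x y h)
    intro x' y' h' hne'
    rcases adj2' x' y' h' with h2 | h2
    · exact Or.inl h2
    · right
      refine ⟨h2, ?_⟩
      intro he
      apply hne'
      rw [Sym2.eq_iff] at he
      rcases he with ⟨u1, u2⟩ | ⟨u1, u2⟩
      · obtain ⟨rfl, rfl⟩ := huniq x y x' y' h h' e1 e2 e3 e4 u1 u2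
        rfl
      · obtain ⟨rfl, rfl⟩ := huniq x y y' x' h h'.symm e1 e2 e3 e4 u2 u1
        exact Sym2.eq_swap
  have hN : NN (core G2) + 2 ≤ NN G := by
    apply NN_le_sub_two n4.symm (mem_supp hab) (mem_supp hda)
    rintro x ⟨y, hy⟩
    have s2 := img_supp dc1 (mem_supp hy.1)
    have s1 := img_supp ab0 s2.1
    obtain ⟨z, hz⟩ := s1.1
    exact ⟨⟨z, ((hG0adj _ _).1 hz).1⟩, s1.2, s2.2⟩
  obtain ⟨L, c1, c2, c3⟩ := IH (core G2) (core_BL _) (by omega)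
  obtain ⟨L1, l1, d1, d2⟩ := pullCon (G := G1) (a := d) (b := c) dc1 (by
    rintro z ⟨hz1, x', y', hx, hy, h⟩ ⟨hz2, x'', y'', hx'', hy'', h''⟩
    have h1 := ((hG0adj _ _).1 h)
    have h2 := ((hG0adj _ _).1 h'').1
    have hxd : x' = d := by
      rcases mv_eq hx with h | ⟨-, h⟩
      · exact h
      · exact absurd h.symm hbd
    have hxc : x'' = c := by
      rcases mv_eq hx'' with h | ⟨-, h⟩
      · exact h
      · exact absurd h.symm n2
    subst hxd hxc
    have hz : y' = z := by
      rcases mv_eq hy with h | ⟨rfl, -⟩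
      · exact h
      · exact absurd Sym2.eq_swap h1.2
    have hz' : y'' = z := by
      rcases mv_eq hy'' with h | ⟨rfl, -⟩
      · exact h
      · exact absurd h2.symm hnoad
    subst hz
    subst hz'
    exact htf _ _ _ hcd h1.1 h2) L (fun c hc => (c1 c hc).mono (core_le _))
  obtain ⟨L0, l0, f1, f2⟩ := pullCon (G := G0) (a := a) (b := b) ab0 (by
    intro z h1 h2
    exact htf _ _ _ ((hG0adj _ _).1 h1).1 ((hG0adj _ _).1 h2).1.symm hab) L1 d1
  have hle : G0 ≤ G := fun x y h => ((hG0adj _ _).1 h).1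
  refine ⟨[a, b, c, d] :: L0, ?_, ?_, ?_⟩
  · intro c' hc'
    rcases List.mem_cons.1 hc' with rfl | h
    · refine ⟨?_, by simp, ?_⟩
      · simp; grind
      · intro e he
        simp [CE] at he
        rcases he with rfl | rfl | rfl | rfl <;> assumption
    · exact (f1 _ h).mono hle
  · intro e he
    rw [cov_cons]
    induction e with
    | h x y =>
      have hxy : G.Adj x y := he
      by_cases e1 : s(x, y) = s(a, b)
      · left; simp [CE, -Sym2.eq, e1]
      by_cases e2 : s(x, y) = s(b, c)
      · left; simp [CE, -Sym2.eq, e2]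
      by_cases e3 : s(x, y) = s(c, d)
      · left; simp [CE, -Sym2.eq, e3]
      by_cases e4 : s(x, y) = s(d, a)
      · left; simp [CE, -Sym2.eq, e4]
      right
      have h0 : G0.Adj x y := (hG0adj _ _).2 ⟨hxy, fun h => e4 (h.trans Sym2.eq_swap)⟩
      apply f2 x y h0 e1
      have hadj1 : G1.Adj (mv a b x) (mv a b y) := by
        refine (img_adj_or (mv a b) h0).resolve_left ?_
        intro h
        exact (hK x y hxy e1 e2 e3 e4).ne (by simp [hf, h])
      apply d2 _ _ hadj1
      · intro h
        have := (hK x y hxy e1 e2 e3 e4).ne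
        simp only [hf] at this
        rw [Sym2.eq_iff] at h
        rcases h with ⟨h, h'⟩ | ⟨h, h'⟩ <;> rw [h, h'] at this <;> simp [mv] at this
      · exact c2 _ (hK x y hxy e1 e2 e3 e4)
  · have h3 : 2 ≤ NN G := two_le_NN hab
    have h4 : 3 ≤ NN G := by
      have : ({a, b, c} : Set V) ⊆ G.support := by
        rintro x (rfl | rfl | rfl)
        · exact mem_supp hab
        · exact mem_supp hbc
        · exact mem_supp hcd
      have := Set.ncard_le_ncard this (Set.toFinite _)
      rw [Set.ncard_eq_three.2 ⟨a, b, c, n1, hac, n2, rfl⟩] at this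
      exact this
    simp only [List.length_cons]
    omega

end FC


namespace FC

variable {V : Type*}

lemma three [Finite V] {G : SimpleGraph V} (hG : BL G)
    (IH : ∀ H : SimpleGraph V, BL H → NN H < NN G → Good H)
    (htf : ∀ x y z, G.Adj x y → G.Adj y z → ¬ G.Adj x z)
    (hno4 : ∀ a b c d, G.Adj a b → G.Adj b c → G.Adj c d → G.Adj d a → a ≠ c → b = d)
    {a b : V} (hab : G.Adj a b) : Good G := by
  classical
  obtain ⟨c, hca, hbc⟩ := hG.exists_other hab
  have n1 := hab.ne
  have n2 := hbc.ne
  have hac : ¬ G.Adj a c := htf a b c hab hbc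
  have hbiso : ∀ x, (res G {b}ᶜ).Reachable b x → x = b := by
    rintro x ⟨w⟩
    cases w with
    | nil => rfl
    | cons h p => exact absurd rfl h.2.1
  by_cases hr : (res G {b}ᶜ).Reachable a c
  swap
  · apply split hG IH {x | (res G {b}ᶜ).Reachable a x} b
    · intro h
      exact n1 (hbiso a (SimpleGraph.Reachable.symm h))
    · intro x y hxy hx
      by_cases hy : y = b
      · exact Or.inr hy
      · left
        have hxb : x ≠ b := by
          rintro rfl
          exact n1 (hbiso a (SimpleGraph.Reachable.symm hx))
        have h2 : (res G {b}ᶜ).Adj x y := ⟨hxy, hxb, hy⟩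
        exact SimpleGraph.Reachable.trans hx h2.reachable
    · exact ⟨a, b, hab, SimpleGraph.Reachable.refl _⟩
    · refine ⟨b, c, hbc, ?_, hr⟩
      intro h
      exact n1 (hbiso a (SimpleGraph.Reachable.symm h))
  obtain ⟨w0⟩ := hr
  obtain ⟨w, hw⟩ : ∃ w : (res G {b}ᶜ).Walk a c, w.IsPath := ⟨w0.toPath, w0.toPath.2⟩
  have hcyc : IsCyc G (b :: w.support) ∧ s(a, b) ∈ CE (b :: w.support) ∧
      s(b, c) ∈ CE (b :: w.support) := by
    have hb : b ∉ w.support := by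
      intro h
      have : (res G {b}ᶜ).Reachable a b := ⟨w.takeUntil b h⟩
      exact n1 (hbiso a this.symm)
    have h1 : ∃ l, w.support = a :: l := by
      cases w with
      | nil => exact ⟨_, rfl⟩
      | cons h p => exact ⟨_, rfl⟩
    obtain ⟨l, hl⟩ := h1
    have h2 : w.support = w.support.dropLast ++ [c] := by
      have := List.dropLast_append_getLast (l := w.support) (by simp)
      rw [SimpleGraph.Walk.getLast_support] at this
      exact this.symm
    have hCE : CE (b :: w.support) = s(b, a) :: (PE w.support ++ [s(c, b)]) := by
      have h3 : CE (b :: w.support) = s(b, a) :: PE (w.support ++ [b]) := by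
        rw [hl]; rfl
      rw [h3]
      congr 1
      conv_lhs => rw [h2, List.append_assoc]
      rw [List.singleton_append, PE_append, ← h2]
      rfl
    refine ⟨⟨?_, ?_, ?_⟩, ?_, ?_⟩
    · rw [List.nodup_cons]
      exact ⟨hb, (SimpleGraph.Walk.isPath_def _).1 hw⟩
    · cases w with
      | nil => exact absurd rfl hca
      | cons h p =>
        cases p <;> simp
    · intro e he
      rw [hCE, PE_support] at he
      simp only [List.mem_cons, List.mem_append, List.not_mem_nil, or_false] at he
      rcases he with rfl | he | rfl
      · exact hab.symm
      · have := SimpleGraph.Walk.edges_subset_edgeSet w he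
        induction e with
        | h x y => exact this.1
      · exact hbc.symm
    · rw [hCE, Sym2.eq_swap]; exact List.mem_cons_self ..
    · rw [hCE, Sym2.eq_swap (a := b) (b := c)]; exact List.mem_cons_of_mem _ (by simp)
  set G1 := img (mv a b) G with hG1
  set G2 := img (mv c b) G1 with hG2
  set f : V → V := fun x => mv c b (mv a b x) with hf
  have hfa : f a = b := by simp [hf, mv, n2]
  have hfc : f c = b := by simp [hf, mv, hca]
  have hfo : ∀ x, x ≠ a → x ≠ c → f x = x := by
    intro x h1 h2; simp [hf, mv, h1, h2]
  have hfe : ∀ x y, f x = f y → x = y ∨ ((x = a ∨ x = b ∨ x = c) ∧ (y = a ∨ y = b ∨ y = c)) := by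
    intro x y h
    by_cases h1 : x = a <;> by_cases h2 : x = c <;> by_cases h3 : y = a <;> by_cases h4 : y = c <;>
      grind
  have cb1 : G1.Adj c b := by
    refine ⟨n2.symm, c, b, mv_ne hca, mv_ne n1.symm, hbc.symm⟩
  have adj2 : ∀ x y, G.Adj x y → f x = f y ∨ G2.Adj (f x) (f y) := by
    intro x y h
    rcases img_adj_or (mv a b) h with h | h
    · left; simp [hf, h]
    · exact img_adj_or (mv c b) h
  have huniq : ∀ x y x' y', G.Adj x y → G.Adj x' y' → s(x, y) ≠ s(a, b) → s(x, y) ≠ s(b, c) →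
      f x' = f x → f y' = f y → x = x' ∧ y = y' := by
    have one : ∀ x y y', G.Adj x y → G.Adj x y' → s(x, y) ≠ s(a, b) → s(x, y) ≠ s(b, c) →
        (y = a ∨ y = b ∨ y = c) → (y' = a ∨ y' = b ∨ y' = c) → y = y' := by
      intro x y y' h h' e1 e2 hy hy'
      simp only [Ne, Sym2.eq_iff, not_or] at e1 e2
      have t1 := htf y x y' h.symm h'
      have t2 := fun hh => hno4 a b c x hab hbc hh
      have := hab.symm; have := hbc.symm; have := h.symm; have := h'.symm
      grind
    intro x y x' y' h h' e1 e2 hx hy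
    rcases hfe _ _ hx with hx | hx
    · rcases hfe _ _ hy with hy | hy
      · exact ⟨hx.symm, hy.symm⟩
      · subst hx
        exact ⟨rfl, one _ _ _ h h' e1 e2 hy.2 hy.1⟩
    · rcases hfe _ _ hy with hy | hy
      · subst hy
        exact ⟨one _ _ _ h.symm h'.symm (by rwa [Sym2.eq_swap]) (by rwa [Sym2.eq_swap]) hx.2 hx.1, rfl⟩
      · exfalso
        simp only [Ne, Sym2.eq_iff, not_or] at e1 e2
        have := h.ne
        have := h.symm
        grind
  have hfne : ∀ x y, G.Adj x y → s(x, y) ≠ s(a, b) → s(x, y) ≠ s(b, c) → f x ≠ f y := by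
    intro x y h e1 e2 he
    have := h.ne
    have := h.symm
    simp only [Ne, Sym2.eq_iff, not_or] at e1 e2
    rcases hfe _ _ he with h | h <;> grind
  have hK : BL G2 := by
    have main : ∀ x y, G.Adj x y → s(x, y) ≠ s(a, b) → s(x, y) ≠ s(b, c) → NB G2 (f x) (f y) := by
      intro x y h e1 e2
      apply NB_map f (hG x y h)
      intro x' y' h' hne'
      rcases adj2 x' y' h' with h2 | h2
      · exact Or.inl h2
      · right
        refine ⟨h2, ?_⟩
        intro he
        apply hne'
        rw [Sym2.eq_iff] at he
        rcases he with ⟨u1, u2⟩ | ⟨u1, u2⟩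
        · obtain ⟨rfl, rfl⟩ := huniq x y x' y' h h' e1 e2 u1 u2
          rfl
        · obtain ⟨rfl, rfl⟩ := huniq x y y' x' h h'.symm e1 e2 u2 u1
          exact Sym2.eq_swap
    rintro u v ⟨huv, u1, v1, rfl, rfl, -, u2, v2, rfl, rfl, hadj⟩
    apply main u2 v2 hadj
    · intro h
      apply huv
      rw [Sym2.eq_iff] at h
      rcases h with ⟨rfl, rfl⟩ | ⟨rfl, rfl⟩ <;> simp [mv]
    · intro h
      apply huv
      rw [Sym2.eq_iff] at h
      rcases h with ⟨rfl, rfl⟩ | ⟨rfl, rfl⟩ <;> simp [mv, hca]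
  have hN : NN G2 + 2 ≤ NN G := by
    apply NN_le_sub_two hca.symm (mem_supp hab) (mem_supp hbc.symm)
    rintro x ⟨y, hy⟩
    have s2 := img_supp cb1 (mem_supp hy)
    have s1 := img_supp hab s2.1
    exact ⟨s1.1, s1.2, s2.2⟩
  obtain ⟨L, c1, c2, c3⟩ := IH G2 hK (by omega)
  obtain ⟨L1, l1, d1, d2⟩ := pullCon (G := G1) (a := c) (b := b) cb1 (by
    rintro z ⟨hz1, x', y', hx, hy, h⟩ ⟨hz2, x'', y'', hx'', hy'', h''⟩
    have hxc : x' = c := by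
      rcases mv_eq hx with h | ⟨-, h⟩
      · exact h
      · exact absurd h.symm n2
    subst hxc
    have hzb : z ≠ b := hz2.symm
    have hza : y' = z := by
      rcases mv_eq hy with h | ⟨-, h⟩
      · exact h
      · exact absurd h hzb
    have hza' : y'' = z := by
      rcases mv_eq hy'' with h | ⟨-, h⟩
      · exact h
      · exact absurd h hzb
    subst hza
    subst hza'
    rcases mv_eq hx'' with rfl | ⟨rfl, -⟩
    · exact htf _ _ _ hbc h h''
    · exact hzb (hno4 _ _ _ _ hab hbc h h''.symm hca.symm).symm) L c1
  obtain ⟨L0, l0, f1, f2⟩ := pullCon (G := G) (a := a) (b := b) hab (by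
    intro z h1 h2
    exact htf _ _ _ h1 h2.symm hab) L1 d1
  refine ⟨(b :: w.support) :: L0, ?_, ?_, ?_⟩
  · intro c' hc'
    rcases List.mem_cons.1 hc' with rfl | h
    · exact hcyc.1
    · exact f1 _ h
  · intro e he
    rw [cov_cons]
    induction e with
    | h x y =>
      have hxy : G.Adj x y := he
      by_cases e1 : s(x, y) = s(a, b)
      · left; rw [e1]; exact hcyc.2.1
      by_cases e2 : s(x, y) = s(b, c)
      · left; rw [e2]; exact hcyc.2.2
      right
      have hne := hfne x y hxy e1 e2
      apply f2 x y hxy e1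
      have hadj1 : G1.Adj (mv a b x) (mv a b y) := by
        refine (img_adj_or (mv a b) hxy).resolve_left ?_
        intro h
        exact hne (by simp [hf, h])
      apply d2 _ _ hadj1
      · intro h
        simp only [hf] at hne
        rw [Sym2.eq_iff] at h
        rcases h with ⟨h, h'⟩ | ⟨h, h'⟩ <;> rw [h, h'] at hne <;> simp [mv] at hne
      · exact c2 _ ((adj2 x y hxy).resolve_left hne)
  · have h4 : 3 ≤ NN G := by
      have : ({a, b, c} : Set V) ⊆ G.support := by
        rintro x (rfl | rfl | rfl)
        · exact mem_supp hab
        · exact mem_supp hbc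
        · exact mem_supp hbc.symm
      have := Set.ncard_le_ncard this (Set.toFinite _)
      rw [Set.ncard_eq_three.2 ⟨a, b, c, n1, hca.symm, n2, rfl⟩] at this
      exact this
    simp only [List.length_cons]
    omega

end FC


namespace FC

variable {V : Type*}

/-- Kelmans shift: move the private neighbours of `a` to `b` -/
def Kel (G : SimpleGraph V) (a b : V) : SimpleGraph V where
  Adj x y := (G.Adj x y ∧ (x = a → y ≠ b → G.Adj b y) ∧ (y = a → x ≠ b → G.Adj b x)) ∨
    (x = b ∧ y ≠ b ∧ y ≠ a ∧ G.Adj a y) ∨ (y = b ∧ x ≠ b ∧ x ≠ a ∧ G.Adj a x)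
  symm := ⟨fun x y h => by
    rcases h with ⟨h1, h2, h3⟩ | h | h
    · exact Or.inl ⟨h1.symm, h3, h2⟩
    · exact Or.inr (Or.inr h)
    · exact Or.inr (Or.inl h)⟩
  loopless := ⟨fun x h => by
    rcases h with ⟨h1, -⟩ | h | h
    · exact h1.ne rfl
    · exact h.2.1 h.1
    · exact h.2.1 h.1⟩

section
variable {G : SimpleGraph V} {a b : V}

lemma Kel_ab (hab : G.Adj a b) : (Kel G a b).Adj a b :=
  Or.inl ⟨hab, fun _ h => absurd rfl h, fun h => absurd h hab.ne.symm⟩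

lemma Kel_other {x y : V} (hx : x ≠ a) (hx' : x ≠ b) (hy : y ≠ a) (hy' : y ≠ b) :
    (Kel G a b).Adj x y ↔ G.Adj x y := by
  simp [Kel, hx, hx', hy, hy']

lemma Kel_a (hab : a ≠ b) {y : V} (hy : y ≠ b) :
    (Kel G a b).Adj a y ↔ G.Adj a y ∧ G.Adj b y := by
  have : G.Adj a y → y ≠ a := fun h => h.ne.symm
  simp only [Kel]; grind

lemma Kel_b (hab : a ≠ b) {y : V} (hy : y ≠ a) :
    (Kel G a b).Adj b y ↔ y ≠ b ∧ (G.Adj a y ∨ G.Adj b y) := by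
  have : G.Adj b y → y ≠ b := fun h => h.ne.symm
  simp only [Kel]; grind

lemma Kel_adj_mv (hab : G.Adj a b) {x y : V} (h : G.Adj x y) :
    mv a b x = mv a b y ∨ (Kel G a b).Adj (mv a b x) (mv a b y) := by
  have key : ∀ y, G.Adj a y → mv a b a = mv a b y ∨ (Kel G a b).Adj (mv a b a) (mv a b y) := by
    intro y h
    rw [mv_self, mv_ne h.ne.symm]
    by_cases hy : y = b
    · exact Or.inl hy.symm
    · right; rw [Kel_b hab.ne h.ne.symm]; exact ⟨hy, Or.inl h⟩
  by_cases hx : x = a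
  · subst hx; exact key y h
  · by_cases hy : y = a
    · subst hy
      rcases key x h.symm with h | h
      · exact Or.inl h.symm
      · exact Or.inr h.symm
    · right
      rw [mv_ne hx, mv_ne hy]
      exact Or.inl ⟨h, fun h => absurd h hx, fun h => absurd h hy⟩

lemma Kel_BL (hG : BL G) (hab : G.Adj a b) {z : V} (haz : G.Adj a z) (hbz : G.Adj b z) :
    BL (Kel G a b) := by
  have hne := hab.ne
  have tri : ∀ y, G.Adj a y → G.Adj b y → NB (Kel G a b) a y ∧ NB (Kel G a b) b y ∧
      NB (Kel G a b) a b := by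
    intro y h1 h2
    have e1 : (Kel G a b).Adj a y := (Kel_a hne h2.ne.symm).2 ⟨h1, h2⟩
    have e2 : (Kel G a b).Adj b y := (Kel_b hne h1.ne.symm).2 ⟨h2.ne.symm, Or.inr h2⟩
    exact ⟨NB_tri e1 (Kel_ab hab) e2.symm, NB_tri e2 (Kel_ab hab).symm e1.symm,
      NB_tri (Kel_ab hab) e1 e2⟩
  have hb : ∀ y, y ≠ a → (Kel G a b).Adj b y → NB (Kel G a b) b y := by
    intro y hya h
    have h' := (Kel_b hne hya).1 h
    by_cases hboth : G.Adj a y ∧ G.Adj b y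
    · exact (tri y hboth.1 hboth.2).2.1
    rcases h'.2 with h1 | h1
    · have := NB_map (G' := Kel G a b) (mv a b) (hG a y h1) (by
        intro x' y' h2 hne'
        rcases Kel_adj_mv hab h2 with h3 | h3
        · exact Or.inl h3
        · refine Or.inr ⟨h3, fun he => ?_⟩
          rw [mv_self, mv_ne hya] at he
          have := h2.symm
          rw [Sym2.eq_iff] at he; rw [Ne, Sym2.eq_iff] at hne'
          unfold mv at he
          grind)
      rwa [mv_self, mv_ne hya] at this
    · have := NB_map (G' := Kel G a b) (mv a b) (hG b y h1) (by
        intro x' y' h2 hne'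
        rcases Kel_adj_mv hab h2 with h3 | h3
        · exact Or.inl h3
        · refine Or.inr ⟨h3, fun he => ?_⟩
          rw [mv_ne hne.symm, mv_ne hya] at he
          have := h2.symm
          rw [Sym2.eq_iff] at he; rw [Ne, Sym2.eq_iff] at hne'
          unfold mv at he
          grind)
      rwa [mv_ne hne.symm, mv_ne hya] at this
  have ha : ∀ y, (Kel G a b).Adj a y → NB (Kel G a b) a y := by
    intro y h
    by_cases hy : y = b
    · subst hy; exact (tri z haz hbz).2.2
    · have := (Kel_a hne hy).1 h
      exact (tri y this.1 this.2).1
  intro x y hxy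
  by_cases hxa : x = a
  · subst hxa; exact ha y hxy
  by_cases hya : y = a
  · subst hya; exact (ha x hxy.symm).symm
  by_cases hxb : x = b
  · subst hxb; exact hb y hya hxy
  by_cases hyb : y = b
  · subst hyb; exact (hb x hxa hxy.symm).symm
  have h1 := (Kel_other hxa hxb hya hyb).1 hxy
  have := NB_map (G' := Kel G a b) (mv a b) (hG x y h1) (by
        intro x' y' h2 hne'
        rcases Kel_adj_mv hab h2 with h3 | h3
        · exact Or.inl h3
        · refine Or.inr ⟨h3, fun he => ?_⟩
          rw [mv_ne hxa, mv_ne hya] at he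
          rw [Sym2.eq_iff] at he; rw [Ne, Sym2.eq_iff] at hne'
          unfold mv at he
          grind)
  rwa [mv_ne hxa, mv_ne hya] at this

lemma Kel_supp (hab : G.Adj a b) : (Kel G a b).support ⊆ G.support := by
  rintro x ⟨y, ⟨h, -⟩ | h | h⟩
  · exact ⟨y, h⟩
  · rw [h.1]; exact ⟨a, hab.symm⟩
  · exact ⟨a, h.2.2.2.symm⟩

lemma Kel_NN [Finite V] (hab : G.Adj a b) : NN (Kel G a b) ≤ NN G :=
  Set.ncard_le_ncard (Kel_supp hab) (Set.toFinite _)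

lemma Kel_good [Finite V] (hab : G.Adj a b) (h : Good (Kel G a b)) : Good G := by
  have hne := hab.ne
  obtain ⟨L, c1, c2, c3⟩ := h
  obtain ⟨L', h1, h2, h3, h4, h5, h6, h7⟩ := pullback (G := G) (G' := Kel G a b) hab
    (by
      intro x y h hxa hxb hya hyb
      exact (Kel_other hxa hxb hya hyb).1 h)
    (by
      intro x hxb h
      exact (Kel_a hne hxb).1 h)
    (by
      intro x hxa h
      exact ((Kel_b hne hxa).1 h).2) L c1
  have hN := Kel_NN hab
  refine ⟨L', h2, ?_, by omega⟩
  have hba : ∀ y, y ≠ a → y ≠ b → (G.Adj a y ∨ G.Adj b y) → cov L s(b, y) := by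
    intro y hya hyb h
    exact c2 _ ((Kel_b hne hya).2 ⟨hyb, h⟩)
  have ka : ∀ y, G.Adj a y → cov L' s(a, y) := by
    intro y hy
    by_cases hyb : y = b
    · subst hyb; exact h4 (c2 _ (Kel_ab hab))
    · by_cases hby : G.Adj b y
      · exact (h7 y hy hby (c2 _ ((Kel_a hne hyb).2 ⟨hy, hby⟩))
          (hba y hy.ne.symm hyb (Or.inl hy))).1
      · exact h5 y hyb hy hby (hba y hy.ne.symm hyb (Or.inl hy))
  have kb : ∀ y, G.Adj b y → cov L' s(b, y) := by
    intro y hy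
    by_cases hya : y = a
    · subst hya; rw [Sym2.eq_swap]; exact ka b hab
    · by_cases hay : G.Adj a y
      · exact (h7 y hay hy (c2 _ ((Kel_a hne hy.ne.symm).2 ⟨hay, hy⟩))
          (hba y hya hy.ne.symm (Or.inr hy))).2
      · exact h6 y hya hy hay (hba y hya hy.ne.symm (Or.inr hy))
  intro e he
  induction e with
  | h x y =>
    have hxy : G.Adj x y := he
    by_cases hxa : x = a
    · subst hxa; exact ka y hxy
    by_cases hya : y = a
    · subst hya; rw [Sym2.eq_swap]; exact ka x hxy.symm
    by_cases hxb : x = b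
    · subst hxb; exact kb y hxy
    by_cases hyb : y = b
    · subst hyb; rw [Sym2.eq_swap]; exact kb x hxy.symm
    apply h3 _ (c2 _ ((Kel_other hxa hxb hya hyb).2 hxy))
    · simp [Ne.symm hxa, Ne.symm hya]
    · simp [Ne.symm hxb, Ne.symm hyb]

end

def wt {n : ℕ} : Sym2 (Fin n) → ℕ := Sym2.lift ⟨fun x y => x.val + y.val, fun _ _ => add_comm _ _⟩

open Classical in
noncomputable def mu {n : ℕ} (G : SimpleGraph (Fin n)) : ℕ :=
  ∑ e ∈ Finset.univ.filter (· ∈ G.edgeSet), wt e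

lemma Kel_mu {n : ℕ} {G : SimpleGraph (Fin n)} {a b : Fin n} (hab : G.Adj a b) (hlt : b < a)
    {p : Fin n} (hp : G.Adj a p) (hpb : p ≠ b) (hbp : ¬ G.Adj b p) : mu (Kel G a b) < mu G := by
  classical
  have hne := hab.ne
  set P : Finset (Fin n) := Finset.univ.filter (fun y => G.Adj a y ∧ y ≠ b ∧ ¬ G.Adj b y) with hP
  have hPm : ∀ y, y ∈ P ↔ G.Adj a y ∧ y ≠ b ∧ ¬ G.Adj b y := by simp [hP]
  set A := P.image (fun y => s(a, y)) with hA
  set B := P.image (fun y => s(b, y)) with hB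
  set R : Finset (Sym2 (Fin n)) := Finset.univ.filter (fun e => e ∈ G.edgeSet ∧ e ∉ A) with hR
  have inj : ∀ c : Fin n, Function.Injective (fun y => s(c, y)) := by
    intro c x y h
    have h' : s(c, x) = s(c, y) := h
    rw [Sym2.eq_iff] at h'
    grind
  have e1 : Finset.univ.filter (· ∈ G.edgeSet) = R ∪ A := by
    ext e
    simp only [Finset.mem_filter, Finset.mem_union, hR, Finset.mem_univ, true_and]
    constructor
    · intro h; by_cases h' : e ∈ A
      · exact Or.inr h'
      · exact Or.inl ⟨h, h'⟩
    · rintro (h | h)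
      · exact h.1
      · rw [hA, Finset.mem_image] at h
        obtain ⟨y, hy, rfl⟩ := h
        exact ((hPm y).1 hy).1
  have d1 : Disjoint R A := by
    rw [Finset.disjoint_left]; intro e h
    simp only [Finset.mem_filter, hR] at h
    exact h.2.2
  have e2 : Finset.univ.filter (· ∈ (Kel G a b).edgeSet) = R ∪ B := by
    ext e
    induction e with
    | h x y =>
      simp only [Finset.mem_filter, Finset.mem_union, hR, Finset.mem_univ, true_and, hA, hB,
        Finset.mem_image, SimpleGraph.mem_edgeSet, Sym2.eq_iff, hPm]
      have := @SimpleGraph.Adj.symm _ G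
      have h1 : ∀ x, ¬ G.Adj x x := fun x h => h.ne rfl
      constructor
      · rintro (⟨h1, h2, h3⟩ | h | h)
        · left
          refine ⟨h1, ?_⟩
          rintro ⟨z, ⟨hz1, hz2, hz3⟩, ⟨rfl, rfl⟩ | ⟨rfl, rfl⟩⟩
          · exact hz3 (h2 rfl hz2)
          · exact hz3 (h3 rfl hz2)
        · by_cases hby : G.Adj b y
          · left
            rw [h.1]
            refine ⟨hby, ?_⟩
            rintro ⟨z, ⟨hz1, hz2, hz3⟩, ⟨h1, h2⟩ | ⟨rfl, rfl⟩⟩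
            · exact hne h1
            · exact h.2.2.1 rfl
          · right
            exact ⟨y, ⟨h.2.2.2, h.2.1, hby⟩, Or.inl ⟨h.1.symm, rfl⟩⟩
        · by_cases hby : G.Adj b x
          · left
            rw [h.1]
            refine ⟨hby.symm, ?_⟩
            rintro ⟨z, ⟨hz1, hz2, hz3⟩, ⟨h1, h2⟩ | ⟨h1, h2⟩⟩
            · exact h.2.2.1 h1.symm
            · exact hne h1
          · right
            exact ⟨x, ⟨h.2.2.2, h.2.1, hby⟩, Or.inr ⟨h.1.symm, rfl⟩⟩
      · rintro (⟨h, h'⟩ | ⟨z, ⟨hz1, hz2, hz3⟩, ⟨rfl, rfl⟩ | ⟨rfl, rfl⟩⟩)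
        · refine Or.inl ⟨h, ?_, ?_⟩
          · rintro rfl hy
            by_contra hc
            exact h' ⟨y, ⟨h, hy, hc⟩, Or.inl ⟨rfl, rfl⟩⟩
          · rintro rfl hy
            by_contra hc
            exact h' ⟨x, ⟨h.symm, hy, hc⟩, Or.inr ⟨rfl, rfl⟩⟩
        · exact Or.inr (Or.inl ⟨rfl, hz2, hz1.ne.symm, hz1⟩)
        · exact Or.inr (Or.inr ⟨rfl, hz2, hz1.ne.symm, hz1⟩)
  have d2 : Disjoint R B := by
    rw [Finset.disjoint_left]; intro e h h'
    simp only [Finset.mem_filter, hR] at h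
    rw [hB, Finset.mem_image] at h'
    obtain ⟨y, hy, rfl⟩ := h'
    exact ((hPm y).1 hy).2.2 h.2.1
  unfold mu
  rw [e1, e2, Finset.sum_union d1, Finset.sum_union d2, hA, hB,
    Finset.sum_image ((inj a).injOn), Finset.sum_image ((inj b).injOn)]
  apply Nat.add_lt_add_left
  apply Finset.sum_lt_sum_of_nonempty ⟨p, (hPm p).2 ⟨hp, hpb, hbp⟩⟩
  intro y _
  simp only [wt, Sym2.lift_mk]
  have : b.val < a.val := hlt
  omega

end FC


namespace FC

universe u

variable {V : Type u}

def ends (p : List V) : Multiset V := ((p.head?.toList ++ p.getLast?.toList : List V) : Multiset V)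

def PEm (p : List V) : Multiset (Sym2 V) := (PE p : Multiset (Sym2 V))

def Dec (F : Finset (Sym2 V)) (E : Multiset V) : Prop :=
  ∃ P : Multiset (List V), (∀ p ∈ P, p ≠ [] ∧ p.Nodup) ∧ (P.map PEm).sum = F.val ∧
    (P.map ends).sum = E

lemma sum_sing {α β : Type*} (T : Multiset α) (f : α → β) :
    (T.map (fun A => ({f A} : Multiset β))).sum = T.map f := by
  rw [← Multiset.sum_map_singleton (T.map f), Multiset.map_map]
  rfl

lemma mem_msum {α β : Type*} (T : Multiset α) (f : α → Multiset β) (y : β) :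
    y ∈ (T.map f).sum ↔ ∃ A ∈ T, y ∈ f A := by
  induction T using Multiset.induction with
  | empty => simp
  | cons a T ih => simp [ih]

lemma chain {ι : Type*} (h l : ι → V) (Fr : Set V) : ∀ (k : ℕ) (J : Finset ι) (x : V),
    J.card = k → Set.InjOn h J → (∀ j ∈ J, h j ≠ x) →
    (∀ v, (v = x ∨ ∃ j ∈ J, v = h j) → v ∈ Fr ∨ ∃ j ∈ J, v = l j) →
    ∃ S ⊆ J, ∃ y ∈ Fr, S.val.map l + {y} = S.val.map h + {x} := by
  classical
  intro k
  induction k with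
  | zero =>
    intro J x hJ _ _ hc
    rw [Finset.card_eq_zero] at hJ
    subst hJ
    rcases hc x (Or.inl rfl) with h | ⟨j, hj, _⟩
    · exact ⟨∅, by simp, x, h, by simp⟩
    · simp at hj
  | succ k ih =>
    intro J x hJ hinj hx hc
    rcases hc x (Or.inl rfl) with h' | ⟨j, hj, hjx⟩
    · exact ⟨∅, by simp, x, h', by simp⟩
    obtain ⟨S, hS, y, hy, he⟩ := ih (J.erase j) (h j) (by rw [Finset.card_erase_of_mem hj]; omega)
      (hinj.mono (by simp))
      (by
        intro i hi hij
        rw [Finset.mem_erase] at hi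
        exact hi.1 (hinj (by simpa using hi.2) (by simpa using hj) hij))
      (by
        rintro v hv
        have hv' : ∃ i ∈ J, v = h i := by
          rcases hv with rfl | ⟨i, hi, rfl⟩
          · exact ⟨j, hj, rfl⟩
          · exact ⟨i, (Finset.mem_erase.1 hi).2, rfl⟩
        rcases hc v (Or.inr hv') with h1 | ⟨i, hi, hvi⟩
        · exact Or.inl h1
        · right
          refine ⟨i, Finset.mem_erase.2 ⟨?_, hi⟩, hvi⟩
          rintro rfl
          obtain ⟨i', hi', e⟩ := hv'
          exact hx i' hi' (by rw [← e, hvi, hjx]))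
    have hjS : j ∉ S := fun h => by simpa using hS h
    refine ⟨insert j S, ?_, y, hy, ?_⟩
    · intro i hi
      rcases Finset.mem_insert.1 hi with rfl | hi
      · exact hj
      · exact (Finset.mem_erase.1 (hS hi)).2
    · rw [Finset.insert_val_of_notMem hjS, Multiset.map_cons, Multiset.map_cons, Multiset.cons_add,
        he, ← hjx, ← Multiset.singleton_add, ← Multiset.singleton_add]
      abel

lemma add_edge {F : Finset (Sym2 V)} {E : Multiset V} {x b : V} (hD : Dec F (E + {x}))
    (hbx : s(b, x) ∉ F) (hne : b ≠ x) (hN : ∀ v, s(b, v) ∈ F → v ∈ E + {x}) :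
    ∃ P : Multiset (List V), (∀ p ∈ P, p ≠ [] ∧ p.Nodup) ∧ (P.map PEm).sum = s(b, x) ::ₘ F.val ∧
    (P.map ends).sum = E + {b} := by
  classical
  obtain ⟨P, hP, hF, hE⟩ := hD
  set PB := P.filter (b ∈ ·) with hPB
  set PR := P.filter (b ∉ ·) with hPR
  have hPP : PB + PR = P := Multiset.filter_add_not _ _
  have hex : ∀ p : List V, ∃ AB : List V × List V, b ∈ p → p = AB.1.reverse ++ b :: AB.2 := by
    intro p
    by_cases h : b ∈ p
    · obtain ⟨s, t, rfl⟩ := List.append_of_mem h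
      exact ⟨(s.reverse, t), fun _ => by simp⟩
    · exact ⟨([], []), fun h' => absurd h' h⟩
  choose q hq using hex
  set side : List V → Multiset (Sym2 V) := fun A => PEm (b :: A) with hside
  set l : List V → V := fun A => A.getLast?.getD b with hl
  set h : List V → V := fun A => A.head?.getD b with hh
  have hpe : ∀ A B : List V, PEm (A.reverse ++ b :: B) = side A + side B := by
    intro A B
    simp only [PEm, hside]
    rw [PE_append, ← Multiset.coe_add, ← List.reverse_cons, PE_reverse, Multiset.coe_reverse]
  have hen : ∀ A B : List V, ends (A.reverse ++ b :: B) = {l A} + {l B} := by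
    intro A B
    simp only [ends, hl]
    rw [List.head?_append, List.getLast?_append, List.head?_reverse, List.getLast?_cons]
    cases A.getLast? <;> cases B.getLast? <;> simp <;> rfl
  obtain ⟨T, hT⟩ : ∃ T : Multiset (List V),
    T = PB.map (fun p => (q p).1) + PB.map (fun p => (q p).2) := ⟨_, rfl⟩
  have hTsum : ∀ (M : Type u) [AddCommMonoid M] (φ : List V → M),
      (PB.map (fun p => φ (q p).1 + φ (q p).2)).sum = (T.map φ).sum := by
    intro M _ φ
    rw [hT, Multiset.map_add, Multiset.sum_add, Multiset.map_map, Multiset.map_map,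
      Multiset.sum_map_add]
    rfl
  have hbp : ∀ p ∈ PB, p = (q p).1.reverse ++ b :: (q p).2 := by
    intro p hp
    exact hq p (Multiset.mem_filter.1 hp).2
  have hF1 : (T.map side).sum + (PR.map PEm).sum = F.val := by
    rw [← hF, ← hPP, Multiset.map_add, Multiset.sum_add, ← hTsum]
    congr 2
    apply Multiset.map_congr rfl
    intro p hp
    conv_rhs => rw [hbp p hp]
    rw [hpe]
  have hE1 : (T.map (fun A => ({l A} : Multiset V))).sum + (PR.map ends).sum = E + {x} := by
    rw [← hE, ← hPP, Multiset.map_add, Multiset.sum_add, ← hTsum]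
    congr 2
    apply Multiset.map_congr rfl
    intro p hp
    conv_rhs => rw [hbp p hp]
    rw [hen]
  rw [sum_sing] at hE1
  have hTm : ∀ A ∈ T, A.Nodup ∧ b ∉ A := by
    intro A hA
    rw [hT, Multiset.mem_add, Multiset.mem_map, Multiset.mem_map] at hA
    rcases hA with ⟨p, hp, rfl⟩ | ⟨p, hp, rfl⟩
    all_goals
      have h1 := (hP p (Multiset.mem_filter.1 hp).1).2
      rw [hbp p hp, List.nodup_append, List.nodup_cons, List.nodup_reverse] at h1
      refine ⟨by tauto, ?_⟩
    · intro hb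
      exact h1.2.2 b (by simpa using hb) b (by simp) rfl
    · exact h1.2.1.1
  -- nonempty sides
  set T1 := T.filter (· ≠ []) with hT1
  have hhook : ∀ A : List V, A ≠ [] → s(b, h A) ∈ side A := by
    intro A hA
    cases A with
    | nil => exact absurd rfl hA
    | cons a A => simp [hside, PEm, hh]
  have hnd : (T.map side).sum.Nodup := by
    have := F.nodup
    rw [← hF1] at this
    exact (Multiset.nodup_add.1 this).1
  have hT1h : (T1.map (fun A => s(b, h A))).Nodup := by
    refine Multiset.nodup_of_le ?_ hnd
    have : (T1.map (fun A => ({s(b, h A)} : Multiset (Sym2 V)))).sum ≤ (T1.map side).sum := by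
      apply Multiset.sum_map_le_sum_map
      intro A hA
      rw [Multiset.singleton_le]
      exact hhook A (Multiset.mem_filter.1 hA).2
    rw [sum_sing] at this
    refine this.trans ?_
    have h2 : T1 + T.filter (fun A => ¬ A ≠ []) = T := Multiset.filter_add_not _ _
    conv_rhs => rw [← h2]
    rw [Multiset.map_add, Multiset.sum_add]
    exact Multiset.le_add_right _ _
  have hT1n : T1.Nodup := Multiset.Nodup.of_map _ hT1h
  set J := T1.toFinset with hJ
  have hJT : J.val = T1 := Multiset.toFinset_val _ |>.trans (Multiset.dedup_eq_self.2 hT1n)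
  have hJm : ∀ A, A ∈ J ↔ A ∈ T ∧ A ≠ [] := by
    intro A; rw [hJ, Multiset.mem_toFinset, hT1, Multiset.mem_filter]
  have hinj : Set.InjOn h J := by
    intro A hA B hB hAB
    have := Multiset.inj_on_of_nodup_map hT1h A (by simpa [hJ] using hA) B (by simpa [hJ] using hB)
    exact this (by rw [hAB])
  have hJF : ∀ A ∈ J, s(b, h A) ∈ F := by
    intro A hA
    have h1 := (hJm A).1 hA
    rw [← Finset.mem_val, ← hF1, Multiset.mem_add]
    left
    rw [mem_msum]
    exact ⟨A, h1.1, hhook A h1.2⟩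
  have hhb : ∀ A ∈ J, h A ≠ b := by
    intro A hA
    have h1 := (hJm A).1 hA
    have h2 := (hTm A h1.1).2
    cases A with
    | nil => exact absurd rfl h1.2
    | cons a A => simp [hh]; rintro rfl; simp at h2
  obtain ⟨S, hSJ, y, hy, hS⟩ := chain h l {v | v ∈ (PR.map ends).sum} J.card J x rfl hinj
    (by
      intro A hA he
      have := hJF A hA
      rw [he] at this
      exact hbx this)
    (by
      intro v hv
      have h1 : v ∈ E + {x} ∧ v ≠ b := by
        rcases hv with rfl | ⟨A, hA, rfl⟩
        · exact ⟨by simp, hne.symm⟩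
        · exact ⟨hN _ (hJF A hA), hhb A hA⟩
      rw [← hE1, Multiset.mem_add] at h1
      rcases h1.1 with h2 | h2
      · right
        obtain ⟨A, hA, rfl⟩ := Multiset.mem_map.1 h2
        refine ⟨A, (hJm A).2 ⟨hA, ?_⟩, rfl⟩
        rintro rfl
        exact h1.2 (by simp [hl])
      · exact Or.inl h2)
  set g : List V → List V := fun A => if A ∈ S then A.reverse else A with hg
  obtain ⟨U, hU⟩ : ∃ U, T = S.val + U := by
    apply Multiset.le_iff_exists_add.1
    calc S.val ≤ J.val := Finset.val_le_iff.2 hSJ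
      _ = T1 := hJT
      _ ≤ T := Multiset.filter_le _ _
  have hUS : ∀ A ∈ U, A ∉ S := by
    intro A hA hAS
    have h1 := (hJm A).1 (hSJ hAS)
    have h2 : T1.count A = T.count A := by
      rw [hT1]; exact Multiset.count_filter_of_pos (p := fun A => A ≠ []) h1.2
    have h3 := Multiset.nodup_iff_count_le_one.1 hT1n A
    rw [h2, hU, Multiset.count_add] at h3
    have h4 := Multiset.count_pos.2 hA
    have h5 := Multiset.count_pos.2 (Finset.mem_def.1 hAS)
    omega
  have hmapg : ∀ (M : Type u) (φ : List V → M), T.map (fun A => φ (g A)) =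
      S.val.map (fun A => φ A.reverse) + U.map φ := by
    intro M φ
    rw [hU, Multiset.map_add]
    congr 1
    · apply Multiset.map_congr rfl
      intro A hA
      simp only [hg, if_pos (Finset.mem_def.2 hA)]
    · apply Multiset.map_congr rfl
      intro A hA
      simp only [hg, if_neg (hUS A hA)]
  have hsr : ∀ A : List V, A ≠ [] → side A.reverse = {s(b, l A)} + PEm A ∧
      side A = {s(b, h A)} + PEm A := by
    intro A hA
    have e1 : l A = A.getLast hA := by simp [hl, List.getLast?_eq_getLast_of_ne_nil hA]
    have e2 : h A = A.head hA := by simp [hh, List.head?_eq_some_head hA]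
    constructor
    · simp only [hside, PEm]
      rw [PE_cons' _ _ (by simpa using hA), PE_reverse, List.head_reverse, e1]
      rw [← Multiset.cons_coe, Multiset.coe_reverse, Multiset.singleton_add]
    · simp only [hside, PEm]
      rw [PE_cons' _ _ hA, e2]
      rw [← Multiset.cons_coe, Multiset.singleton_add]
  have hSne : ∀ A ∈ S, A ≠ [] := fun A hA => ((hJm A).1 (hSJ hA)).2
  have eq1 : (S.val.map (fun A => side A.reverse)).sum =
      S.val.map (fun A => s(b, l A)) + (S.val.map PEm).sum := by
    rw [← sum_sing S.val (fun A => s(b, l A)),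
      ← Multiset.sum_map_add]
    congr 1
    apply Multiset.map_congr rfl
    intro A hA
    exact (hsr A (hSne A hA)).1
  have eq2 : (S.val.map side).sum =
      S.val.map (fun A => s(b, h A)) + (S.val.map PEm).sum := by
    rw [← sum_sing S.val (fun A => s(b, h A)),
      ← Multiset.sum_map_add]
    congr 1
    apply Multiset.map_congr rfl
    intro A hA
    exact (hsr A (hSne A hA)).2
  have eq3 : S.val.map (fun A => s(b, l A)) + {s(b, y)} =
      S.val.map (fun A => s(b, h A)) + {s(b, x)} := by
    have := congrArg (Multiset.map (fun v => s(b, v))) hS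
    simpa [Multiset.map_map, Function.comp_def] using this
  have key1 : (T.map (fun A => side (g A))).sum + {s(b, y)} = (T.map side).sum + {s(b, x)} := by
    rw [hmapg, Multiset.sum_add, eq1]
    conv_rhs => rw [hU, Multiset.map_add, Multiset.sum_add, eq2]
    calc _ = (S.val.map (fun A => s(b, l A)) + {s(b, y)}) + (S.val.map PEm).sum +
          (U.map side).sum := by abel
      _ = _ := by rw [eq3]; abel
  have eq4 : S.val.map (fun A => l A.reverse) = S.val.map h := by
    apply Multiset.map_congr rfl
    intro A hA
    simp [hl, hh]
  have key2 : T.map (fun A => l (g A)) + {x} = T.map l + {y} := by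
    rw [hmapg, eq4]
    conv_rhs => rw [hU, Multiset.map_add]
    calc _ = (S.val.map h + {x}) + U.map l := by abel
      _ = _ := by rw [← hS]; abel
  -- the b-avoiding path ending in y
  have hy' : y ∈ (PR.map ends).sum := hy
  rw [mem_msum] at hy'
  obtain ⟨r, hr, hyr⟩ := hy'
  have hrb : b ∉ r := (Multiset.mem_filter.1 hr).2
  have hrn := hP r (Multiset.mem_filter.1 hr).1
  obtain ⟨PR', hPR'⟩ := Multiset.exists_cons_of_mem hr
  obtain ⟨r', hr1, hr2, hr3⟩ : ∃ r' : List V, (r' ≠ [] ∧ r'.Nodup) ∧ PEm r' = {s(b, y)} + PEm r ∧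
      ends r' + {y} = ends r + {b} := by
    have hh1 := List.head?_eq_some_head hrn.1
    have hh2 := List.getLast?_eq_getLast_of_ne_nil hrn.1
    simp only [ends, hh1, hh2, Option.toList_some, List.singleton_append, Multiset.mem_coe,
      List.mem_cons, List.not_mem_nil, or_false] at hyr
    rcases hyr with hyr | hyr
    · refine ⟨b :: r, ⟨by simp, List.nodup_cons.2 ⟨hrb, hrn.2⟩⟩, ?_, ?_⟩
      · simp only [PEm]
        rw [PE_cons' _ _ hrn.1, ← hyr, ← Multiset.cons_coe, Multiset.singleton_add]
      · simp only [ends, hh1, hh2, List.head?_cons, List.getLast?_cons, ← hyr]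
        simp only [Option.toList_some, Option.getD_some, List.singleton_append]
        rw [← Multiset.coe_singleton, ← Multiset.coe_singleton, Multiset.coe_add, Multiset.coe_add,
          Multiset.coe_eq_coe]
        exact List.perm_iff_count.2 (fun z => by simp [List.count_cons]; omega)
    · refine ⟨r ++ [b], ⟨by simp, ?_⟩, ?_, ?_⟩
      · rw [List.nodup_append]
        refine ⟨hrn.2, by simp, ?_⟩
        intro a ha c hc
        simp only [List.mem_singleton] at hc
        subst hc
        rintro rfl
        exact hrb ha
      · simp only [PEm]
        rw [PE_concat' _ _ hrn.1, ← hyr, ← Multiset.coe_add, add_comm, Multiset.coe_singleton,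
          Sym2.eq_swap]
      · simp only [ends, List.head?_append, hh1, hh2, List.getLast?_append, ← hyr]
        simp only [Option.toList_some, List.singleton_append, Option.some_or,
          List.getLast?_singleton]
        rw [← Multiset.coe_singleton, ← Multiset.coe_singleton, Multiset.coe_add, Multiset.coe_add,
          Multiset.coe_eq_coe]
        exact List.perm_iff_count.2 (fun z => by simp [List.count_cons]; omega)
  refine ⟨PB.map (fun p => (g (q p).1).reverse ++ b :: g (q p).2) + (r' ::ₘ PR'), ?_, ?_, ?_⟩
  · intro p hp
    rcases Multiset.mem_add.1 hp with hp | hp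
    · obtain ⟨p', hp', rfl⟩ := Multiset.mem_map.1 hp
      have h1 := (hP p' (Multiset.mem_filter.1 hp').1).2
      refine ⟨by simp, ?_⟩
      rw [hbp p' hp'] at h1
      have hgp : ∀ A : List V, (g A).Perm A := by
        intro A
        simp only [hg]
        split_ifs
        · exact List.reverse_perm A
        · rfl
      refine (List.Perm.nodup_iff ?_).1 h1
      exact List.Perm.append ((List.reverse_perm _).trans
        ((hgp _).symm.trans (List.reverse_perm _).symm)) ((hgp _).symm.cons _)
    · rcases Multiset.mem_cons.1 hp with rfl | hp
      · exact hr1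
      · have : p ∈ PR := by rw [hPR']; exact Multiset.mem_cons_of_mem hp
        exact hP p (Multiset.mem_filter.1 this).1
  · rw [Multiset.map_add, Multiset.sum_add, Multiset.map_map]
    have e1 : (PB.map (PEm ∘ fun p => (g (q p).1).reverse ++ b :: g (q p).2)).sum =
        (T.map (fun A => side (g A))).sum := by
      rw [← hTsum]
      congr 1
      apply Multiset.map_congr rfl
      intro p _
      exact hpe _ _
    rw [e1, Multiset.map_cons, Multiset.sum_cons, hr2]
    rw [hPR', Multiset.map_cons, Multiset.sum_cons] at hF1
    calc _ = ((T.map (fun A => side (g A))).sum + {s(b, y)}) + (PEm r + (PR'.map PEm).sum) := by abel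
      _ = {s(b, x)} + ((T.map side).sum + (PEm r + (PR'.map PEm).sum)) := by rw [key1]; abel
      _ = _ := by rw [hF1, Multiset.singleton_add]
  · rw [Multiset.map_add, Multiset.sum_add, Multiset.map_map]
    have e1 : (PB.map (ends ∘ fun p => (g (q p).1).reverse ++ b :: g (q p).2)).sum =
        T.map (fun A => l (g A)) := by
      rw [← sum_sing T (fun A => l (g A))]
      have := hTsum (Multiset V) (fun A => {l (g A)})
      refine Eq.trans ?_ this
      congr 1
      apply Multiset.map_congr rfl
      intro p _
      exact hen _ _
    rw [e1, Multiset.map_cons, Multiset.sum_cons]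
    rw [hPR', Multiset.map_cons, Multiset.sum_cons] at hE1
    apply add_right_cancel (b := {x} + {y})
    calc _ = (T.map (fun A => l (g A)) + {x}) + (ends r' + {y}) + (PR'.map ends).sum := by abel
      _ = (T.map l + (ends r + (PR'.map ends).sum)) + {y} + {b} := by rw [key2, hr3]; abel
      _ = _ := by rw [hE1]; abel

end FC


namespace FC

universe u

variable {V : Type u}

open Classical in
noncomputable def dg (F : Finset (Sym2 V)) (v : V) : ℕ := (F.filter (v ∈ ·)).card

lemma dg_pos {F : Finset (Sym2 V)} {u v : V} (h : s(u, v) ∈ F) : 0 < dg F v := by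
  classical
  exact Finset.card_pos.2 ⟨_, Finset.mem_filter.2 ⟨h, by simp⟩⟩

lemma dg_exists {F : Finset (Sym2 V)} {u : V} (h : 0 < dg F u) : ∃ b, s(u, b) ∈ F := by
  classical
  obtain ⟨e, he⟩ := Finset.card_pos.1 h
  have he' := Finset.mem_filter.1 he
  obtain ⟨b, rfl⟩ := Sym2.mem_iff_exists.1 he'.2
  exact ⟨b, he'.1⟩

lemma dg_erase [DecidableEq (Sym2 V)] {F : Finset (Sym2 V)} {e : Sym2 V} (h : e ∈ F) (v : V)
    [Decidable (v ∈ e)] :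
    dg (F.erase e) v + (if v ∈ e then 1 else 0) = dg F v := by
  classical
  unfold dg
  by_cases hv : v ∈ e
  · rw [if_pos hv, Finset.filter_erase, Finset.card_erase_of_mem (by simp [h, hv])]
    have : 0 < (F.filter (v ∈ ·)).card := Finset.card_pos.2 ⟨e, by simp [h, hv]⟩
    omega
  · rw [if_neg hv, Finset.filter_erase, Finset.erase_eq_of_notMem (by simp [hv])]
    rfl

lemma Dec_empty [DecidableEq V] : ∀ (k : ℕ) (E : Multiset V), E.card = k → (∀ v, E.count v % 2 = 0) →
    Dec (∅ : Finset (Sym2 V)) E := by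
  classical
  intro k
  induction k using Nat.strong_induction_on with
  | _ k ih =>
    intro E hk hE
    rcases E.empty_or_exists_mem with rfl | ⟨v, hv⟩
    · exact ⟨0, by simp, by simp, by simp⟩
    · obtain ⟨E1, rfl⟩ := Multiset.exists_cons_of_mem hv
      have h1 : v ∈ E1 := by
        by_contra h
        have h2 := hE v
        rw [Multiset.count_cons_self, Multiset.count_eq_zero.2 h] at h2
        simp at h2
      obtain ⟨E2, rfl⟩ := Multiset.exists_cons_of_mem h1
      obtain ⟨P, p1, p2, p3⟩ := ih E2.card (by rw [← hk]; simp only [Multiset.card_cons]; omega) E2 rfl (by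
        intro w
        have := hE w
        simp only [Multiset.count_cons] at this
        split_ifs at this <;> omega)
      refine ⟨[v] ::ₘ P, ?_, ?_, ?_⟩
      · intro p hp
        rcases Multiset.mem_cons.1 hp with rfl | hp
        · simp
        · exact p1 p hp
      · rw [Multiset.map_cons, Multiset.sum_cons, p2]
        simp [PEm]
      · rw [Multiset.map_cons, Multiset.sum_cons, p3]
        simp only [ends, List.head?_cons, List.getLast?_singleton, Option.toList_some,
          List.singleton_append]
        rw [← Multiset.cons_coe, Multiset.cons_add, Multiset.coe_singleton, Multiset.singleton_add]

lemma Dec_step [DecidableEq (Sym2 V)] {F : Finset (Sym2 V)} {E : Multiset V} {x b : V}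
    (hD : Dec (F.erase s(b, x)) (E + {x}))
    (hbx : s(b, x) ∈ F) (hne : b ≠ x)
    (hN : ∀ v, s(b, v) ∈ F.erase s(b, x) → v ∈ E + {x}) : Dec F (E + {b}) := by
  obtain ⟨P, h1, h2, h3⟩ := add_edge hD (by simp) hne hN
  refine ⟨P, h1, ?_, h3⟩
  rw [h2, Finset.erase_val, Multiset.cons_erase hbx]

/-- path decomposition with prescribed ends -/
theorem thmL [DecidableEq V] : ∀ (k : ℕ) (F : Finset (Sym2 V)) (E : Multiset V), F.card = k →
    (∀ e ∈ F, ¬ e.IsDiag) → (∀ v, (E.count v + dg F v) % 2 = 0) →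
    (∀ u v, E.count u = 0 → 0 < dg F u → E.count v = 0 → 0 < dg F v → u = v) → Dec F E := by
  classical
  intro k
  induction k with
  | zero =>
    intro F E hk hd hpar hbad
    rw [Finset.card_eq_zero] at hk
    subst hk
    apply Dec_empty _ E rfl
    intro v
    have := hpar v
    simp only [dg, Finset.filter_empty, Finset.card_empty, add_zero] at this
    exact this
  | succ k ih =>
    intro F E hk hd hpar hbad
    obtain ⟨x, b, hbx, hx⟩ : ∃ x b, s(b, x) ∈ F ∧ ∀ v, v ≠ x → 0 < dg F v → E.count v ≠ 0 := by
      by_cases h : ∃ u, E.count u = 0 ∧ 0 < dg F u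
      · obtain ⟨u, hu, hu'⟩ := h
        obtain ⟨b, he⟩ := dg_exists hu'
        exact ⟨u, b, by rw [Sym2.eq_swap]; exact he, fun v hv h h0 => hv (hbad v u h0 h hu hu')⟩
      · push Not at h
        obtain ⟨e, he⟩ := Finset.card_pos.1 (show 0 < F.card by omega)
        induction e with
        | h b x => exact ⟨x, b, he, fun v _ h' h0 => by have := h v h0; omega⟩
    have hne : b ≠ x := by
      have := hd _ hbx
      simpa using this
    have hb : b ∈ E := Multiset.count_pos.1 (Nat.pos_of_ne_zero
      (hx b hne (dg_pos (u := x) (by rw [Sym2.eq_swap]; exact hbx))))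
    obtain ⟨E0, rfl⟩ := Multiset.exists_cons_of_mem hb
    rw [← Multiset.singleton_add, add_comm] at *
    have hde := dg_erase hbx
    have hcount : ∀ v, (E0 + {x}).count v = E0.count v + if v = x then 1 else 0 := by
      intro v; rw [Multiset.count_add, Multiset.count_singleton]
    have hcountb : ∀ v, (E0 + {b}).count v = E0.count v + if v = b then 1 else 0 := by
      intro v; rw [Multiset.count_add, Multiset.count_singleton]
    refine Dec_step (ih _ _ (by rw [Finset.card_erase_of_mem hbx]; omega) ?_ ?_ ?_) hbx hne ?_
    · intro e he
      exact hd e (Finset.mem_of_mem_erase he)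
    · intro v
      have h1 := hde v
      have h2 := hpar v
      rw [hcountb] at h2
      rw [hcount]
      simp only [Sym2.mem_iff] at h1
      by_cases hv : v = b
      · subst hv; simp [hne] at h1 h2 ⊢; omega
      · by_cases hv' : v = x
        · subst hv'; simp [hv] at h1 h2 ⊢; omega
        · simp [hv, hv'] at h1 h2 ⊢; omega
    · have key : ∀ v, (E0 + {x}).count v = 0 → 0 < dg (F.erase s(b, x)) v → v = b := by
        intro v h1 h2
        by_contra hv
        have h3 := hde v
        rw [hcount] at h1
        by_cases hv' : v = x
        · simp [hv'] at h1
        · have := hx v hv' (by omega)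
          rw [hcountb] at this
          simp [hv] at this
          simp [this] at h1
      intro u v h1 h2 h3 h4
      rw [key u h1 h2, key v h3 h4]
    · intro v hv
      have hvx : v ≠ x := by rintro rfl; simp at hv
      have hF := Finset.mem_of_mem_erase hv
      have := hx v hvx (dg_pos hF)
      have hvb : v ≠ b := by
        rintro rfl
        exact hd _ hF (by simp)
      rw [hcountb] at this
      rw [← Multiset.count_pos, hcount]
      simp [hvb] at this
      have := Multiset.count_pos.2 this
      omega

end FC


namespace FC

universe u

variable {V : Type u}

lemma dg_filter_par [DecidableEq V] (H : Finset (Sym2 V)) (M : Multiset (Sym2 V))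
    (hM : ∀ e ∈ M, e ∈ H) (v : V) :
    (dg (H.filter (fun e => Even (M.count e))) v + dg H v + M.countP (v ∈ ·)) % 2 = 0 := by
  classical
  have h1 : M.countP (v ∈ ·) = ∑ e ∈ H.filter (v ∈ ·), M.count e := by
    rw [Multiset.countP_eq_card_filter, ← Multiset.sum_count_eq_card (s := H.filter (v ∈ ·))]
    · apply Finset.sum_congr rfl
      intro e he
      exact (Multiset.count_filter_of_pos (p := fun x => v ∈ x) (Finset.mem_filter.1 he).2)
    · intro e he
      rw [Multiset.mem_filter] at he
      exact Finset.mem_filter.2 ⟨hM e he.1, he.2⟩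
  have h2 := Finset.odd_sum_iff_odd_card_odd (s := H.filter (v ∈ ·)) (fun e => M.count e)
  rw [← h1] at h2
  have h3 : dg H v = (H.filter (v ∈ ·)).card := by
    unfold dg; congr 1; ext e; simp
  have h4 : dg (H.filter (fun e => Even (M.count e))) v =
      ((H.filter (v ∈ ·)).filter (fun e => Even (M.count e))).card := by
    unfold dg; congr 1; ext e; simp; tauto
  have h5 : ((H.filter (v ∈ ·)).filter (fun e => Odd (M.count e))).card =
      ((H.filter (v ∈ ·)).filter (fun e => ¬ Even (M.count e))).card := by
    congr 1; ext e; simp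
  have h6 := Finset.card_filter_add_card_filter_not (s := H.filter (v ∈ ·))
    (fun e => Even (M.count e))
  rw [h5] at h2
  rw [← h3, ← h4] at h6
  rw [Nat.odd_iff, Nat.odd_iff] at h2
  omega

lemma dg_le_filter [DecidableEq V] (H : Finset (Sym2 V)) (p : Sym2 V → Prop) [DecidablePred p] (v : V) :
    dg (H.filter p) v ≤ dg H v := by
  classical
  unfold dg
  apply Finset.card_le_card
  intro e he
  simp only [Finset.mem_filter] at he ⊢
  exact ⟨he.1.1, he.2⟩

lemma ends_eq {p : List V} (hp : p ≠ []) : ends p = {p.head hp} + {p.getLast hp} := by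
  simp only [ends, List.head?_eq_some_head hp, List.getLast?_eq_getLast_of_ne_nil hp,
    Option.toList_some, List.singleton_append]
  rfl

lemma ends_card {p : List V} (hp : p ≠ []) : (ends p).card = 2 := by
  rw [ends_eq hp]; simp

lemma asm [DecidableEq V] {G : SimpleGraph V} {b1 : V} {U : Finset V} (hb1 : b1 ∉ U)
    (hadj : ∀ u ∈ U, G.Adj b1 u) {H : Finset (Sym2 V)}
    (hH : ∀ e ∈ H, e ∈ G.edgeSet ∧ ∀ v ∈ e, v ∈ U)
    (hG : ∀ x y, G.Adj x y → s(x, y) ∈ H ∨ x = b1 ∨ y = b1) (hb1' : ∀ y, G.Adj b1 y → y ∈ U)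
    (hz : ∀ u ∈ U, ∃ z ∈ U, G.Adj u z) {C : List (List V)} (hC : ∀ c ∈ C, IsCyc G c)
    {M : Multiset (Sym2 V)} (hM : ∀ e ∈ M, e ∈ H ∧ cov C e) {E : Multiset V}
    (hEU : ∀ v ∈ E, v ∈ U)
    (hpar : ∀ v, (E.count v + dg H v + M.countP (v ∈ ·)) % 2 = 0)
    (hbad : ∀ u ∈ U, ∀ v ∈ U, E.count u = 0 → E.count v = 0 → u = v)
    (hcov : ∀ u ∈ U, u ∈ E ∨ cov C s(b1, u)) :
    ∃ L : List (List V), (∀ c ∈ L, IsCyc G c) ∧ (∀ e ∈ G.edgeSet, cov L e) ∧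
      2 * L.length = 2 * C.length + E.card := by
  classical
  have hdU : ∀ v, 0 < dg H v → v ∈ U := by
    intro v hv
    obtain ⟨b, hb⟩ := dg_exists hv
    exact (hH _ hb).2 v (by simp)
  set F := H.filter (fun e => Even (M.count e)) with hF
  have hFle : ∀ v, dg F v ≤ dg H v := fun v => dg_le_filter _ _ _
  obtain ⟨P, p1, p2, p3⟩ : Dec F E := by
    apply thmL _ F E rfl
    · intro e he
      have := (hH e (Finset.mem_filter.1 he).1).1
      exact G.not_isDiag_of_mem_edgeSet this
    · intro v
      have h1 := dg_filter_par H M (fun e he => (hM e he).1) v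
      have h2 := hpar v
      rw [← hF] at h1
      omega
    · intro u v h1 h2 h3 h4
      exact hbad u (hdU u (lt_of_lt_of_le h2 (hFle u))) v (hdU v (lt_of_lt_of_le h4 (hFle v))) h1 h3
  have hpF : ∀ p ∈ P, ∀ e ∈ PE p, e ∈ F := by
    intro p hp e he
    rw [Finset.mem_def, ← p2, mem_msum]
    exact ⟨p, hp, he⟩
  have hpE : ∀ p ∈ P, ∀ v ∈ ends p, v ∈ E := by
    intro p hp v hv
    rw [← p3, mem_msum]
    exact ⟨p, hp, hv⟩
  have hpU : ∀ p ∈ P, ∀ v ∈ p, v ∈ U := by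
    intro p hp v hv
    match p, hp, hv with
    | [a], hp, hv =>
      apply hEU
      apply hpE _ hp
      simp at hv
      simp [ends, hv]
    | a :: b :: l, hp, hv =>
      have : ∀ (l : List V) (a b v : V), v ∈ a :: b :: l → ∃ e ∈ PE (a :: b :: l), v ∈ e := by
        intro l
        induction l with
        | nil => intro a b v hv; simp at hv; simp [hv]
        | cons c l ih =>
          intro a b v hv
          rcases List.mem_cons.1 hv with rfl | hv
          · exact ⟨s(v, b), by simp, by simp⟩
          · obtain ⟨e, he, hve⟩ := ih b c v hv
            exact ⟨e, List.mem_cons_of_mem _ he, hve⟩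
      obtain ⟨e, he, hve⟩ := this l a b v hv
      exact (hH e (Finset.mem_filter.1 (hpF _ hp e he)).1).2 v hve
  have hcyc : ∀ p : List V, ∃ c : List V, p ∈ P → IsCyc G c ∧ (∀ e ∈ PE p, e ∈ CE c) ∧
      ∀ v ∈ ends p, s(b1, v) ∈ CE c := by
    intro p
    by_cases hp : p ∈ P
    swap
    · exact ⟨[], fun h => absurd h hp⟩
    obtain ⟨hne, hnd⟩ := p1 p hp
    have hbp : b1 ∉ p := fun h => hb1 (hpU p hp _ h)
    by_cases hlen : p.length = 1
    · obtain ⟨v, rfl⟩ := List.length_eq_one_iff.1 hlen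
      have hv := hpU _ hp v (by simp)
      obtain ⟨z, hzU, hvz⟩ := hz v hv
      refine ⟨[b1, v, z], fun _ => ⟨⟨?_, by simp, ?_⟩, by simp, ?_⟩⟩
      · have h1 := (hadj v hv).ne
        have h2 := (hadj z hzU).ne
        have h3 := hvz.ne
        simp; grind
      · intro e he
        simp [CE] at he
        rcases he with rfl | rfl | rfl
        · exact hadj v hv
        · exact hvz
        · exact (hadj z hzU).symm
      · intro w hw
        simp [ends] at hw
        subst hw
        simp [CE]
    · have hCE : CE (b1 :: p) = s(b1, p.head hne) :: (PE p ++ [s(p.getLast hne, b1)]) :=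
        PE_wrap b1 b1 p hne
      refine ⟨b1 :: p, fun _ => ⟨⟨List.nodup_cons.2 ⟨hbp, hnd⟩, ?_, ?_⟩, ?_, ?_⟩⟩
      · have := List.length_pos_iff.2 hne
        simp only [List.length_cons]; omega
      · intro e he
        rw [hCE] at he
        simp only [List.mem_cons, List.mem_append, List.not_mem_nil, or_false] at he
        rcases he with rfl | he | rfl
        · exact hadj _ (hpU p hp _ (List.head_mem _))
        · exact (hH e (Finset.mem_filter.1 (hpF _ hp e he)).1).1
        · exact (hadj _ (hpU p hp _ (List.getLast_mem _))).symm
      · intro e he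
        rw [hCE]
        exact List.mem_cons_of_mem _ (List.mem_append_left _ he)
      · intro v hv
        rw [ends_eq hne] at hv
        rw [hCE]
        rcases Multiset.mem_add.1 hv with hv | hv
        · rw [Multiset.mem_singleton] at hv
          rw [hv]; exact List.mem_cons_self ..
        · rw [Multiset.mem_singleton] at hv
          rw [hv, Sym2.eq_swap]
          exact List.mem_cons_of_mem _ (List.mem_append_right _ (by simp))
  choose cy hcy using hcyc
  have covH : ∀ e ∈ H, cov (C ++ P.toList.map cy) e := by
    intro e he
    rw [cov_append]
    by_cases hev : Even (M.count e)
    · right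
      have h1 : e ∈ F := Finset.mem_filter.2 ⟨he, hev⟩
      rw [Finset.mem_def, ← p2, mem_msum] at h1
      obtain ⟨p, hp, hpe⟩ := h1
      exact ⟨cy p, List.mem_map_of_mem (by simpa using hp), (hcy p hp).2.1 e hpe⟩
    · left
      have : e ∈ M := by
        by_contra h
        rw [Multiset.count_eq_zero.2 h] at hev
        simp at hev
      exact (hM e this).2
  have covb : ∀ y, G.Adj b1 y → cov (C ++ P.toList.map cy) s(b1, y) := by
    intro y hy
    rw [cov_append]
    rcases hcov y (hb1' y hy) with h | h
    · right
      rw [← p3, mem_msum] at h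
      obtain ⟨p, hp, hpe⟩ := h
      exact ⟨cy p, List.mem_map_of_mem (by simpa using hp), (hcy p hp).2.2 y hpe⟩
    · exact Or.inl h
  refine ⟨C ++ P.toList.map cy, ?_, ?_, ?_⟩
  · intro c hc
    rcases List.mem_append.1 hc with h | h
    · exact hC c h
    · obtain ⟨p, hp, rfl⟩ := List.mem_map.1 h
      exact (hcy p (by simpa using hp)).1
  · intro e he
    induction e with
    | h x y =>
      rcases hG x y he with h | rfl | rfl
      · exact covH _ h
      · exact covb y he
      · rw [Sym2.eq_swap]; exact covb x (SimpleGraph.Adj.symm he)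
  · have h1 : E.card = 2 * P.card := by
      rw [← p3]
      have : ∀ P : Multiset (List V), (∀ p ∈ P, p ≠ []) → ((P.map ends).sum).card = 2 * P.card := by
        intro P
        induction P using Multiset.induction with
        | empty => simp
        | cons a P ih =>
          intro h
          rw [Multiset.map_cons, Multiset.sum_cons, Multiset.card_add,
            ends_card (h a (Multiset.mem_cons_self _ _)),
            ih (fun p hp => h p (Multiset.mem_cons_of_mem hp)), Multiset.card_cons]
          ring
      exact this P (fun p hp => (p1 p hp).1)
    simp only [List.length_append, List.length_map, Multiset.length_toList]
    omega

end FC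


namespace FC

universe u

variable {V : Type u}

lemma par_PE [DecidableEq V] (v : V) : ∀ p : List V, p.Nodup →
    ((PEm p).countP (v ∈ ·) + (ends p).count v) % 2 = 0 := by
  intro p
  induction p with
  | nil => simp [PEm, ends]
  | cons a l ih =>
    cases l with
    | nil => simp [PEm, ends, List.count_cons]; split_ifs <;> simp
    | cons b l =>
      intro h
      have hab : a ≠ b := by rintro rfl; simp at h
      have h1 := ih (List.nodup_cons.1 h).2
      have h2 : PEm (a :: b :: l) = s(a, b) ::ₘ PEm (b :: l) := rfl
      have h3 : ends (a :: b :: l) + {b} = ends (b :: l) + {a} := by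
        rw [ends_eq (by simp), ends_eq (by simp)]
        simp only [List.head_cons, List.getLast_cons_cons]
        abel
      have h4 := congrArg (Multiset.count v) h3
      rw [Multiset.count_add, Multiset.count_add, Multiset.count_singleton,
        Multiset.count_singleton] at h4
      rw [h2, Multiset.countP_cons]
      simp only [Sym2.mem_iff]
      by_cases hva : v = a
      · have hvb : v ≠ b := fun h => hab (hva.symm.trans h)
        simp only [hva, hab, if_true, if_false, true_or] at *
        omega
      · by_cases hvb : v = b
        · simp only [hvb, hab.symm, if_true, if_false, or_true] at *
          omega
        · simp only [hva, hvb, if_false, or_false] at *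
          omega

/-- a group of two paths -/
structure Grp (D : SimpleGraph V) (W : Finset V) (g : List V × List V) : Prop where
  nd : (g.1 ++ g.2).Nodup
  sub : ∀ v ∈ g.1 ++ g.2, v ∈ W
  e1 : ∀ e ∈ PE g.1, e ∈ D.edgeSet
  e2 : ∀ e ∈ PE g.2, e ∈ D.edgeSet
  ne : g.2 ≠ []

def gE (g : List V × List V) : Multiset (Sym2 V) := PEm g.1 + PEm g.2
def gX (g : List V × List V) : Multiset V := ends g.1 + ends g.2

lemma par_grps [DecidableEq V] {D : SimpleGraph V} {W : Finset V} (v : V) :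
    ∀ gs : List (List V × List V), (∀ g ∈ gs, Grp D W g) →
    ((gs.map gE).sum.countP (v ∈ ·) + (gs.map gX).sum.count v) % 2 = 0 := by
  intro gs
  induction gs with
  | nil => simp
  | cons g gs ih =>
    intro h
    have h1 := ih (fun g' hg' => h g' (List.mem_cons_of_mem _ hg'))
    have h2 := h g (List.mem_cons_self ..)
    have h3 := List.nodup_append.1 h2.nd
    have h4 := par_PE v g.1 h3.1
    have h5 := par_PE v g.2 h3.2.1
    simp only [List.map_cons, List.sum_cons, gE, gX, Multiset.countP_add, Multiset.count_add] at *
    omega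

lemma cyc_grp {G D : SimpleGraph V} {W : Finset V} {b1 b2 : V} (h12 : G.Adj b1 b2)
    (hb1 : b1 ∉ W) (hb2 : b2 ∉ W) (hW1 : ∀ w ∈ W, G.Adj b1 w) (hW2 : ∀ w ∈ W, G.Adj b2 w)
    (hD : D ≤ G) {g : List V × List V} (hg : Grp D W g) :
    IsCyc G (b1 :: (g.1 ++ b2 :: g.2)) ∧ (∀ e ∈ PE g.1, e ∈ CE (b1 :: (g.1 ++ b2 :: g.2))) ∧
    (∀ e ∈ PE g.2, e ∈ CE (b1 :: (g.1 ++ b2 :: g.2))) ∧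
    s(b2, g.2.head hg.ne) ∈ CE (b1 :: (g.1 ++ b2 :: g.2)) ∧
    s(b1, g.2.getLast hg.ne) ∈ CE (b1 :: (g.1 ++ b2 :: g.2)) := by
  obtain ⟨p, q⟩ := g
  obtain ⟨nd, sub, e1, e2, ne⟩ := hg
  simp only at nd sub e1 e2 ne ⊢
  have hq := PE_wrap b2 b1 q ne
  have hp : (∀ e ∈ PE (b1 :: (p ++ [b2])), e ∈ G.edgeSet) ∧
      ∀ e ∈ PE p, e ∈ PE (b1 :: (p ++ [b2])) := by
    by_cases hp : p = []
    · subst hp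
      simp only [List.nil_append, PE_nil]
      refine ⟨?_, by simp⟩
      intro e he
      simp [-Sym2.eq] at he
      rw [he]; exact h12
    · rw [PE_wrap b1 b2 p hp]
      constructor
      · intro e he
        simp only [List.mem_cons, List.mem_append, List.not_mem_nil, or_false] at he
        rcases he with rfl | he | rfl
        · exact hW1 _ (sub _ (List.mem_append_left _ (List.head_mem _)))
        · exact SimpleGraph.edgeSet_mono hD (e1 e he)
        · exact (hW2 _ (sub _ (List.mem_append_left _ (List.getLast_mem _)))).symm
      · intro e he
        exact List.mem_cons_of_mem _ (List.mem_append_left _ he)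
  have hqL := hW1 _ (sub _ (List.mem_append_right _ (List.getLast_mem ne)))
  have hqH := hW2 _ (sub _ (List.mem_append_right _ (List.head_mem ne)))
  rw [CE_append, hq]
  refine ⟨⟨?_, ?_, ?_⟩, ?_, ?_, ?_, ?_⟩
  · have h1 : (b1 :: (p ++ b2 :: q)).Perm (b1 :: b2 :: (p ++ q)) :=
      List.Perm.cons _ List.perm_middle
    rw [h1.nodup_iff, List.nodup_cons, List.nodup_cons]
    refine ⟨?_, fun h => hb2 (sub _ h), nd⟩
    rw [List.mem_cons, not_or]
    exact ⟨h12.ne, fun h => hb1 (sub _ h)⟩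
  · have := List.length_pos_iff.2 ne
    simp only [List.length_cons, List.length_append]; omega
  · rw [CE_append, hq]
    intro e he
    simp only [List.mem_cons, List.mem_append, List.not_mem_nil, or_false] at he
    rcases he with he | rfl | he | rfl
    · exact hp.1 e he
    · exact hqH
    · exact SimpleGraph.edgeSet_mono hD (e2 e he)
    · exact hqL.symm
  · intro e he
    exact List.mem_append_left _ (hp.2 e he)
  · intro e he
    exact List.mem_append_right _ (List.mem_cons_of_mem _ (List.mem_append_left _ he))
  · exact List.mem_append_right _ (List.mem_cons_self ..)
  · rw [Sym2.eq_swap]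
    exact List.mem_append_right _ (List.mem_cons_of_mem _ (List.mem_append_right _ (by simp)))

lemma mem_lsum {α β : Type*} (T : List α) (f : α → Multiset β) (y : β) :
    y ∈ (T.map f).sum ↔ ∃ A ∈ T, y ∈ f A := by
  induction T with
  | nil => simp
  | cons a T ih => simp [ih]

open Classical in
theorem term [Fintype V] {G D : SimpleGraph V} {W : Finset V} {b1 b2 : V} (h12 : G.Adj b1 b2)
    (hb1 : b1 ∉ W) (hb2 : b2 ∉ W) (hW1 : ∀ w ∈ W, G.Adj b1 w) (hW2 : ∀ w ∈ W, G.Adj b2 w)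
    (hD : ∀ x y, D.Adj x y ↔ G.Adj x y ∧ x ∈ W ∧ y ∈ W)
    (hall : ∀ x y, G.Adj x y → x = b1 ∨ x = b2 ∨ x ∈ W) (hWne : W.Nonempty)
    (gs : List (List V × List V)) (hgs : ∀ g ∈ gs, Grp D W g)
    (hlen : 4 * gs.length ≤ W.card + 2)
    (hX : ∀ v, (gs.map gX).sum.count v = if v ∈ W ∧ (Finset.univ.filter (D.Adj v)).card % 2 = 1 then 1 else 0) :
    ∃ L : List (List V), (∀ c ∈ L, IsCyc G c) ∧ (∀ e ∈ G.edgeSet, cov L e) ∧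
      4 * L.length ≤ 3 * (W.card + 1) := by
  have hDG : D ≤ G := fun x y h => ((hD x y).1 h).1
  set U := insert b2 W with hU
  have hb1U : b1 ∉ U := by rw [hU, Finset.mem_insert, not_or]; exact ⟨h12.ne, hb1⟩
  set H : Finset (Sym2 V) := Finset.univ.filter (fun e => e ∈ G.edgeSet ∧ b1 ∉ e) with hHdef
  have hHm : ∀ x y, s(x, y) ∈ H ↔ G.Adj x y ∧ x ≠ b1 ∧ y ≠ b1 := by
    intro x y
    simp [hHdef, Sym2.mem_iff, not_or, eq_comm]
  have hUm : ∀ x, x ∈ U ↔ x = b2 ∨ x ∈ W := fun x => Finset.mem_insert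
  have hallU : ∀ x y, G.Adj x y → x ≠ b1 → x ∈ U := by
    intro x y h hx
    rw [hUm]; exact (hall x y h).resolve_left hx
  have hdg : ∀ v, v ≠ b1 → dg H v = (Finset.univ.filter (fun y => G.Adj v y ∧ y ≠ b1)).card := by
    intro v hv
    have inj : Function.Injective (fun y => s(v, y)) := by
      intro x y h
      have h' : s(v, x) = s(v, y) := h
      rw [Sym2.eq_iff] at h'
      grind
    rw [← Finset.card_image_of_injective _ inj]
    unfold dg
    congr 1
    ext e
    simp only [Finset.mem_filter, Finset.mem_image, Finset.mem_univ, true_and]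
    constructor
    · rintro ⟨h1, h2⟩
      obtain ⟨y, rfl⟩ := Sym2.mem_iff_exists.1 h2
      rw [hHm] at h1
      exact ⟨y, ⟨h1.1, h1.2.2⟩, rfl⟩
    · rintro ⟨y, h, rfl⟩
      exact ⟨(hHm _ _).2 ⟨h.1, hv, h.2⟩, by simp⟩
  have hdgW : ∀ v ∈ W, dg H v = (Finset.univ.filter (D.Adj v)).card + 1 := by
    intro v hv
    have hvb1 : v ≠ b1 := by rintro rfl; exact hb1 hv
    rw [hdg v hvb1]
    have : (Finset.univ.filter (fun y => G.Adj v y ∧ y ≠ b1)) =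
        insert b2 (Finset.univ.filter (D.Adj v)) := by
      ext y
      simp only [Finset.mem_filter, Finset.mem_insert, Finset.mem_univ, true_and, hD]
      constructor
      · rintro ⟨h, hy⟩
        rcases hall y v h.symm with h' | h' | h'
        · exact absurd h' hy
        · exact Or.inl h'
        · exact Or.inr ⟨h, hv, h'⟩
      · rintro (rfl | ⟨h, -, h'⟩)
        · exact ⟨(hW2 v hv).symm, h12.ne.symm⟩
        · refine ⟨h, ?_⟩
          rintro rfl; exact hb1 h'
    rw [this, Finset.card_insert_of_notMem]
    simp only [Finset.mem_filter, Finset.mem_univ, true_and, hD]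
    tauto
  have hdgb2 : dg H b2 = W.card := by
    rw [hdg b2 h12.ne.symm]
    congr 1
    ext y
    simp only [Finset.mem_filter, Finset.mem_univ, true_and]
    constructor
    · rintro ⟨h, hy⟩
      rcases hall y b2 h.symm with h' | h' | h'
      · exact absurd h' hy
      · exact absurd h'.symm h.ne
      · exact h'
    · intro h
      refine ⟨hW2 y h, ?_⟩
      rintro rfl; exact hb1 h
  have hdg0 : ∀ v, v ∉ U → dg H v = 0 := by
    intro v hv
    by_contra h
    obtain ⟨b, hb⟩ := dg_exists (Nat.pos_of_ne_zero h)
    rw [hHm] at hb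
    exact hv (hallU v b hb.1 hb.2.1)
  have hUadj : ∀ u ∈ U, G.Adj b1 u := by
    intro u hu
    rcases (hUm u).1 hu with rfl | h
    · exact h12
    · exact hW1 u h
  have hH : ∀ e ∈ H, e ∈ G.edgeSet ∧ ∀ v ∈ e, v ∈ U := by
    intro e he
    induction e with
    | h x y =>
      rw [hHm] at he
      refine ⟨he.1, ?_⟩
      intro v hv
      rcases Sym2.mem_iff.1 hv with rfl | rfl
      · exact hallU _ _ he.1 he.2.1
      · exact hallU _ _ he.1.symm he.2.2
  have hGc : ∀ x y, G.Adj x y → s(x, y) ∈ H ∨ x = b1 ∨ y = b1 := by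
    intro x y h
    rw [hHm]; tauto
  have hb1' : ∀ y, G.Adj b1 y → y ∈ U := fun y h => hallU y b1 h.symm h.ne.symm
  have hz : ∀ u ∈ U, ∃ z ∈ U, G.Adj u z := by
    intro u hu
    rcases (hUm u).1 hu with rfl | h
    · obtain ⟨w, hw⟩ := hWne
      exact ⟨w, (hUm w).2 (Or.inr hw), hW2 w hw⟩
    · exact ⟨b2, (hUm b2).2 (Or.inl rfl), (hW2 u h).symm⟩
  have hDH : ∀ e ∈ D.edgeSet, e ∈ H := by
    intro e he
    induction e with
    | h x y =>
      have := (hD x y).1 he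
      rw [hHm]
      refine ⟨this.1, ?_, ?_⟩
      · rintro rfl; exact hb1 this.2.1
      · rintro rfl; exact hb1 this.2.2
  set cf : List V × List V → List V := fun g => b1 :: (g.1 ++ b2 :: g.2) with hcf
  have hcyc : ∀ c ∈ gs.map cf, IsCyc G c := by
    intro c hc
    obtain ⟨g, hg, rfl⟩ := List.mem_map.1 hc
    exact (cyc_grp h12 hb1 hb2 hW1 hW2 hDG (hgs g hg)).1
  have hgM : ∀ g ∈ gs, ∀ e ∈ gE g, e ∈ H ∧ cov (gs.map cf) e := by
    intro g hg e he
    have h1 := cyc_grp h12 hb1 hb2 hW1 hW2 hDG (hgs g hg)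
    rcases Multiset.mem_add.1 he with he | he
    · exact ⟨hDH e ((hgs g hg).e1 e he), cf g, List.mem_map_of_mem hg, h1.2.1 e he⟩
    · exact ⟨hDH e ((hgs g hg).e2 e he), cf g, List.mem_map_of_mem hg, h1.2.2.1 e he⟩
  have hpar0 := fun v => par_grps (D := D) (W := W) v gs hgs
  have hWc : ∀ v, W.val.count v = if v ∈ W then 1 else 0 := by
    intro v
    split_ifs with h
    · exact Multiset.count_eq_one_of_mem W.nodup h
    · exact Multiset.count_eq_zero.2 h
  have hXb2 := hX b2
  rw [if_neg (by tauto)] at hXb2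
  have hX0 : ∀ v, v ∉ W → (gs.map gX).sum.count v = 0 := by
    intro v hv
    rw [hX v, if_neg (by tauto)]
  by_cases hm : W.card % 2 = 1
  · obtain ⟨L, l1, l2, l3⟩ := asm (M := (gs.map gE).sum) (E := W.val + {b2}) hb1U hUadj hH hGc hb1' hz hcyc
      (by
        intro e he
        rw [mem_lsum] at he
        obtain ⟨g, hg, he⟩ := he
        exact hgM g hg e he)
      (by
        intro v hv
        rw [hUm]
        rcases Multiset.mem_add.1 hv with h | h
        · exact Or.inr h
        · exact Or.inl (by simpa using h))
      (by
        intro v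
        have h1 := hpar0 v
        rw [Multiset.count_add, hWc, Multiset.count_singleton]
        by_cases hv : v ∈ W
        · have h2 := hdgW v hv
          have h3 := hX v
          have hvb : v ≠ b2 := by rintro rfl; exact hb2 hv
          simp only [hv, true_and, hvb, if_true, if_false] at h3 ⊢
          split_ifs at h3 <;> omega
        · have h3 := hX0 v hv
          by_cases hvb : v = b2
          · subst hvb
            simp only [hv, if_true, if_false]
            omega
          · have := hdg0 v (by rw [hUm]; tauto)
            simp only [hv, hvb, if_false]
            omega)
      (by
        intro u hu v hv h1 h2
        exfalso
        rw [Multiset.count_eq_zero] at h1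
        apply h1
        rw [Multiset.mem_add]
        rcases (hUm u).1 hu with rfl | h
        · right; simp
        · left; exact h)
      (by
        intro u hu
        left
        rw [Multiset.mem_add]
        rcases (hUm u).1 hu with rfl | h
        · right; simp
        · left; exact h)
    refine ⟨L, l1, l2, ?_⟩
    simp only [List.length_map, Multiset.card_add, Multiset.card_singleton, Finset.card_val] at l3
    omega
  · have hm1 := hWne.card_pos
    match gs, hgs, hlen, hX, hcyc, hgM, hpar0, hXb2, hX0 with
    | [], hgs, hlen, hX, hcyc, hgM, hpar0, hXb2, hX0 =>
      obtain ⟨L, l1, l2, l3⟩ := asm (M := 0) (E := W.val + {b2} + {b2}) hb1U hUadj hH hGc hb1' hz hcyc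
        (by simp)
        (by
          intro v hv
          rw [hUm]
          simp only [Multiset.mem_add, Multiset.mem_singleton, Finset.mem_val] at hv
          tauto)
        (by
          intro v
          rw [Multiset.count_add, Multiset.count_add, hWc, Multiset.count_singleton]
          by_cases hv : v ∈ W
          · have h2 := hdgW v hv
            have h3 := hX v
            have hvb : v ≠ b2 := by rintro rfl; exact hb2 hv
            simp only [hv, true_and, hvb, if_true, if_false, Multiset.countP_zero, List.map_nil,
              List.sum_nil, Multiset.count_zero] at h3 ⊢
            split_ifs at h3
            omega
          · by_cases hvb : v = b2
            · subst hvb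
              simp only [hv, if_true, if_false, Multiset.countP_zero]
              omega
            · have := hdg0 v (by rw [hUm]; tauto)
              simp only [hv, hvb, if_false, Multiset.countP_zero]
              omega)
        (by
          intro u hu v hv h1 h2
          exfalso
          rw [Multiset.count_eq_zero] at h1
          apply h1
          simp only [Multiset.mem_add, Multiset.mem_singleton, Finset.mem_val]
          have := (hUm u).1 hu
          tauto)
        (by
          intro u hu
          left
          simp only [Multiset.mem_add, Multiset.mem_singleton, Finset.mem_val]
          have := (hUm u).1 hu
          tauto)
      refine ⟨L, l1, l2, ?_⟩
      simp only [List.length_map, Multiset.card_add, Multiset.card_singleton, Finset.card_val,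
        List.length_nil] at l3
      omega
    | g :: gs, hgs, hlen, hX, hcyc, hgM, hpar0, hXb2, hX0 =>
      have hg := hgs g (List.mem_cons_self ..)
      have hc := cyc_grp h12 hb1 hb2 hW1 hW2 hDG hg
      have hlW : g.2.getLast hg.ne ∈ W := hg.sub _ (List.mem_append_right _ (List.getLast_mem _))
      have hhW : g.2.head hg.ne ∈ W := hg.sub _ (List.mem_append_right _ (List.head_mem _))
      obtain ⟨h0, hh0⟩ : ∃ x, x = g.2.head hg.ne := ⟨_, rfl⟩
      obtain ⟨l0, hl0⟩ : ∃ x, x = g.2.getLast hg.ne := ⟨_, rfl⟩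
      rw [← hh0, ← hl0] at hc
      rw [← hl0] at hlW
      rw [← hh0] at hhW
      have hends : ends g.2 = {h0} + {l0} := by rw [ends_eq hg.ne, hh0, hl0]
      have hEc : ∀ v, (W.val.erase l0 + {b2}).count v + (if v = l0 then 1 else 0) =
          (if v ∈ W then 1 else 0) + if v = b2 then 1 else 0 := by
        intro v
        rw [← hWc, Multiset.count_add, Multiset.count_singleton]
        have := congrArg (Multiset.count v) (Multiset.cons_erase (Finset.mem_def.1 hlW))
        rw [Multiset.count_cons] at this
        omega
      have hEmem : ∀ u ∈ U, u ≠ l0 → u ∈ W.val.erase l0 + {b2} := by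
        intro u hu hul
        rw [← Multiset.count_pos]
        have h1 := hEc u
        rw [if_neg hul] at h1
        rcases (hUm u).1 hu with h | h
        · rw [if_pos h] at h1; omega
        · rw [if_pos h] at h1; omega
      obtain ⟨L, l1, l2, l3⟩ := asm (M := s(b2, h0) ::ₘ (PEm g.1 + (gs.map gE).sum))
        (E := W.val.erase l0 + {b2}) hb1U hUadj hH hGc hb1' hz hcyc
        (by
          intro e he
          rcases Multiset.mem_cons.1 he with rfl | he
          · refine ⟨?_, cf g, List.mem_map_of_mem (List.mem_cons_self ..), hc.2.2.2.1⟩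
            rw [hHm]
            refine ⟨hW2 _ hhW, h12.ne.symm, ?_⟩
            rintro rfl; exact hb1 hhW
          · rcases Multiset.mem_add.1 he with he | he
            · exact hgM g (List.mem_cons_self ..) e (Multiset.mem_add.2 (Or.inl he))
            · rw [mem_lsum] at he
              obtain ⟨g', hg', he⟩ := he
              exact hgM g' (List.mem_cons_of_mem _ hg') e he)
        (by
          intro v hv
          rw [hUm]
          rcases Multiset.mem_add.1 hv with h | h
          · exact Or.inr (Multiset.mem_of_mem_erase h)
          · exact Or.inl (by simpa using h))
        (by
          intro v
          have h1 := hpar0 v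
          have h2 := hEc v
          have h5 := par_PE v g.2 (List.nodup_append.1 hg.nd).2.1
          rw [hends] at h5
          have hlb : l0 ≠ b2 := by rintro rfl; exact hb2 hlW
          have hhb : h0 ≠ b2 := by rintro rfl; exact hb2 hhW
          rw [Multiset.countP_cons, Multiset.countP_add]
          simp only [List.map_cons, List.sum_cons, Multiset.countP_add, gE, Sym2.mem_iff,
            Multiset.count_add, Multiset.count_singleton] at h1 h5 h2 ⊢
          have h3 := hX v
          simp only [List.map_cons, List.sum_cons, Multiset.count_add] at h3
          by_cases hv : v ∈ W
          · have h4 := hdgW v hv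
            have hvb : v ≠ b2 := by rintro rfl; exact hb2 hv
            simp only [hv, true_and, hvb, if_true, if_false, false_or] at h3 h2 h5 ⊢
            generalize (if v = h0 then 1 else 0) = ih at h2 h5 ⊢
            generalize (if v = l0 then 1 else 0) = il at h2 h5 ⊢
            clear hH hGc hUadj
            split_ifs at h3 <;> omega
          · have hvl : v ≠ l0 := by rintro rfl; exact hv hlW
            have hvh : v ≠ h0 := by rintro rfl; exact hv hhW
            by_cases hvb : v = b2
            · subst hvb
              simp only [hv, hlb.symm, hhb.symm, false_and, if_true, if_false, true_or] at h3 h2 h5 ⊢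
              omega
            · have := hdg0 v (by rw [hUm]; tauto)
              simp only [hv, hvb, hvl, hvh, false_and, if_false, or_false] at h3 h2 h5 ⊢
              omega)
        (by
          intro u hu v hv h1 h2
          have key : ∀ u ∈ U, Multiset.count u (W.val.erase l0 + {b2}) = 0 → u = l0 := by
            intro u hu h
            by_contra hne
            exact Multiset.count_eq_zero.1 h (hEmem u hu hne)
          rw [key u hu h1, key v hv h2])
        (by
          intro u hu
          by_cases hul : u = l0
          · right
            rw [hul]
            exact ⟨cf g, List.mem_map_of_mem (List.mem_cons_self ..), hc.2.2.2.2⟩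
          · exact Or.inl (hEmem u hu hul))
      refine ⟨L, l1, l2, ?_⟩
      have hcard := Multiset.card_erase_add_one (Finset.mem_def.1 hlW)
      simp only [List.length_map, Multiset.card_add, Multiset.card_singleton, Finset.card_val,
        List.length_cons] at l3 hlen hcard
      omega

end FC


namespace FC

universe u

variable {V : Type u}

def pm (p : V × V) : Multiset V := {p.1} + {p.2}

open Classical in
lemma pair_up (κ : V → V) : ∀ (k : ℕ) (O : Finset V), O.card = k → ∃ (P : List (V × V)) (R : Finset V),
    (∀ p ∈ P, κ p.1 = κ p.2) ∧ (∀ x ∈ R, ∀ y ∈ R, κ x = κ y → x = y) ∧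
    (P.map pm).sum + R.val = O.val := by
  intro k
  induction k using Nat.strong_induction_on with
  | _ k ih =>
    intro O hO
    by_cases hinj : ∀ x ∈ O, ∀ y ∈ O, κ x = κ y → x = y
    · exact ⟨[], O, by simp, hinj, by simp⟩
    · push Not at hinj
      obtain ⟨x, hx, y, hy, hk, hne⟩ := hinj
      have hy' : y ∈ O.erase x := Finset.mem_erase.2 ⟨hne.symm, hy⟩
      have h1 := Finset.card_erase_add_one hx
      have h2 := Finset.card_erase_add_one hy'
      obtain ⟨P, R, hP, hR, hs⟩ := ih ((O.erase x).erase y).card (by omega) _ rfl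
      refine ⟨(x, y) :: P, R, ?_, hR, ?_⟩
      · intro p hp
        rcases List.mem_cons.1 hp with rfl | hp
        · exact hk
        · exact hP p hp
      · rw [List.map_cons, List.sum_cons, add_assoc, hs, Finset.erase_val, Finset.erase_val]
        have e1 := Multiset.cons_erase (Finset.mem_def.1 hx)
        have e2 := Multiset.cons_erase (s := O.val.erase x) (a := y) (by
          have := Finset.mem_def.1 hy'; rwa [Finset.erase_val] at this)
        rw [pm, add_assoc, Multiset.singleton_add, Multiset.singleton_add, e2, e1]

lemma zipo {α : Type*} : ∀ (A B : List α), B.length ≤ A.length →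
    ∃ gs : List (α × Option α), gs.length = A.length ∧
      ((gs.map (fun g => g.1 :: g.2.toList)).flatten).Perm (A ++ B) ∧
      ∀ g ∈ gs, ∀ b, g.2 = some b → ∃ i : ℕ, A[i]? = some g.1 ∧ B[i]? = some b := by
  intro A
  induction A with
  | nil =>
    intro B hB
    have : B = [] := List.length_eq_zero_iff.1 (by simpa using hB)
    subst this
    exact ⟨[], rfl, by simp, by simp⟩
  | cons a A ih =>
    intro B hB
    cases B with
    | nil =>
      obtain ⟨gs, h1, h2, h3⟩ := ih [] (by simp)
      refine ⟨(a, none) :: gs, by simp [h1], by simpa using h2, ?_⟩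
      intro g hg b hb
      rcases List.mem_cons.1 hg with rfl | hg
      · simp at hb
      · obtain ⟨i, -, h⟩ := h3 g hg b hb
        simp at h
    | cons b B =>
      obtain ⟨gs, h1, h2, h3⟩ := ih B (by simpa using hB)
      refine ⟨(a, some b) :: gs, by simp [h1], ?_, ?_⟩
      · simp only [List.map_cons, Option.toList_some, List.flatten_cons, List.cons_append,
          List.nil_append]
        refine List.Perm.cons a ?_
        exact (h2.cons b).trans List.perm_middle.symm
      · intro g hg c hc
        rcases List.mem_cons.1 hg with rfl | hg
        · exact ⟨0, by simp, by simpa using hc⟩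
        · obtain ⟨i, h, h'⟩ := h3 g hg c hc
          exact ⟨i + 1, by simpa using h, by simpa using h'⟩

lemma grouping {α : Type*} (o inn : List α) (key : α → ℕ) (T : ℕ)
    (hk : ∀ k, o.countP (fun a => key a = k) ≤ T) (hN : o.length + inn.length ≤ 2 * T) :
    ∃ gs : List (α × Option α), gs.length ≤ T ∧
      ((gs.map (fun g => g.1 :: g.2.toList)).flatten).Perm (o ++ inn) ∧
      ∀ g ∈ gs, ∀ b, g.2 = some b → key g.1 ≠ key b ∨ b ∈ inn := by
  obtain ⟨o', ho', hs⟩ : ∃ o' : List α, o'.Perm o ∧ o'.Pairwise (fun a b => key a ≤ key b) := by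
    refine ⟨o.mergeSort (fun a b => decide (key a ≤ key b)), List.mergeSort_perm _ _, ?_⟩
    have := List.pairwise_mergeSort (le := fun a b => decide (key a ≤ key b))
      (by intro a b c h1 h2; simp at *; omega) (by intro a b; simp; omega) o
    simpa using this
  obtain ⟨gs, h1, h2, h3⟩ := zipo ((o' ++ inn).take T) ((o' ++ inn).drop T) (by
    have := ho'.length_eq
    simp only [List.length_take, List.length_drop, List.length_append]
    omega)
  refine ⟨gs, by rw [h1]; simp, ?_, ?_⟩
  · rw [List.take_append_drop] at h2
    exact h2.trans (ho'.append_right _)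
  · intro g hg b hb
    obtain ⟨i, ha, hb'⟩ := h3 g hg b hb
    rw [List.getElem?_take] at ha
    rw [List.getElem?_drop] at hb'
    split_ifs at ha with hi
    by_cases hlt : T + i < o'.length
    · left
      intro heq
      rw [List.getElem?_append_left (by omega)] at ha hb'
      obtain ⟨_, ha⟩ := List.getElem?_eq_some_iff.1 ha
      obtain ⟨_, hb'⟩ := List.getElem?_eq_some_iff.1 hb'
      have hall : ∀ x ∈ (o'.drop i).take (T + 1), key x = key b := by
        intro x hx
        obtain ⟨j, hj, rfl⟩ := List.mem_iff_getElem.1 hx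
        rw [List.getElem_take, List.getElem_drop]
        simp only [List.length_take, List.length_drop] at hj
        have e1 : key o'[i] ≤ key o'[i + j] := by
          rcases Nat.eq_zero_or_pos j with h | h
          · simp [h]
          · exact List.pairwise_iff_getElem.1 hs i (i + j) (by omega) (by omega) (by omega)
        have e2 : key o'[i + j] ≤ key o'[T + i] := by
          rcases Nat.lt_or_ge j T with h | h
          · exact List.pairwise_iff_getElem.1 hs (i + j) (T + i) (by omega) (by omega) (by omega)
          · have : i + j = T + i := by omega
            simp [this]
        rw [ha] at e1
        rw [hb'] at e2
        omega
      have hsub : ((o'.drop i).take (T + 1)).Sublist o' :=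
        (List.take_sublist _ _).trans (List.drop_sublist _ _)
      have hc := hsub.countP_le (p := fun a => decide (key a = key b))
      rw [List.countP_eq_length.2 (by simpa using hall), ho'.countP_eq] at hc
      have := hk (key b)
      simp only [List.length_take, List.length_drop] at hc
      omega
    · right
      rw [List.getElem?_append_right (by omega)] at hb'
      exact List.mem_of_getElem? hb'

structure Nest (D : SimpleGraph V) (W : Finset V) (top f : V → V) : Prop where
  inW : ∀ x y, D.Adj x y → x ∈ W
  t1 : ∀ x y, D.Adj x y → top x = top y
  t2 : ∀ x, top x = x ∨ D.Adj (top x) x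
  f1 : ∀ x y, D.Adj x y → top x ≠ x → top y ≠ y → f x = f y
  f2 : ∀ x, top x ≠ x → f x = x ∨ D.Adj (f x) x
  f3 : ∀ x, top x ≠ x → top (f x) ≠ f x

section
variable {D : SimpleGraph V} {W : Finset V} {top f : V → V}

lemma Nest.linkE (h : Nest D W top f) {x y : V} (hx : x ∈ W) (hy : y ∈ W) (hne : x ≠ y)
    (ht : top x = top y) : ∃ p : List V, p ≠ [] ∧ p.Nodup ∧ (∀ e ∈ PE p, e ∈ D.edgeSet) ∧
      ends p = {x} + {y} ∧ (∀ v ∈ p, v = x ∨ v = y ∨ v = top x) ∧ (∀ v ∈ p, v ∈ W) := by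
  by_cases hxy : D.Adj x y
  · refine ⟨[x, y], by simp, by simpa using hne, ?_, rfl, ?_, ?_⟩
    · simpa [PE] using hxy
    · simp only [List.mem_cons, List.not_mem_nil]; tauto
    · simp only [List.mem_cons, List.not_mem_nil]; rintro v (rfl | rfl | h) <;> first | assumption | exact h.elim
  · have h1 : D.Adj (top x) x := by
      rcases h.t2 x with h1 | h1
      · exfalso
        rcases h.t2 y with h2 | h2
        · exact hne (by rw [← h1, ht, h2])
        · rw [← ht, h1] at h2; exact hxy h2
      · exact h1
    have h2 : D.Adj (top x) y := by
      rcases h.t2 y with h2 | h2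
      · rw [ht, h2] at h1; exact absurd h1.symm hxy
      · rwa [← ht] at h2
    refine ⟨[x, top x, y], by simp, ?_, ?_, rfl, ?_, ?_⟩
    · simp only [List.nodup_cons, List.mem_cons, List.not_mem_nil, or_false, not_or, not_false_iff,
        List.nodup_nil, and_true]
      exact ⟨⟨h1.ne.symm, hne⟩, h2.ne⟩
    · simpa [PE] using ⟨h1.symm, h2⟩
    · simp only [List.mem_cons, List.not_mem_nil]; tauto
    · simp only [List.mem_cons, List.not_mem_nil]
      rintro v (rfl | rfl | rfl | h')
      · exact hx
      · exact h.inW _ _ h1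
      · exact hy
      · exact h'.elim

lemma Nest.quad (h : Nest D W top f) {x x' y y' : V} (hx : x ∈ W) (hx' : x' ∈ W) (hy : y ∈ W)
    (hy' : y' ∈ W) (nd : [x, x', y, y'].Nodup) (ht : top x = top x') (hs : top y = top y')
    (hor : top x ≠ top y ∨ (top y ≠ y ∧ top y' ≠ y' ∧ f y = f y')) :
    ∃ g, Grp D W g ∧ gX g = pm (x, x') + pm (y, y') := by
  simp only [List.nodup_cons, List.mem_cons, List.not_mem_nil, or_false, not_or, not_false_iff,
    List.nodup_nil, and_true] at nd
  obtain ⟨⟨n1, n2, n3⟩, ⟨n4, n5⟩, n6⟩ := nd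
  have mk : ∀ p q : List V, q ≠ [] → p.Nodup → q.Nodup → (∀ v ∈ p, v ∈ q → False) →
      (∀ e ∈ PE p, e ∈ D.edgeSet) → (∀ e ∈ PE q, e ∈ D.edgeSet) → (∀ v ∈ p, v ∈ W) →
      (∀ v ∈ q, v ∈ W) → Grp D W (p, q) := by
    intro p q a1 a2 a3 a4 a5 a6 a7 a8
    refine ⟨?_, ?_, a5, a6, a1⟩
    · rw [List.nodup_append]
      exact ⟨a2, a3, fun a ha b hb hab => a4 a ha (hab ▸ hb)⟩
    · intro v hv
      rcases List.mem_append.1 hv with hv | hv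
      · exact a7 v hv
      · exact a8 v hv
  have tt : ∀ z, top (top z) = top z := by
    intro z
    rcases h.t2 z with e | e
    · rw [e]; exact e
    · exact h.t1 _ _ e
  by_cases hdiff : top x = top y
  · obtain ⟨i1, i2, i3⟩ := hor.resolve_left (fun h => h hdiff)
    by_cases hyy : D.Adj y y'
    · obtain ⟨p, p0, p1, p2, p3, p4, p5⟩ := h.linkE hx hx' n1 ht
      refine ⟨([y, y'], p), mk _ _ p0 (by simpa using n6) p1 ?_ (by simpa [PE] using hyy) p2 ?_ p5, ?_⟩
      · intro v hv hv'
        have := p4 v hv'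
        simp only [List.mem_cons, List.not_mem_nil, or_false] at hv
        grind
      · intro v hv
        simp only [List.mem_cons, List.not_mem_nil, or_false] at hv
        rcases hv with rfl | rfl <;> assumption
      · rw [gX, p3, add_comm]; rfl
    · have ty : D.Adj (f y) y := by
        rcases h.f2 y i1 with e | e
        · exfalso
          rcases h.f2 y' i2 with e' | e'
          · exact n6 (by rw [← e, i3, e'])
          · rw [← i3, e] at e'; exact hyy e'
        · exact e
      have ty' : D.Adj (f y) y' := by
        rcases h.f2 y' i2 with e | e
        · rw [i3, e] at ty; exact absurd ty.symm hyy
        · rwa [← i3] at e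
      have tc : top (f y) = top y := h.t1 _ _ ty
      have tn : top y ≠ f y := by have := h.f3 y i1; rwa [tc] at this
      have key : ∀ a b : V, a ∈ W → b ∈ W → a ≠ y → a ≠ y' → b ≠ y → b ≠ y' → a ≠ b → f y = a →
          top b = top y → ∃ g, Grp D W g ∧ gX g = pm (a, b) + pm (y, y') := by
        intro a b ha hb q1 q2 q3 q4 q5 q6 q7
        obtain ⟨p, p0, p1, p2, p3, p4, p5⟩ := h.linkE hy' hb q4.symm (by rw [q7, hs])
        refine ⟨([a, y], p), mk _ _ p0 (by simpa using q1) p1 ?_ (by simpa [PE, ← q6] using ty) p2 ?_ p5, ?_⟩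
        · intro v hv hv'
          have := p4 v hv'
          simp only [List.mem_cons, List.not_mem_nil, or_false] at hv
          grind
        · intro v hv
          simp only [List.mem_cons, List.not_mem_nil, or_false] at hv
          rcases hv with rfl | rfl <;> assumption
        · rw [gX, p3]
          show ({a} : Multiset V) + {y} + ({y'} + {b}) = {a} + {b} + ({y} + {y'})
          abel
      by_cases t1 : f y = x
      · exact key x x' hx hx' n2 n3 n4 n5 n1 t1 (by rw [← ht, hdiff])
      by_cases t2 : f y = x'
      · obtain ⟨g, g1, g2⟩ := key x' x hx' hx n4 n5 n2 n3 (Ne.symm n1) t2 hdiff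
        refine ⟨g, g1, ?_⟩
        rw [g2]; simp only [pm]; abel
      obtain ⟨p, p0, p1, p2, p3, p4, p5⟩ := h.linkE hx hx' n1 ht
      refine ⟨([y, f y, y'], p), mk _ _ p0 ?_ p1 ?_ (by simpa [PE] using ⟨ty.symm, ty'⟩) p2 ?_ p5, ?_⟩
      · simp only [List.nodup_cons, List.mem_cons, List.not_mem_nil, or_false, not_or, not_false_iff,
          List.nodup_nil, and_true]
        exact ⟨⟨ty.ne.symm, n6⟩, ty'.ne⟩
      · intro v hv hv'
        have := p4 v hv'
        simp only [List.mem_cons, List.not_mem_nil, or_false] at hv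
        grind
      · intro v hv
        simp only [List.mem_cons, List.not_mem_nil, or_false] at hv
        rcases hv with rfl | rfl | rfl
        · exact hy
        · exact h.inW _ _ ty
        · exact hy'
      · rw [gX, p3, add_comm]; rfl
  · obtain ⟨p, p0, p1, p2, p3, p4, p5⟩ := h.linkE hx hx' n1 ht
    obtain ⟨q, q0, q1, q2, q3, q4, q5⟩ := h.linkE hy hy' n6 hs
    have m1 : ∀ v ∈ p, top v = top x := by
      intro v hv
      rcases p4 v hv with rfl | rfl | rfl
      · rfl
      · exact ht.symm
      · exact tt _
    have m2 : ∀ v ∈ q, top v = top y := by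
      intro v hv
      rcases q4 v hv with rfl | rfl | rfl
      · rfl
      · exact hs.symm
      · exact tt _
    refine ⟨(p, q), mk _ _ q0 p1 q1 ?_ p2 q2 p5 q5, ?_⟩
    · intro v hv hv'
      exact hdiff (by rw [← m1 v hv, m2 v hv'])
    · rw [gX, p3, q3]; rfl

end

end FC


namespace FC

universe u

variable {V : Type u}

lemma countP_pairs (q : V → Prop) [DecidablePred q] : ∀ P : List (V × V),
    (∀ p ∈ P, (q p.1 ↔ q p.2)) →
    Multiset.countP q (P.map pm).sum = 2 * P.countP (fun p => q p.1) := by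
  intro P
  induction P with
  | nil => intro _; simp
  | cons p P ih =>
    intro h
    have h1 := ih (fun p hp => h p (List.mem_cons_of_mem _ hp))
    have h2 := h p (List.mem_cons_self ..)
    rw [List.map_cons, List.sum_cons, Multiset.countP_add, h1, List.countP_cons, pm,
      Multiset.countP_add]
    have s : ∀ a, Multiset.countP q {a} = if q a then 1 else 0 := by
      intro a
      rw [← Multiset.cons_zero, Multiset.countP_cons, Multiset.countP_zero, zero_add]
    rw [s, s]
    by_cases hq : q p.1
    · have hq2 := h2.1 hq
      simp [hq, hq2]; omega
    · have hq2 : ¬ q p.2 := fun e => hq (h2.2 e)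
      simp [hq, hq2]

lemma card_pairs : ∀ P : List (V × V), ((P.map pm).sum).card = 2 * P.length := by
  intro P
  induction P with
  | nil => simp
  | cons p P ih => simp [ih, pm]; omega

lemma le_lsum {α : Type*} (l : List (Multiset α)) (x : Multiset α) (hx : x ∈ l) : x ≤ l.sum := by
  induction l with
  | nil => simp at hx
  | cons a l ih =>
    rw [List.sum_cons]
    rcases List.mem_cons.1 hx with rfl | hx
    · exact Multiset.le_add_right _ _
    · exact (ih hx).trans (Multiset.le_add_left _ _)

section
variable {D : SimpleGraph V} {W : Finset V} {top f : V → V}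

open Classical in
lemma Nest.par [Fintype V] (h : Nest D W top f) (c : V) :
    ((W.filter (fun v => (Finset.univ.filter (D.Adj v)).card % 2 = 1)).filter
      (fun v => top v = c)).card % 2 = 0 := by
  have := (res D {v | top v = c}).even_card_odd_degree_vertices
  rw [← Nat.even_iff]
  convert this using 2
  ext v
  simp only [Finset.mem_filter, Finset.mem_univ, true_and]
  have hdeg : (res D {v | top v = c}).degree v =
      if top v = c then (Finset.univ.filter (D.Adj v)).card else 0 := by
    rw [← SimpleGraph.card_neighborFinset_eq_degree]
    split_ifs with hv
    · congr 1
      ext w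
      simp only [SimpleGraph.mem_neighborFinset, Finset.mem_filter, Finset.mem_univ, true_and,
        res_adj, Set.mem_setOf_eq]
      constructor
      · exact fun h => h.1
      · exact fun hh => ⟨hh, hv, by rw [← h.t1 _ _ hh, hv]⟩
    · rw [Finset.card_eq_zero, Finset.eq_empty_iff_forall_notMem]
      intro w hw
      rw [SimpleGraph.mem_neighborFinset] at hw
      exact hv hw.2.1
  rw [hdeg]
  split_ifs with hv
  · rw [Nat.odd_iff]
    constructor
    · exact fun h => h.1.2
    · intro hh
      refine ⟨⟨?_, hh⟩, hv⟩
      have : 0 < (Finset.univ.filter (D.Adj v)).card := by omega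
      obtain ⟨w, hw⟩ := Finset.card_pos.1 this
      exact h.inW v w (by simpa using hw)
  · simp [hv]

open Classical in
lemma Nest.bound [Fintype V] (h : Nest D W top f)
    (hleaf : ∀ c x y z, x ≠ y → x ≠ z → y ≠ z → (∀ w, D.Adj x w ↔ w = c) →
      (∀ w, D.Adj y w ↔ w = c) → (∀ w, D.Adj z w ↔ w = c) → False)
    (c : V) (K : Finset V) (hK1 : ∀ r ∈ K, top r = c) (hK2 : ∀ r ∈ K, top r ≠ r)
    (hK3 : ∀ r ∈ K, (Finset.univ.filter (D.Adj r)).card % 2 = 1)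
    (hK4 : ∀ r ∈ K, ∀ s ∈ K, f r = f s → r = s) (hne : K.Nonempty) :
    3 * K.card ≤ W.card + 3 ∧ K.card + 1 ≤ W.card := by
  have hcr : ∀ r ∈ K, D.Adj c r := by
    intro r hr
    have := (h.t2 r).resolve_left (hK2 r hr)
    rwa [hK1 r hr] at this
  obtain ⟨B, hB⟩ : ∃ B : V → Finset V, B = fun r => insert r ((Finset.univ.filter (D.Adj r)).erase c) := ⟨_, rfl⟩
  have hBc : ∀ r ∈ K, (B r).card = (Finset.univ.filter (D.Adj r)).card := by
    intro r hr
    rw [hB]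
    have hc : c ∈ Finset.univ.filter (D.Adj r) := by simpa using (hcr r hr).symm
    rw [Finset.card_insert_of_notMem (by simp), Finset.card_erase_add_one hc]
  have hBf : ∀ r ∈ K, ∀ z ∈ B r, f z = f r ∧ z ∈ W.erase c := by
    intro r hr z hz
    rw [hB] at hz
    have hrc := hK1 r hr
    have hrn := hK2 r hr
    rcases Finset.mem_insert.1 hz with rfl | hz
    · refine ⟨rfl, Finset.mem_erase.2 ⟨?_, h.inW _ _ (hcr _ hr).symm⟩⟩
      rw [hrc] at hrn; exact hrn.symm
    · rw [Finset.mem_erase] at hz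
      have hz2 : D.Adj r z := by simpa using hz.2
      refine ⟨(h.f1 _ _ hz2 hrn ?_).symm, Finset.mem_erase.2 ⟨hz.1, h.inW _ _ hz2.symm⟩⟩
      rw [← h.t1 _ _ hz2, hrc]
      exact hz.1.symm
  have hcW : c ∈ W := by
    obtain ⟨r, hr⟩ := hne
    exact h.inW _ _ (hcr r hr)
  have hdis : (K : Set V).PairwiseDisjoint B := by
    intro r hr s hs hrs
    rw [Function.onFun, Finset.disjoint_left]
    intro z hz hz'
    exact hrs (hK4 r hr s hs (by rw [← (hBf r hr z hz).1, (hBf s hs z hz').1]))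
  have hsum : ∑ r ∈ K, (Finset.univ.filter (D.Adj r)).card ≤ W.card - 1 := by
    rw [← Finset.sum_congr rfl hBc, ← Finset.card_biUnion hdis, ← Finset.card_erase_of_mem hcW]
    apply Finset.card_le_card
    intro z hz
    obtain ⟨r, hr, hz⟩ := Finset.mem_biUnion.1 hz
    exact (hBf r hr z hz).2
  have hWpos : 0 < W.card := Finset.card_pos.2 ⟨c, hcW⟩
  have hK1' : (K.filter (fun r => (Finset.univ.filter (D.Adj r)).card = 1)).card ≤ 2 := by
    by_contra hgt
    obtain ⟨x, y, z, hx, hy, hz, h1, h2, h3⟩ := Finset.two_lt_card_iff.1 (not_le.1 hgt)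
    have key : ∀ r, r ∈ K.filter (fun r => (Finset.univ.filter (D.Adj r)).card = 1) →
        ∀ w, D.Adj r w ↔ w = c := by
      intro r hr w
      rw [Finset.mem_filter] at hr
      obtain ⟨a, ha⟩ := Finset.card_eq_one.1 hr.2
      have hm : ∀ w, D.Adj r w ↔ w = a := by
        intro w
        have : w ∈ Finset.univ.filter (D.Adj r) ↔ w ∈ ({a} : Finset V) := by rw [ha]
        simpa using this
      have := (hm c).1 (hcr r hr.1).symm
      rw [hm w, this]
    exact hleaf c x y z h1 h2 h3 (key x hx) (key y hy) (key z hz)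
  have hlow1 : K.card ≤ ∑ r ∈ K, (Finset.univ.filter (D.Adj r)).card := by
    rw [Finset.card_eq_sum_ones]
    exact Finset.sum_le_sum (fun r hr => by have := hK3 r hr; omega)
  have hlow2 : 3 * K.card ≤ ∑ r ∈ K, (Finset.univ.filter (D.Adj r)).card +
      2 * (K.filter (fun r => (Finset.univ.filter (D.Adj r)).card = 1)).card := by
    rw [Finset.card_eq_sum_ones, Finset.card_filter, Finset.mul_sum, Finset.mul_sum, ← Finset.sum_add_distrib]
    refine Finset.sum_le_sum (fun r hr => ?_)
    have := hK3 r hr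
    split_ifs <;> omega
  omega

open Classical in
theorem Nest.groups [Fintype V] (h : Nest D W top f)
    (hleaf : ∀ c x y z, x ≠ y → x ≠ z → y ≠ z → (∀ w, D.Adj x w ↔ w = c) →
      (∀ w, D.Adj y w ↔ w = c) → (∀ w, D.Adj z w ↔ w = c) → False) :
    ∃ gs : List (List V × List V), (∀ g ∈ gs, Grp D W g) ∧ 4 * gs.length ≤ W.card + 2 ∧
      ∀ v, (gs.map gX).sum.count v =
        if v ∈ W ∧ (Finset.univ.filter (D.Adj v)).card % 2 = 1 then 1 else 0 := by
  obtain ⟨O, hO⟩ : ∃ O, O = W.filter (fun v => (Finset.univ.filter (D.Adj v)).card % 2 = 1) := ⟨_, rfl⟩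
  have hOm : ∀ v, v ∈ O ↔ v ∈ W ∧ (Finset.univ.filter (D.Adj v)).card % 2 = 1 := by
    intro v; rw [hO, Finset.mem_filter]
  have hpar : ∀ c, (O.filter (fun v => top v = c)).card % 2 = 0 := by
    intro c; rw [hO]; exact h.par c
  obtain ⟨I, R1, hI, hR1, hs1⟩ := pair_up f _ (O.filter (fun x => ¬ top x = x)) rfl
  have hR1sub : ∀ x ∈ R1, x ∈ O.filter (fun x => ¬ top x = x) := by
    intro x hx
    rw [Finset.mem_def, ← hs1]
    exact Multiset.mem_add.2 (Or.inr (Finset.mem_def.1 hx))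
  have hIsub : ∀ p ∈ I, (p.1 ∈ O ∧ top p.1 ≠ p.1) ∧ (p.2 ∈ O ∧ top p.2 ≠ p.2) := by
    intro p hp
    have key : ∀ x ∈ pm p, x ∈ O ∧ top x ≠ x := by
      intro x hx
      have : x ∈ O.filter (fun x => ¬ top x = x) := by
        rw [Finset.mem_def, ← hs1]
        exact Multiset.mem_add.2 (Or.inl ((mem_lsum _ _ _).2 ⟨p, hp, hx⟩))
      simpa using this
    exact ⟨key _ (by simp [pm]), key _ (by simp [pm])⟩
  have htf : ∀ x, top x ≠ x → top (f x) = top x := by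
    intro x hx
    rcases h.f2 x hx with e | e
    · rw [e]
    · exact h.t1 _ _ e
  have hItop : ∀ p ∈ I, top p.1 = top p.2 := by
    intro p hp
    obtain ⟨⟨_, a⟩, ⟨_, b⟩⟩ := hIsub p hp
    rw [← htf _ a, ← htf _ b, hI p hp]
  have hdisj : Disjoint R1 (O.filter (fun x => top x = x)) := by
    rw [Finset.disjoint_left]
    intro x hx hx'
    exact (Finset.mem_filter.1 (hR1sub x hx)).2 (Finset.mem_filter.1 hx').2
  obtain ⟨P, R2, hP, hR2, hs2⟩ := pair_up top _ (R1.disjUnion _ hdisj) rfl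
  rw [Finset.disjUnion_val] at hs2
  have hOval : (I.map pm).sum + ((P.map pm).sum + R2.val) = O.val := by
    rw [hs2, ← add_assoc, hs1, Finset.filter_val, Finset.filter_val, add_comm,
      Multiset.filter_add_not]
  have hcO : ∀ c, Multiset.countP (fun v => top v = c) O.val = (O.filter (fun v => top v = c)).card := by
    intro c
    rw [Multiset.countP_eq_card_filter]; rfl
  have hR2e : R2 = ∅ := by
    rw [Finset.eq_empty_iff_forall_notMem]
    intro r hr
    have h1 := hpar (top r)
    rw [← hcO, ← hOval, Multiset.countP_add, Multiset.countP_add,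
      countP_pairs _ _ (fun p hp => by rw [hItop p hp]),
      countP_pairs _ _ (fun p hp => by rw [hP p hp])] at h1
    have h2 : Multiset.countP (fun v => top v = top r) R2.val = 1 := by
      rw [Multiset.countP_eq_card_filter]
      show (R2.filter (fun v => top v = top r)).card = 1
      rw [Finset.card_eq_one]
      refine ⟨r, ?_⟩
      ext v
      simp only [Finset.mem_filter, Finset.mem_singleton]
      constructor
      · exact fun hv => hR2 v hv.1 r hr hv.2
      · rintro rfl; exact ⟨hr, rfl⟩
    omega
  rw [hR2e, Finset.empty_val, add_zero] at hs2 hOval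
  have hclass : ∀ c, 4 * P.countP (fun p => top p.1 = c) ≤ W.card + 2 := by
    intro c
    have h1 := countP_pairs (fun v => top v = c) P (fun p hp => by rw [hP p hp])
    rw [hs2, Multiset.countP_add, Multiset.countP_eq_card_filter, Multiset.countP_eq_card_filter] at h1
    change (R1.filter (fun v => top v = c)).card +
      ((O.filter (fun x => top x = x)).filter (fun v => top v = c)).card = _ at h1
    have h2 : ((O.filter (fun x => top x = x)).filter (fun v => top v = c)).card ≤ 1 := by
      rw [Finset.card_le_one]
      intro a ha b hb
      simp only [Finset.mem_filter] at ha hb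
      rw [← ha.1.2, ha.2, ← hb.1.2, hb.2]
    by_cases hne : (R1.filter (fun v => top v = c)).Nonempty
    · have := h.bound hleaf c (R1.filter (fun v => top v = c))
        (fun r hr => (Finset.mem_filter.1 hr).2)
        (fun r hr => (Finset.mem_filter.1 (hR1sub r (Finset.mem_filter.1 hr).1)).2)
        (fun r hr => ((hOm r).1 (Finset.mem_filter.1 (hR1sub r (Finset.mem_filter.1 hr).1)).1).2)
        (fun r hr s hs => hR1 r (Finset.mem_filter.1 hr).1 s (Finset.mem_filter.1 hs).1) hne
      omega
    · rw [Finset.not_nonempty_iff_eq_empty] at hne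
      rw [hne, Finset.card_empty] at h1
      omega
  have hN : 2 * (I.length + P.length) ≤ W.card := by
    have h1 := congrArg Multiset.card hOval
    rw [Multiset.card_add, card_pairs, card_pairs, Finset.card_val] at h1
    have h2 : O.card ≤ W.card := by rw [hO]; exact Finset.card_filter_le _ _
    omega
  obtain ⟨gs, hg1, hg2, hg3⟩ := grouping P I (fun p => (Fintype.equivFin V (top p.1) : ℕ))
    ((W.card + 2) / 4) (by
      intro k
      by_cases hk : ∃ c : V, (Fintype.equivFin V c : ℕ) = k
      · obtain ⟨c, rfl⟩ := hk
        have := hclass c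
        have e : P.countP (fun p => decide ((Fintype.equivFin V (top p.1) : ℕ) = (Fintype.equivFin V c : ℕ))) =
            P.countP (fun p => decide (top p.1 = c)) := by
          congr 1
          funext p
          simp [Fin.val_inj]
        rw [e]
        omega
      · push Not at hk
        rw [List.countP_eq_zero.2 (by intro p _; simpa using hk _)]
        omega) (by omega)
  have hsum : (gs.map (fun g => ((g.1 :: g.2.toList).map pm).sum)).sum = O.val := by
    have h1 := (hg2.map pm).sum_eq
    rw [List.map_append, List.sum_append, add_comm, hOval, List.map_flatten, List.sum_flatten,
      List.map_map, List.map_map] at h1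
    exact h1
  have hmemP : ∀ g ∈ gs, ∀ p ∈ g.1 :: g.2.toList, p ∈ P ∨ p ∈ I := by
    intro g hg p hp
    rw [← List.mem_append, ← hg2.mem_iff]
    exact List.mem_flatten.2 ⟨_, List.mem_map_of_mem hg, hp⟩
  have hptop : ∀ p, p ∈ P ∨ p ∈ I → top p.1 = top p.2 := by
    rintro p (hp | hp)
    · exact hP p hp
    · exact hItop p hp
  have hpO : ∀ g ∈ gs, ((g.1 :: g.2.toList).map pm).sum ≤ O.val := by
    intro g hg
    rw [← hsum]
    exact le_lsum _ _ (List.mem_map.2 ⟨g, hg, rfl⟩)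
  have hF : ∀ g ∈ gs, ∃ q : List V × List V, Grp D W q ∧ gX q = ((g.1 :: g.2.toList).map pm).sum := by
    intro g hg
    have hle := hpO g hg
    have hnd := Multiset.nodup_of_le hle O.nodup
    have hW : ∀ v ∈ ((g.1 :: g.2.toList).map pm).sum, v ∈ W :=
      fun v hv => ((hOm v).1 (Finset.mem_def.2 (Multiset.mem_of_le hle hv))).1
    have hm := hmemP g hg
    have h3 := hg3 g hg
    obtain ⟨⟨x, x'⟩, b⟩ := g
    cases b with
    | none =>
      simp only [Option.toList_none, List.map_cons, List.map_nil, List.sum_cons, List.sum_nil,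
        add_zero, pm] at hnd hW hm ⊢
      obtain ⟨p, p0, p1, p2, p3, p4, p5⟩ := h.linkE (x := x) (y := x') (hW _ (by simp)) (hW _ (by simp))
        (by rintro rfl; simp at hnd) (hptop (x, x') (hm _ (by simp)))
      refine ⟨([], p), ⟨by simpa using p1, by simpa using p5, by simp, p2, p0⟩, ?_⟩
      rw [gX, p3]
      show (0 : Multiset V) + _ = _
      rw [zero_add]
    | some b =>
      obtain ⟨y, y'⟩ := b
      simp only [Option.toList_some, List.map_cons, List.map_nil, List.sum_cons, List.sum_nil,
        add_zero] at hnd hW hm ⊢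
      have hy := h3 (y, y') rfl
      refine h.quad (hW _ (by simp [pm])) (hW _ (by simp [pm])) (hW _ (by simp [pm]))
        (hW _ (by simp [pm])) ?_ (hptop (x, x') (hm _ (by simp))) (hptop (y, y') (hm _ (by simp))) ?_
      · have : (([x, x', y, y'] : List V) : Multiset V).Nodup := by
          exact hnd
        simpa using this
      · rcases hy with hy | hy
        · left
          intro e
          exact hy (by show _ = _; simp only [e])
        · right
          exact ⟨(hIsub _ hy).1.2, (hIsub _ hy).2.2, hI _ hy⟩
  choose! F hF1 hF2 using hF
  refine ⟨gs.map F, ?_, ?_, ?_⟩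
  · intro g hg
    obtain ⟨g', hg', rfl⟩ := List.mem_map.1 hg
    exact hF1 g' hg'
  · rw [List.length_map]; omega
  · intro v
    have : ((gs.map F).map gX).sum = O.val := by
      rw [← hsum, List.map_map]
      congr 1
      exact List.map_congr_left (fun g hg => hF2 g hg)
    rw [this]
    by_cases hv : v ∈ O
    · rw [if_pos ((hOm v).1 hv)]
      exact Multiset.count_eq_one_of_mem O.nodup hv
    · rw [if_neg (fun e => hv ((hOm v).2 e))]
      exact Multiset.count_eq_zero.2 hv
end

end FC


namespace FC

lemma topfun {n : ℕ} (D : SimpleGraph (Fin n))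
    (hD : ∀ a b x, D.Adj a b → b < a → D.Adj a x → x ≠ b → D.Adj b x) :
    ∃ top : Fin n → Fin n, (∀ x y, D.Adj x y → top x = top y) ∧
      ∀ x, top x = x ∨ D.Adj (top x) x := by
  have hex : ∀ x, ∃ t, D.Reachable x t ∧ ∀ w, D.Reachable x w → t ≤ w := by
    intro x
    obtain ⟨t, ht, hm⟩ := Set.exists_min_image {w | D.Reachable x w} id (Set.toFinite _)
      ⟨x, SimpleGraph.Reachable.refl x⟩
    exact ⟨t, ht, hm⟩
  choose top h1 h2 using hex
  refine ⟨top, ?_, ?_⟩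
  · intro x y hxy
    apply le_antisymm
    · exact h2 x _ (hxy.reachable.trans (h1 y))
    · exact h2 y _ (hxy.symm.reachable.trans (h1 x))
  · intro x
    have key : ∀ (t u w : Fin n), D.Walk u w → (∀ v, D.Reachable u v → t ≤ v) →
        (u = t ∨ D.Adj t u) → (w = t ∨ D.Adj t w) := by
      intro t u w p
      induction p with
      | nil => exact fun _ h => h
      | @cons u v w huv p ih =>
        intro hmin hu
        apply ih
        · exact fun z hz => hmin z (huv.reachable.trans hz)
        · rcases hu with rfl | hu
          · exact Or.inr huv
          · by_cases hv : v = t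
            · exact Or.inl hv
            · right
              exact hD u t v hu.symm (lt_of_le_of_ne (hmin u (SimpleGraph.Reachable.refl u)) hu.ne) huv hv
    obtain ⟨p⟩ := (h1 x).symm
    rcases key (top x) (top x) x p (fun v hv => h2 x v ((h1 x).trans hv)) (Or.inl rfl) with h | h
    · exact Or.inl h.symm
    · exact Or.inr h

lemma leafred {V : Type*} [Finite V] {G : SimpleGraph V}
    (IH : ∀ H : SimpleGraph V, BL H → NN H < NN G → Good H) {W : Set V} {b1 b2 : V}
    (h12 : G.Adj b1 b2) (hb1 : b1 ∉ W) (hb2 : b2 ∉ W) (hW1 : ∀ w ∈ W, G.Adj b1 w)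
    (hW2 : ∀ w ∈ W, G.Adj b2 w) (hall : ∀ x y, G.Adj x y → x = b1 ∨ x = b2 ∨ x ∈ W)
    {c x y z : V} (hxy : x ≠ y) (hxz : x ≠ z) (hyz : y ≠ z)
    (hx : ∀ w, (res G W).Adj x w ↔ w = c) (hy : ∀ w, (res G W).Adj y w ↔ w = c)
    (hz : ∀ w, (res G W).Adj z w ↔ w = c) : Good G := by
  obtain ⟨xc, xW, cW⟩ := (hx c).2 rfl
  obtain ⟨yc, yW, -⟩ := (hy c).2 rfl
  obtain ⟨zc, zW, -⟩ := (hz c).2 rfl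
  have ncx : c ≠ x := xc.ne.symm
  have ncy : c ≠ y := yc.ne.symm
  have ncz : c ≠ z := zc.ne.symm
  have n1 : ∀ w ∈ W, b1 ≠ w := by rintro w hw rfl; exact hb1 hw
  have n2 : ∀ w ∈ W, b2 ≠ w := by rintro w hw rfl; exact hb2 hw
  obtain ⟨S, hS⟩ : ∃ S : Set V, S = {v | v ≠ x ∧ v ≠ y ∧ v ≠ z} := ⟨_, rfl⟩
  have mS : ∀ v, v ∈ S ↔ v ≠ x ∧ v ≠ y ∧ v ≠ z := by intro v; rw [hS]; rfl
  have b1S : b1 ∈ S := (mS _).2 ⟨n1 _ xW, n1 _ yW, n1 _ zW⟩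
  have b2S : b2 ∈ S := (mS _).2 ⟨n2 _ xW, n2 _ yW, n2 _ zW⟩
  have cS : c ∈ S := (mS _).2 ⟨ncx, ncy, ncz⟩
  have hBL : BL (res G S) := by
    intro u v huv
    obtain ⟨h, hu, hv⟩ := huv
    have tri : ∀ t, t ∈ S → G.Adj u t → G.Adj v t → NB (res G S) u v :=
      fun t ht a b => NB_tri (z := t) ⟨h, hu, hv⟩ ⟨a, hu, ht⟩ ⟨b, hv, ht⟩
    rcases hall u v h with rfl | rfl | huW <;> rcases hall v _ h.symm with rfl | rfl | hvW
    · exact absurd rfl h.ne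
    · exact tri c cS (hW1 c cW) (hW2 c cW)
    · exact tri _ b2S h12 (hW2 v hvW).symm
    · exact tri c cS (hW2 c cW) (hW1 c cW)
    · exact absurd rfl h.ne
    · exact tri _ b1S h12.symm (hW1 v hvW).symm
    · exact tri _ b2S (hW2 u huW).symm h12
    · exact tri _ b1S (hW1 u huW).symm h12.symm
    · exact tri _ b1S (hW1 u huW).symm (hW1 v hvW).symm
  have hNN : NN (res G S) + 3 ≤ NN G := by
    have h1 : (res G S).support ⊆ G.support \ {x, y, z} := by
      rintro v ⟨w, hw⟩
      refine ⟨⟨w, hw.1⟩, ?_⟩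
      have := (mS v).1 hw.2.1
      simp only [Set.mem_insert_iff, Set.mem_singleton_iff, not_or]
      exact this
    have h2 := Set.ncard_le_ncard h1 (Set.toFinite _)
    have h3 : ({x, y, z} : Set V) ⊆ G.support := by
      intro v hv
      simp only [Set.mem_insert_iff, Set.mem_singleton_iff] at hv
      rcases hv with rfl | rfl | rfl
      · exact ⟨c, xc⟩
      · exact ⟨c, yc⟩
      · exact ⟨c, zc⟩
    have h4 := Set.ncard_diff_add_ncard_of_subset h3 (Set.toFinite _)
    have h5 : ({x, y, z} : Set V).ncard = 3 := Set.ncard_eq_three.2 ⟨x, y, z, hxy, hxz, hyz, rfl⟩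
    unfold NN
    omega
  obtain ⟨L, l1, l2, l3⟩ := IH (res G S) hBL (by omega)
  have h2N := two_le_NN (G := res G S) ⟨h12, b1S, b2S⟩
  refine ⟨[b1, x, b2, y, c, z] :: [b1, y, b2, z, c, x] :: L, ?_, ?_, ?_⟩
  · have mk : ∀ p q r, p ∈ W → q ∈ W → r ∈ W → p ≠ q → p ≠ r → q ≠ r → c ≠ p → c ≠ q → c ≠ r →
        G.Adj q c → G.Adj r c → IsCyc G [b1, p, b2, q, c, r] := by
      intro p q r hp hq hr pq pr qr cp cq cr qc rc
      have := n1 p hp; have := n1 q hq; have := n1 r hr; have := n1 c cW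
      have := n2 p hp; have := n2 q hq; have := n2 r hr; have := n2 c cW
      have := h12.ne
      refine ⟨?_, by simp, ?_⟩
      · simp only [List.nodup_cons, List.mem_cons, List.not_mem_nil, or_false, not_or,
          not_false_iff, List.nodup_nil, and_true]
        grind
      · intro e he
        simp only [CE, PE, List.cons_append, List.nil_append, List.mem_cons, List.not_mem_nil,
          or_false] at he
        rcases he with rfl | rfl | rfl | rfl | rfl | rfl
        · exact hW1 p hp
        · exact (hW2 p hp).symm
        · exact hW2 q hq
        · exact qc
        · exact rc.symm
        · exact (hW1 r hr).symm
    intro d hd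
    rcases List.mem_cons.1 hd with rfl | hd
    · exact mk x y z xW yW zW hxy hxz hyz ncx ncy ncz yc zc
    rcases List.mem_cons.1 hd with rfl | hd
    · exact mk y z x yW zW xW hyz hxy.symm hxz.symm ncy ncz ncx zc xc
    · exact (l1 d hd).mono (res_le _ _)
  · have nb : ∀ p, p ∈ W → (∀ w, (res G W).Adj p w ↔ w = c) → ∀ q, G.Adj p q →
        q = b1 ∨ q = b2 ∨ q = c := by
      intro p hp hc q hpq
      rcases hall q p hpq.symm with h | h | h
      · exact Or.inl h
      · exact Or.inr (Or.inl h)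
      · exact Or.inr (Or.inr ((hc q).1 ⟨hpq, hp, h⟩))
    have key : ∀ p q, G.Adj p q → p ∉ S →
        cov ([b1, x, b2, y, c, z] :: [b1, y, b2, z, c, x] :: L) s(p, q) := by
      intro p q hpq hp
      have hp' : p = x ∨ p = y ∨ p = z := by
        by_contra hh
        push Not at hh
        exact hp ((mS p).2 hh)
      rw [cov_cons, cov_cons]
      simp only [CE, PE, List.cons_append, List.nil_append, List.mem_cons, List.not_mem_nil,
          or_false]
      rcases hp' with rfl | rfl | rfl
      · rcases nb _ xW hx q hpq with rfl | rfl | rfl <;> simp [Sym2.eq_swap]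
      · rcases nb _ yW hy q hpq with rfl | rfl | rfl <;> simp [Sym2.eq_swap]
      · rcases nb _ zW hz q hpq with rfl | rfl | rfl <;> simp [Sym2.eq_swap]
    intro e
    induction e using Sym2.ind with
    | _ p q =>
      intro hpq
      have hpq' : G.Adj p q := hpq
      by_cases hp : p ∈ S
      · by_cases hq : q ∈ S
        · rw [cov_cons, cov_cons]
          exact Or.inr (Or.inr (l2 s(p, q) (show (res G S).Adj p q from ⟨hpq', hp, hq⟩)))
        · rw [Sym2.eq_swap]; exact key q p hpq'.symm hq
      · exact key p q hpq' hp
  · simp only [List.length_cons]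
    omega

theorem tricase {n : ℕ} {G : SimpleGraph (Fin n)} (hG : BL G)
    (IH : ∀ H : SimpleGraph (Fin n), BL H → NN H < NN G → Good H)
    (hN : ∀ a b, G.Adj a b → b < a → (∃ z, G.Adj a z ∧ G.Adj b z) → ∀ x, G.Adj a x → x ≠ b → G.Adj b x)
    (htri : ∃ x y z, G.Adj x y ∧ G.Adj x z ∧ G.Adj y z) : Good G := by
  classical
  obtain ⟨b1, ⟨y0, z0, hy0, hz0, hyz0⟩, hmin⟩ := Set.exists_min_image
    {v | ∃ y z, G.Adj v y ∧ G.Adj v z ∧ G.Adj y z} id (Set.toFinite _) htri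
  simp only [Set.mem_setOf_eq, id] at hmin
  obtain ⟨A, hA⟩ : ∃ A : Set (Fin n), A = {c | G.Adj b1 c ∧ ∃ z, G.Adj b1 z ∧ G.Adj c z} := ⟨_, rfl⟩
  have mA : ∀ c, c ∈ A ↔ G.Adj b1 c ∧ ∃ z, G.Adj b1 z ∧ G.Adj c z := by intro c; rw [hA]; rfl
  have b1A : b1 ∉ A := fun h => ((mA _).1 h).1.ne rfl
  have hcl : ∀ x y, G.Adj x y → x ∈ A → y ∈ A ∨ y = b1 := by
    intro x y hxy hx
    by_cases hy : y = b1
    · exact Or.inr hy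
    left
    obtain ⟨h1, z, h2, h3⟩ := (mA x).1 hx
    have hle := hmin x ⟨b1, z, h1.symm, h3, h2⟩
    have := hN x b1 h1.symm (lt_of_le_of_ne hle h1.ne) ⟨z, h3, h2⟩ y hxy hy
    exact (mA y).2 ⟨this, x, h1, hxy.symm⟩
  have y0A : y0 ∈ A := (mA _).2 ⟨hy0, z0, hz0, hyz0⟩
  by_cases hout : ∃ x y, G.Adj x y ∧ x ∉ A ∧ y ∉ A
  · exact split hG IH A b1 b1A hcl ⟨y0, b1, hy0.symm, y0A⟩ hout
  obtain ⟨b2, hb2, hmin2⟩ := Set.exists_min_image A id (Set.toFinite _) ⟨y0, y0A⟩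
  simp only [id] at hmin2
  have h12 : G.Adj b1 b2 := ((mA _).1 hb2).1
  obtain ⟨A2, hA2⟩ : ∃ A2 : Set (Fin n), A2 = {c | c = b2 ∨ (c ≠ b1 ∧ G.Adj b2 c)} := ⟨_, rfl⟩
  have mA2 : ∀ c, c ∈ A2 ↔ c = b2 ∨ (c ≠ b1 ∧ G.Adj b2 c) := by intro c; rw [hA2]; rfl
  have b1A2 : b1 ∉ A2 := by
    rw [mA2]
    rintro (h | h)
    · exact h12.ne h
    · exact h.1 rfl
  have hcl2 : ∀ x y, G.Adj x y → x ∈ A2 → y ∈ A2 ∨ y = b1 := by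
    intro x y hxy hx
    by_cases hy : y = b1
    · exact Or.inr hy
    left
    rw [mA2]
    rcases (mA2 x).1 hx with rfl | ⟨h1, h2⟩
    · exact Or.inr ⟨hy, hxy⟩
    by_cases hyb : y = b2
    · exact Or.inl hyb
    right
    refine ⟨hy, ?_⟩
    have hxA : x ∈ A := (hcl _ _ h2 hb2).resolve_right h1
    exact hN x b2 h2.symm (lt_of_le_of_ne (hmin2 x hxA) h2.ne)
      ⟨b1, ((mA x).1 hxA).1.symm, h12.symm⟩ y hxy hyb
  by_cases hdom : ∃ a ∈ A, a ∉ A2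
  · obtain ⟨a, ha, ha2⟩ := hdom
    exact split hG IH A2 b1 b1A2 hcl2 ⟨b2, b1, h12.symm, (mA2 _).2 (Or.inl rfl)⟩
      ⟨b1, a, ((mA a).1 ha).1, b1A2, ha2⟩
  push Not at hout hdom
  obtain ⟨W, hW⟩ : ∃ W : Finset (Fin n), W = Finset.univ.filter (fun v => v ∈ A ∧ v ≠ b2) := ⟨_, rfl⟩
  have mW : ∀ v, v ∈ W ↔ v ∈ A ∧ v ≠ b2 := by intro v; rw [hW]; simp
  have hb1W : b1 ∉ W := fun h => b1A ((mW _).1 h).1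
  have hb2W : b2 ∉ W := fun h => ((mW _).1 h).2 rfl
  have hW1 : ∀ w ∈ W, G.Adj b1 w := fun w hw => ((mA w).1 ((mW w).1 hw).1).1
  have hW2 : ∀ w ∈ W, G.Adj b2 w := by
    intro w hw
    obtain ⟨h1, h2⟩ := (mW w).1 hw
    exact (((mA2 w).1 (hdom w h1)).resolve_left h2).2
  have hall : ∀ x y, G.Adj x y → x = b1 ∨ x = b2 ∨ x ∈ W := by
    intro x y hxy
    have hxA : x ∈ A ∨ x = b1 := by
      by_cases hx : x ∈ A
      · exact Or.inl hx
      · have := hout x y hxy hx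
        exact hcl y x hxy.symm this
    rcases hxA with h | h
    · by_cases hx : x = b2
      · exact Or.inr (Or.inl hx)
      · exact Or.inr (Or.inr ((mW x).2 ⟨h, hx⟩))
    · exact Or.inl h
  have hWne : W.Nonempty := by
    obtain ⟨h1, z, h2, h3⟩ := (mA b2).1 hb2
    exact ⟨z, (mW z).2 ⟨(hcl _ _ h3 hb2).resolve_right h2.ne.symm, h3.ne.symm⟩⟩
  have hNN : W.card + 2 ≤ NN G := by
    have h1 : ((insert b1 (insert b2 W) : Finset (Fin n)) : Set (Fin n)) ⊆ G.support := by
      intro v hv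
      simp only [Finset.coe_insert, Set.mem_insert_iff, Finset.mem_coe] at hv
      rcases hv with rfl | rfl | hv
      · exact ⟨b2, h12⟩
      · exact ⟨b1, h12.symm⟩
      · exact ⟨b1, (hW1 v hv).symm⟩
    have h2 := Set.ncard_le_ncard h1 (Set.toFinite _)
    rw [Set.ncard_coe_finset, Finset.card_insert_of_notMem, Finset.card_insert_of_notMem hb2W] at h2
    · exact h2
    · rw [Finset.mem_insert, not_or]; exact ⟨h12.ne, hb1W⟩
  obtain ⟨D, hD⟩ : ∃ D, D = res G (W : Set (Fin n)) := ⟨_, rfl⟩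
  have mD : ∀ x y, D.Adj x y ↔ G.Adj x y ∧ x ∈ W ∧ y ∈ W := by intro x y; rw [hD]; rfl
  by_cases hleaf : ∀ c x y z, x ≠ y → x ≠ z → y ≠ z → (∀ w, D.Adj x w ↔ w = c) →
      (∀ w, D.Adj y w ↔ w = c) → (∀ w, D.Adj z w ↔ w = c) → False
  · have nD : ∀ a b x, D.Adj a b → b < a → D.Adj a x → x ≠ b → D.Adj b x := by
      intro a b x hab hlt hax hxb
      rw [mD] at *
      exact ⟨hN a b hab.1 hlt ⟨b1, (hW1 a hab.2.1).symm, (hW1 b hab.2.2).symm⟩ x hax.1 hxb,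
        hab.2.2, hax.2.2⟩
    obtain ⟨top, t1, t2⟩ := topfun D nD
    obtain ⟨f, f1, f2⟩ := topfun (res D {v | top v ≠ v}) (by
      rintro a b x ⟨h1, h2, h3⟩ hlt ⟨h4, h5, h6⟩ hne
      exact ⟨nD a b x h1 hlt h4 hne, h3, h6⟩)
    have nest : Nest D W top f := by
      refine ⟨fun x y h => ((mD x y).1 h).2.1, t1, t2, ?_, ?_, ?_⟩
      · exact fun x y h hx hy => f1 x y ⟨h, hx, hy⟩
      · exact fun x _ => (f2 x).imp id (fun h => h.1)
      · intro x hx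
        rcases f2 x with h | h
        · rw [h]; exact hx
        · exact h.2.1
    obtain ⟨gs, g1, g2, g3⟩ := nest.groups hleaf
    obtain ⟨L, l1, l2, l3⟩ := term h12 hb1W hb2W hW1 hW2 mD hall hWne gs g1 g2
      (by intro v; convert g3 v)
    exact ⟨L, l1, l2, by omega⟩
  · push Not at hleaf
    obtain ⟨c, x, y, z, hxy, hxz, hyz, hx, hy, hz, -⟩ := hleaf
    rw [hD] at hx hy hz
    exact leafred IH h12 (by simpa using hb1W) (by simpa using hb2W) (by simpa using hW1)
      (by simpa using hW2) (by simpa using hall) hxy hxz hyz hx hy hz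

theorem main {n : ℕ} : ∀ (N : ℕ) (G : SimpleGraph (Fin n)), NN G = N → BL G → Good G := by
  intro N
  induction N using Nat.strong_induction_on with
  | _ N IHN =>
    have inner : ∀ (M : ℕ) (G : SimpleGraph (Fin n)), mu G = M → NN G = N → BL G → Good G := by
      intro M
      induction M using Nat.strong_induction_on with
      | _ M IHM =>
        intro G hM hNG hG
        have IH : ∀ H : SimpleGraph (Fin n), BL H → NN H < NN G → Good H :=
          fun H hH hlt => IHN (NN H) (by omega) H rfl hH
        by_cases hN : ∀ a b, G.Adj a b → b < a → (∃ z, G.Adj a z ∧ G.Adj b z) →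
            ∀ x, G.Adj a x → x ≠ b → G.Adj b x
        · by_cases htri : ∃ x y z, G.Adj x y ∧ G.Adj x z ∧ G.Adj y z
          · exact tricase hG IH hN htri
          · have htf : ∀ x y z, G.Adj x y → G.Adj y z → ¬ G.Adj x z :=
              fun x y z h1 h2 h3 => htri ⟨x, y, z, h1, h3, h2⟩
            by_cases h4 : ∀ a b c d, G.Adj a b → G.Adj b c → G.Adj c d → G.Adj d a → a ≠ c → b = d
            · by_cases he : ∃ a b, G.Adj a b
              · obtain ⟨a, b, hab⟩ := he
                exact three hG IH htf h4 hab
              · refine ⟨[], by simp, ?_, by simp⟩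
                intro e
                induction e using Sym2.ind with
                | _ p q => exact fun h => absurd ⟨p, q, h⟩ he
            · push Not at h4
              obtain ⟨a, b, c, d, hab, hbc, hcd, hda, hac, hbd⟩ := h4
              exact four hG IH htf hab hbc hcd hda hac hbd
        · push Not at hN
          obtain ⟨a, b, hab, hlt, ⟨z, hz1, hz2⟩, x, hax, hxb, hbx⟩ := hN
          have hB := Kel_BL hG hab hz1 hz2
          apply Kel_good hab
          have hle := Kel_NN hab
          rcases Nat.lt_or_ge (NN (Kel G a b)) N with h | h
          · exact IHN _ h _ rfl hB
          · exact IHM _ (hM ▸ Kel_mu hab hlt hax hxb hbx) _ rfl (by omega) hB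
    exact fun G hG => inner _ G rfl hG

theorem final (n : ℕ) (G : SimpleGraph (Fin n))
    (h2edge : ∀ e ∈ G.edgeSet, (G.deleteEdges {e}).Connected) :
    ∃ C : List (Σ v : Fin n, G.Walk v v),
      C.length ≤ 3 * (n - 1) / 4 ∧
      (∀ c ∈ C, c.2.IsCycle) ∧
      (∀ e : Sym2 (Fin n), e ∈ G.edgeSet ↔ ∃ c ∈ C, e ∈ c.2.edges) := by
  have hB : BL G := fun u v huv => (h2edge s(u, v) huv).preconnected u v
  obtain ⟨L, l1, l2, l3⟩ := main _ G rfl hB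
  have hn : NN G ≤ n := by
    have := Set.ncard_le_ncard (Set.subset_univ G.support) (Set.toFinite _)
    rw [Set.ncard_univ, Nat.card_eq_fintype_card, Fintype.card_fin] at this
    exact this
  have conv : ∀ L : List (List (Fin n)), (∀ c ∈ L, IsCyc G c) →
      ∃ C : List (Σ v : Fin n, G.Walk v v), C.length = L.length ∧ (∀ c ∈ C, c.2.IsCycle) ∧
        ∀ e, cov L e → ∃ c ∈ C, e ∈ c.2.edges := by
    intro L
    induction L with
    | nil =>
      intro _
      refine ⟨[], rfl, by simp, ?_⟩
      rintro e ⟨c, hc, -⟩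
      simp at hc
    | cons d L ih =>
      intro h
      obtain ⟨C, c1, c2, c3⟩ := ih (fun c hc => h c (List.mem_cons_of_mem _ hc))
      obtain ⟨v, w, hw, hwe⟩ := (h d (List.mem_cons_self ..)).toWalk
      refine ⟨⟨v, w⟩ :: C, by simp [c1], ?_, ?_⟩
      · intro c hc
        rcases List.mem_cons.1 hc with rfl | hc
        · exact hw
        · exact c2 c hc
      · intro e he
        rcases cov_cons.1 he with he | he
        · exact ⟨⟨v, w⟩, List.mem_cons_self .., hwe e he⟩
        · obtain ⟨c, hc, hce⟩ := c3 e he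
          exact ⟨c, List.mem_cons_of_mem _ hc, hce⟩
  obtain ⟨C, c1, c2, c3⟩ := conv L l1
  refine ⟨C, by omega, c2, ?_⟩
  intro e
  constructor
  · exact fun he => c3 e (l2 e he)
  · rintro ⟨c, -, hc⟩
    exact c.2.edges_subset_edgeSet hc

end FC

/-- Fan: every 2-edge-connected simple graph on n vertices can
be covered by at most ⌊3(n−1)/4⌋ cycles.  2-edge-connected means connected and
still connected after deleting any single edge. -/
theorem stmt_16 (n : ℕ) (G : SimpleGraph (Fin n))
    (hconn : G.Connected)
    (h2edge : ∀ e ∈ G.edgeSet, (G.deleteEdges {e}).Connected) :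
    ∃ C : List (Σ v : Fin n, G.Walk v v),
      C.length ≤ 3 * (n - 1) / 4 ∧
      (∀ c ∈ C, c.2.IsCycle) ∧
      (∀ e : Sym2 (Fin n), e ∈ G.edgeSet ↔ ∃ c ∈ C, e ∈ c.2.edges) := by
  exact FC.final n G h2edge
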